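/- There exists a constant C > 0 such that for every u ∈ C_c^∞(B) with u not identically zero, (1/2)∫_B |∇u|² dx − (1/2)∫_B u(x)²/(1−|x|²)² dx − 8π·log(∫_B e^{u(x)} dx) ≥ −C. -/

import Mathlib

/-!
The substitution `u = √(1 - |x|²) v` turns the Hardy functional of `u` into the quadratic form
`groundForm v v = ∫_B (1 - |x|²)|∇v|² + v²` of the operator `-div((1 - |x|²)∇) + 1`. Replacing `v`
by `√(v² + 1) - 1` does not increase the form and changes `log ∫ e^u` by at most `1`, so `v ≥ 0` may
be assumed.

For `v ≥ 0` the inequality is obtained by duality. Let `Z = ∫_B e^u` and let `ρ = e^u / Z` be the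
Gibbs density, so that `log Z = ∫ ρ u - ∫ ρ log ρ`. An explicit kernel `k y = greenKernel ε y`,
close to Green's function of the operator with pole `y`, satisfies `groundForm v (k y) ≥ u y - o(1)`
as `ε → 0` and `groundForm (k z) (k y) ≤ -(1/2π) log |y - z| + C`. Young's inequality for the form,
applied to `v` and to `8π` times the `ρ`-average of the kernels, gives
`½ groundForm v v ≥ 8π ∫ ρ u + 16π ∬ log |y - z| ρ(y) ρ(z) dy dz - C`. The logarithmic
Hardy–Littlewood–Sobolev inequality `-∬ log |y - z| ρ(y) ρ(z) dy dz ≤ ½ ∫ ρ log ρ + C` bounds the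
right-hand side below by `8π (∫ ρ u - ∫ ρ log ρ) - C = 8π log Z - C`.

The last inequality needs the sharp factor `½` but no sharp additive constant, and is proved on
randomly shifted dyadic squares. Up to an additive constant, `-log |y - z|` is at most `log 2` times
the expected number of generations in which `y` and `z` share a square. For a fixed grid, the
expectation of this number under `ρ ⊗ ρ` is a sum of squares of masses of cells. It is compared with
the entropy by following `∑ splitEntropy(mass)` down the tree: `splitEntropy m` differs from
`-m log m` by bounded amounts of mass, and one binary splitting of a cell of mass `m` increases it
by at most `log 2 · (m - m²)`. Each generation consists of two binary splittings, which is where the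
factor `½` comes from. Jensen's inequality passes from cell masses to `ρ`.
-/

open MeasureTheory Real Filter

noncomputable section

/-- `ℝ²` as a Euclidean space. -/
abbrev E2 : Type := EuclideanSpace ℝ (Fin 2)

/-- The open unit disc in `ℝ²`. -/
def B2 : Set E2 := Metric.ball 0 1

/-- `u ∈ C_c^∞(B)`: a smooth function with compact support contained in the open unit disc. -/
def IsTest (u : E2 → ℝ) : Prop :=
  ContDiff ℝ (⊤ : ℕ∞) u ∧ HasCompactSupport u ∧ tsupport u ⊆ B2

/-- The Hardy functional `H(u) = ∫_B |∇u|² − ∫_B u²/(1−|x|²)²`. -/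
def H (u : E2 → ℝ) : ℝ :=
  (∫ x in B2, ‖gradient u x‖ ^ 2) - ∫ x in B2, (u x) ^ 2 / (1 - ‖x‖ ^ 2) ^ 2

/-! ### A splitting inequality for entropy -/

/-- The entropy `-m log m` of a cell of mass `m`, with corrections that make it satisfy the
splitting inequality `splitEntropy_add_splitEntropy_le`. -/
def splitEntropy (m : ℝ) : ℝ := negMulLog m - negMulLog (1 - m) + 3 / 2 * m ^ 2

lemma log_le_log_add_sub_div {x y : ℝ} (hx : 0 < x) (hy : 0 < y) :
    log x ≤ log y + (x - y) / y := by
  have h := log_le_sub_one_of_pos (div_pos hx hy)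
  rw [log_div hx.ne' hy.ne', div_sub_one hy.ne'] at h
  linarith

/-- The logarithms are replaced by tangents at points depending on whether `β` is small. -/
lemma log_one_add_mul_add_mul_log_one_add_div_le {β r : ℝ} (hβ : 0 < β) (hr : 0 ≤ r)
    (hr1 : r ≤ 1) :
    log (1 + r * β) + β * log (1 + r / β) ≤ log 2 * r * (1 + β) + β * (1 - r) := by
  have log_two_lower := log_two_gt_d9
  have log_two_upper := log_two_lt_d9
  have tangent_div {c : ℝ} (hc : 0 < c) :
      β * log (1 + r / β) ≤ β * log c + (β + r - β * c) / c := by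
    have h := mul_le_mul_of_nonneg_left
      (log_le_log_add_sub_div (x := 1 + r / β) (by positivity) hc) hβ.le
    have : β * ((1 + r / β - c) / c) = (β + r - β * c) / c := by field_simp
    linarith
  have tangent_mul {c : ℝ} (hc : 0 < c) : log (1 + r * β) ≤ log c + (1 + r * β - c) / c :=
    log_le_log_add_sub_div (by positivity) hc
  rcases le_total (1 / 4) β with h | h
  · have h₁ := tangent_mul two_pos
    have h₂ := tangent_div two_pos
    have hlog : (1 + β) * (log 2 - 1 / 2) ≤ β := by nlinarith
    have := mul_le_mul_of_nonneg_right hlog (sub_nonneg.2 hr1)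
    nlinarith
  · have h₁ := tangent_mul one_pos
    have h₂ := tangent_div four_pos
    rw [show (4 : ℝ) = 2 ^ 2 by norm_num, log_pow] at h₂
    rw [log_one] at h₁
    push_cast at h₂
    nlinarith [mul_nonneg hr (sub_nonneg.2 h), mul_nonneg hr hβ.le,
      mul_nonneg hβ.le (sub_nonneg.2 hr1), mul_nonneg hr (sub_nonneg.2 log_two_lower.le),
      mul_nonneg (mul_nonneg hr hβ.le) (sub_nonneg.2 log_two_lower.le),
      mul_nonneg hβ.le (sub_nonneg.2 log_two_upper.le)]

section ThreeMasses

variable {a b r : ℝ}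

lemma mul_log_sub_log_add_mul_log_sub_log_le (ha : 0 < a) (hb : 0 < b) (hr : 0 ≤ r)
    (hsum : a + b + r = 1) :
    a * (log (a + b) + log (a + r) - log a) + b * (log (a + b) + log (b + r) - log b) ≤
      log 2 * r * (a + b) + b * (a + b) := by
  have key := mul_le_mul_of_nonneg_left (log_one_add_mul_add_mul_log_one_add_div_le
    (div_pos hb ha) hr (by linarith)) ha.le
  have expand_left : 1 + r * (b / a) = (a + b) * (a + r) / a := by
    field_simp
    linear_combination -a * hsum
  have expand_right : 1 + r / (b / a) = (a + b) * (b + r) / b := by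
    field_simp
    linear_combination -b * hsum
  rw [expand_left, expand_right, log_div (by positivity) (by positivity),
    log_div (by positivity) (by positivity), log_mul (by positivity) (by positivity),
    log_mul (by positivity) (by positivity)] at key
  calc
    _ = a * (log (a + b) + log (a + r) - log a +
        b / a * (log (a + b) + log (b + r) - log b)) := by field_simp
    _ ≤ a * (log 2 * r * (1 + b / a) + b / a * (1 - r)) := key
    _ = log 2 * r * (a + b) + b * (a + b) := by
      field_simp
      linear_combination -b * hsum

lemma mul_log_add_log_sub_log_le (ha : 0 < a) (hb : 0 < b) (hr : 0 ≤ r) (hsum : a + b + r = 1) :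
    r * (log (a + r) + log (b + r) - log r) ≤ a * b := by
  rcases hr.eq_or_lt with rfl | hr
  · simpa using (mul_pos ha hb).le
  · have key := mul_le_mul_of_nonneg_left
      (log_le_sub_one_of_pos (x := (a + r) * (b + r) / r) (by positivity)) hr.le
    rw [log_div (by positivity) hr.ne', log_mul (by positivity) (by positivity)] at key
    have : r * ((a + r) * (b + r) / r - 1) = a * b := by
      field_simp
      linear_combination r * hsum
    linarith

lemma splitEntropy_add_splitEntropy_le_of_le (hb : 0 < b) (hba : b ≤ a) (hab : a + b ≤ 1) :
    splitEntropy a + splitEntropy b ≤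
      splitEntropy (a + b) + log 2 * ((a + b) - (a + b) ^ 2) := by
  obtain ⟨r, hr⟩ : ∃ r, r = 1 - (a + b) := ⟨_, rfl⟩
  have ha : 0 < a := hb.trans_le hba
  have hsum : a + b + r = 1 := by linarith
  have h₁ := mul_log_sub_log_add_mul_log_sub_log_le ha hb (by linarith) hsum
  have h₂ := mul_log_add_log_sub_log_le ha hb (by linarith) hsum
  have hquad : b * (a + b) ≤ 2 * a * b := by nlinarith
  have hlog : log 2 * ((a + b) - (a + b) ^ 2) = log 2 * r * (a + b) := by rw [hr]; ring
  rw [hlog]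
  unfold splitEntropy negMulLog
  rw [show 1 - a = b + r by linarith, show 1 - b = a + r by linarith, ← hr]
  nlinarith

/-- The term `log 2 * (a + b)` is the largest possible gain of entropy in a binary splitting; the
saving `log 2 * (a + b) ^ 2` pays for the collisions of two independent points. -/
lemma splitEntropy_add_splitEntropy_le (ha : 0 ≤ a) (hb : 0 ≤ b) (hab : a + b ≤ 1) :
    splitEntropy a + splitEntropy b ≤
      splitEntropy (a + b) + log 2 * ((a + b) - (a + b) ^ 2) := by
  have splitEntropy_zero : splitEntropy 0 = 0 := by simp [splitEntropy]
  have gain_nonneg : 0 ≤ log 2 * ((a + b) - (a + b) ^ 2) :=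
    mul_nonneg (log_nonneg one_le_two) (by nlinarith)
  rcases ha.eq_or_lt with rfl | ha
  · simpa only [zero_add, splitEntropy_zero, le_add_iff_nonneg_right] using gain_nonneg
  rcases hb.eq_or_lt with rfl | hb
  · simpa only [add_zero, splitEntropy_zero, le_add_iff_nonneg_right] using gain_nonneg
  rcases le_total a b with h | h
  · rw [add_comm a b] at hab ⊢
    rw [add_comm (splitEntropy a)]
    exact splitEntropy_add_splitEntropy_le_of_le ha h hab
  · exact splitEntropy_add_splitEntropy_le_of_le hb h hab

end ThreeMasses

lemma splitEntropy_le {m : ℝ} (h0 : 0 ≤ m) (h1 : m ≤ 1) : splitEntropy m ≤ 5 / 2 := by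
  have := negMulLog_le_one_sub_self h0
  have := negMulLog_nonneg (sub_nonneg.2 h1) (by linarith)
  unfold splitEntropy
  nlinarith

lemma negMulLog_sub_le_splitEntropy {m : ℝ} (h1 : m ≤ 1) :
    negMulLog m - m ≤ splitEntropy m := by
  have := negMulLog_le_one_sub_self (sub_nonneg.2 h1)
  unfold splitEntropy
  nlinarith [sq_nonneg m]

/-! ### Partitions along a dyadic tree -/

lemma sum_range_two_mul {M : Type*} [AddCommMonoid M] (N : ℕ) (f : ℕ → M) :
    ∑ i ∈ Finset.range (2 * N), f i =
      ∑ i ∈ Finset.range N, (f (2 * i) + f (2 * i + 1)) := by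
  induction N with
  | zero => simp
  | succ n ih => rw [mul_add_one, Finset.sum_range_succ, Finset.sum_range_succ, ih,
      Finset.sum_range_succ, add_assoc]

section Cells

variable {α : Type*} [MeasurableSpace α]

/-- Mass of the cell of index `(i, j)` in the partition of `α` given by the two labels `f`, `g`. -/
def cellMass (ν : Measure α) (f g : α → ℕ) (i j : ℕ) : ℝ := ν.real {x | f x = i ∧ g x = j}

lemma cellMass_nonneg (ν : Measure α) (f g : α → ℕ) (i j : ℕ) : 0 ≤ cellMass ν f g i j :=
  measureReal_nonneg

lemma cellMass_le_one (ν : Measure α) [IsProbabilityMeasure ν] (f g : α → ℕ) (i j : ℕ) :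
    cellMass ν f g i j ≤ 1 :=
  measureReal_le_one

lemma cellMass_swap (ν : Measure α) (f g : α → ℕ) (i j : ℕ) :
    cellMass ν f g i j = cellMass ν g f j i := by
  simp only [cellMass, and_comm]

lemma measurableSet_cell {f g : α → ℕ} (hf : Measurable f) (hg : Measurable g) (i j : ℕ) :
    MeasurableSet {x | f x = i ∧ g x = j} :=
  (hf (measurableSet_singleton i)).inter (hg (measurableSet_singleton j))

lemma integral_eq_sum_setIntegral_cell {μ : Measure α} {f g : α → ℕ} (hf : Measurable f)
    (hg : Measurable g) {N K : ℕ} (hN : ∀ᵐ x ∂μ, f x < N) (hK : ∀ᵐ x ∂μ, g x < K) {F : α → ℝ}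
    (hF : Integrable F μ) :
    ∫ x, F x ∂μ = ∑ i ∈ Finset.range N, ∑ j ∈ Finset.range K,
      ∫ x in {x | f x = i ∧ g x = j}, F x ∂μ := by
  have cells_cover : ∀ᵐ x ∂μ, x ∈ ⋃ p ∈ Finset.range N ×ˢ Finset.range K,
      {x | f x = p.1 ∧ g x = p.2} := by
    filter_upwards [hN, hK] with x hx₁ hx₂
    simpa using ⟨hx₁, hx₂⟩
  rw [← Measure.restrict_eq_self_of_ae_mem cells_cover, integral_biUnion_finset _
    (fun p _ => measurableSet_cell hf hg p.1 p.2) ?_ (fun p _ => hF.integrableOn),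
    Finset.sum_product, Measure.restrict_eq_self_of_ae_mem cells_cover]
  rintro p - q - hpq
  refine Set.disjoint_left.2 fun x hp hq => hpq ?_
  exact Prod.ext (hp.1.symm.trans hq.1) (hp.2.symm.trans hq.2)

lemma sum_cellMass (ν : Measure α) [IsProbabilityMeasure ν] {f g : α → ℕ} (hf : Measurable f)
    (hg : Measurable g) {N K : ℕ} (hN : ∀ᵐ x ∂ν, f x < N) (hK : ∀ᵐ x ∂ν, g x < K) :
    ∑ i ∈ Finset.range N, ∑ j ∈ Finset.range K, cellMass ν f g i j = 1 := by
  simpa [cellMass] using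
    (integral_eq_sum_setIntegral_cell hf hg hN hK (integrable_const (1 : ℝ))).symm

open Classical in
lemma sum_sq_cellMass (ν : Measure α) [IsProbabilityMeasure ν] {f g : α → ℕ} (hf : Measurable f)
    (hg : Measurable g) {N K : ℕ} (hN : ∀ᵐ x ∂ν, f x < N) (hK : ∀ᵐ x ∂ν, g x < K) :
    ∑ i ∈ Finset.range N, ∑ j ∈ Finset.range K, cellMass ν f g i j ^ 2 =
      ∫ x, ∫ y, (if f y = f x ∧ g y = g x then (1 : ℝ) else 0) ∂ν ∂ν := by
  have inner_eq (x : α) : ∫ y, (if f y = f x ∧ g y = g x then (1 : ℝ) else 0) ∂ν =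
      cellMass ν f g (f x) (g x) := by
    rw [cellMass, ← integral_indicator_one (measurableSet_cell hf hg (f x) (g x))]
    simp only [Set.indicator_apply, Set.mem_ofPred_eq, Pi.one_apply]
  have hmeas : Measurable fun x => cellMass ν f g (f x) (g x) :=
    (measurable_from_prod_countable_left (f := fun p : ℕ × ℕ => cellMass ν f g p.1 p.2)
      fun _ => measurable_of_countable _).comp (hf.prodMk hg)
  have hint : Integrable (fun x => cellMass ν f g (f x) (g x)) ν :=
    Integrable.of_bound hmeas.aestronglyMeasurable 1 <| Eventually.of_forall fun x => by
      rw [norm_of_nonneg (cellMass_nonneg ..)]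
      exact cellMass_le_one ..
  simp_rw [inner_eq]
  rw [integral_eq_sum_setIntegral_cell hf hg hN hK hint]
  refine Finset.sum_congr rfl fun i _ => Finset.sum_congr rfl fun j _ => ?_
  rw [setIntegral_congr_fun (g := fun _ => cellMass ν f g i j) (measurableSet_cell hf hg i j)
    (by rintro x ⟨rfl, rfl⟩; rfl), setIntegral_const, smul_eq_mul, sq]
  rfl

section Refinement

variable {f f' g g' : α → ℕ}

lemma cellMass_eq_add_of_half (ν : Measure α) [IsFiniteMeasure ν] (hf' : Measurable f')
    (hg : Measurable g) (hff' : ∀ x, f x = f' x / 2) (i j : ℕ) :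
    cellMass ν f g i j = cellMass ν f' g (2 * i) j + cellMass ν f' g (2 * i + 1) j := by
  unfold cellMass
  rw [← measureReal_union _ (measurableSet_cell hf' hg _ _)]
  · congr 1
    ext x
    simp only [Set.mem_ofPred_eq, Set.mem_union, hff']
    omega
  · rw [Set.disjoint_left]
    rintro x ⟨h₁, -⟩ ⟨h₂, -⟩
    omega

lemma sum_sq_cellMass_le_of_half (ν : Measure α) [IsFiniteMeasure ν] (hf' : Measurable f')
    (hg : Measurable g) (hff' : ∀ x, f x = f' x / 2) (N K : ℕ) :
    ∑ i ∈ Finset.range (2 * N), ∑ j ∈ Finset.range K, cellMass ν f' g i j ^ 2 ≤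
      ∑ i ∈ Finset.range N, ∑ j ∈ Finset.range K, cellMass ν f g i j ^ 2 := by
  simp only [sum_range_two_mul, ← Finset.sum_add_distrib]
  gcongr with i _ j _
  rw [cellMass_eq_add_of_half ν hf' hg hff' i j]
  nlinarith [mul_nonneg (cellMass_nonneg ν f' g (2 * i) j) (cellMass_nonneg ν f' g (2 * i + 1) j)]

lemma sum_splitEntropy_cellMass_le_of_half (ν : Measure α) [IsProbabilityMeasure ν]
    (hf : Measurable f) (hf' : Measurable f') (hg : Measurable g) (hff' : ∀ x, f x = f' x / 2)
    {N K : ℕ} (hN : ∀ᵐ x ∂ν, f x < N) (hK : ∀ᵐ x ∂ν, g x < K) :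
    ∑ i ∈ Finset.range (2 * N), ∑ j ∈ Finset.range K, splitEntropy (cellMass ν f' g i j) ≤
      ∑ i ∈ Finset.range N, ∑ j ∈ Finset.range K, splitEntropy (cellMass ν f g i j) +
        log 2 * (1 - ∑ i ∈ Finset.range N, ∑ j ∈ Finset.range K, cellMass ν f g i j ^ 2) := by
  rw [← sum_cellMass ν hf hg hN hK]
  simp only [sum_range_two_mul, ← Finset.sum_add_distrib, ← Finset.sum_sub_distrib,
    Finset.mul_sum]
  refine Finset.sum_le_sum fun i _ => Finset.sum_le_sum fun j _ => ?_
  have hsplit := cellMass_eq_add_of_half ν hf' hg hff' i j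
  rw [hsplit]
  exact splitEntropy_add_splitEntropy_le (cellMass_nonneg ..) (cellMass_nonneg ..)
    (hsplit ▸ cellMass_le_one ..)

/-- Both labels are halved, i.e. a cell is split twice, hence the factor `2`. -/
lemma sum_splitEntropy_cellMass_le_of_half_of_half (ν : Measure α) [IsProbabilityMeasure ν]
    (hf : Measurable f) (hg : Measurable g) (hf' : Measurable f') (hg' : Measurable g')
    (hff' : ∀ x, f x = f' x / 2) (hgg' : ∀ x, g x = g' x / 2) {N K : ℕ}
    (hfN : ∀ᵐ x ∂ν, f x < N) (hgK : ∀ᵐ x ∂ν, g x < K) :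
    ∑ i ∈ Finset.range (2 * N), ∑ j ∈ Finset.range (2 * K), splitEntropy (cellMass ν f' g' i j) ≤
      ∑ i ∈ Finset.range N, ∑ j ∈ Finset.range K, splitEntropy (cellMass ν f g i j) +
        2 * log 2 * (1 - ∑ i ∈ Finset.range (2 * N), ∑ j ∈ Finset.range (2 * K),
          cellMass ν f' g' i j ^ 2) := by
  have hf'N : ∀ᵐ x ∂ν, f' x < 2 * N := by
    filter_upwards [hfN] with x hx
    specialize hff' x
    omega
  have entropy_left := sum_splitEntropy_cellMass_le_of_half ν hf hf' hg hff' hfN hgK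
  have entropy_right := sum_splitEntropy_cellMass_le_of_half ν hg hg' hf' hgg' hgK hf'N
  have sq_left := sum_sq_cellMass_le_of_half ν hf' hg hff' N K
  have sq_right := sum_sq_cellMass_le_of_half ν hg' hf' hgg' K (2 * N)
  rw [Finset.sum_comm] at entropy_right sq_right
  simp only [cellMass_swap ν _ f'] at entropy_right sq_right
  rw [Finset.sum_comm (s := Finset.range K)] at entropy_right
  rw [Finset.sum_comm (s := Finset.range K)] at entropy_right sq_right
  have hlog : 0 ≤ log 2 := log_nonneg one_le_two
  linarith [mul_le_mul_of_nonneg_left (sq_right.trans sq_left) hlog,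
    mul_le_mul_of_nonneg_left sq_right hlog]

end Refinement

lemma sum_splitEntropy_add_sum_sq_cellMass_le (ν : Measure α) [IsProbabilityMeasure ν]
    {f g : ℕ → α → ℕ} (hf : ∀ k, Measurable (f k)) (hg : ∀ k, Measurable (g k))
    (hff : ∀ k x, f k x = f (k + 1) x / 2) (hgg : ∀ k x, g k x = g (k + 1) x / 2) {N K : ℕ}
    (hfN : ∀ k, ∀ᵐ x ∂ν, f k x < N * 2 ^ k) (hgK : ∀ k, ∀ᵐ x ∂ν, g k x < K * 2 ^ k) (n : ℕ) :
    (∑ i ∈ Finset.range (N * 2 ^ n), ∑ j ∈ Finset.range (K * 2 ^ n),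
        splitEntropy (cellMass ν (f n) (g n) i j)) +
      2 * log 2 * ∑ k ∈ Finset.range n, ∑ i ∈ Finset.range (N * 2 ^ (k + 1)),
          ∑ j ∈ Finset.range (K * 2 ^ (k + 1)), cellMass ν (f (k + 1)) (g (k + 1)) i j ^ 2 ≤
      5 / 2 * (N * K) + 2 * n * log 2 := by
  induction n with
  | zero =>
    have : ∑ i ∈ Finset.range N, ∑ j ∈ Finset.range K, splitEntropy (cellMass ν (f 0) (g 0) i j) ≤
        ∑ i ∈ Finset.range N, ∑ j ∈ Finset.range K, (5 / 2 : ℝ) := by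
      gcongr
      exact splitEntropy_le (cellMass_nonneg ..) (cellMass_le_one ..)
    simp only [Finset.sum_const, Finset.card_range, nsmul_eq_mul] at this
    simp only [pow_zero, mul_one, Finset.range_zero, Finset.sum_empty, mul_zero, add_zero,
      Nat.cast_zero, zero_mul]
    linarith
  | succ k ih =>
    have step := sum_splitEntropy_cellMass_le_of_half_of_half ν (hf k) (hg k) (hf (k + 1))
      (hg (k + 1)) (hff k) (hgg k) (hfN k) (hgK k)
    have two_mul_size (M : ℕ) : 2 * (M * 2 ^ k) = M * 2 ^ (k + 1) := by ring
    rw [two_mul_size, two_mul_size] at step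
    rw [Finset.sum_range_succ]
    push_cast
    linarith

end Cells

/-! ### Randomly shifted dyadic grids -/

/-- Index of the dyadic interval of length `2⁻ᵏ` containing `t`, in the grid shifted by `-1 - θ`.
The shift by `-1` makes the index of every `t ∈ [-1, 1]` a natural number that is not truncated. -/
def dyadicLabel (θ : ℝ) (k : ℕ) (t : ℝ) : ℕ := ⌊(2 : ℝ) ^ k * (t + 1 + θ)⌋₊

lemma dyadicLabel_eq_half (θ : ℝ) (k : ℕ) (t : ℝ) :
    dyadicLabel θ k t = dyadicLabel θ (k + 1) t / 2 := by
  unfold dyadicLabel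
  rw [← Nat.floor_div_natCast, pow_succ]
  congr 1
  push_cast
  ring

lemma measurable_dyadicLabel (k : ℕ) : Measurable fun p : ℝ × ℝ => dyadicLabel p.1 k p.2 :=
  Nat.measurable_floor.comp (by fun_prop)

lemma dyadicLabel_lt {θ t : ℝ} (hθ : θ ≤ 1) (ht : t ≤ 1) (k : ℕ) :
    dyadicLabel θ k t < 4 * 2 ^ k := by
  rw [dyadicLabel, Nat.floor_lt' (by positivity)]
  push_cast
  nlinarith [pow_pos (two_pos (α := ℝ)) k]

lemma dyadicLabel_mono (θ : ℝ) (k : ℕ) : Monotone (dyadicLabel θ k) := fun _ _ h =>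
  Nat.floor_mono (by gcongr)

lemma dyadicLabel_mono_shift (k : ℕ) (t : ℝ) : Monotone fun θ => dyadicLabel θ k t := fun _ _ h =>
  Nat.floor_mono (by gcongr)

lemma dyadicLabel_eq_sub_fract {θ t : ℝ} (k : ℕ) (h : 0 ≤ t + 1 + θ) :
    (dyadicLabel θ k t : ℝ) =
      2 ^ k * (t + 1 + θ) - Int.fract ((2 : ℝ) ^ k * (t + 1 + θ)) := by
  rw [dyadicLabel, natCast_floor_eq_intCast_floor (by positivity), Int.self_sub_fract]

lemma integral_fract_natCast_mul_add (N : ℕ) (t : ℝ) :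
    ∫ θ in (0 : ℝ)..1, Int.fract (N * (t + θ)) = ∫ θ in (0 : ℝ)..1, Int.fract (N * θ) := by
  have hper : Function.Periodic (fun θ : ℝ => Int.fract (N * θ)) 1 := fun θ => by
    simp only [mul_add, mul_one, Int.fract_add_natCast]
  rw [intervalIntegral.integral_comp_add_left (fun θ : ℝ => Int.fract (N * θ)) t, add_zero,
    hper.intervalIntegral_add_eq t 0, zero_add]

lemma intervalIntegrable_of_norm_le {E : Type*} [NormedAddCommGroup E] {f : ℝ → E} {a b C : ℝ}
    (hf : StronglyMeasurable f) (hC : ∀ t, ‖f t‖ ≤ C) : IntervalIntegrable f volume a b :=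
  intervalIntegrable_const.mono_fun' hf.aestronglyMeasurable (Eventually.of_forall hC)

lemma intervalIntegrable_fract_mul_add (c t : ℝ) :
    IntervalIntegrable (fun θ => Int.fract (c * (t + θ))) volume 0 1 := by
  have hmeas : Measurable fun θ => Int.fract (c * (t + θ)) := measurable_fract.comp (by fun_prop)
  refine intervalIntegrable_of_norm_le (C := 1) hmeas.stronglyMeasurable fun θ => ?_
  rw [norm_of_nonneg (Int.fract_nonneg _)]
  exact (Int.fract_lt_one _).le

lemma intervalIntegrable_dyadicLabel (k : ℕ) (t : ℝ) :
    IntervalIntegrable (fun θ => (dyadicLabel θ k t : ℝ)) volume 0 1 :=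
  (Nat.mono_cast.comp (dyadicLabel_mono_shift k t)).intervalIntegrable

lemma integral_dyadicLabel_sub {a b : ℝ} (ha : -1 ≤ a) (hb : -1 ≤ b) (k : ℕ) :
    ∫ θ in (0 : ℝ)..1, ((dyadicLabel θ k b : ℝ) - dyadicLabel θ k a) = 2 ^ k * (b - a) := by
  have label_eq : Set.EqOn (fun θ => (dyadicLabel θ k b : ℝ) - dyadicLabel θ k a)
      (fun θ => 2 ^ k * (b - a) - (Int.fract ((2 ^ k : ℕ) * (b + 1 + θ)) -
        Int.fract ((2 ^ k : ℕ) * (a + 1 + θ)))) (Set.uIcc 0 1) := fun θ hθ => by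
    rw [Set.uIcc_of_le zero_le_one] at hθ
    dsimp only
    rw [dyadicLabel_eq_sub_fract k (by linarith [hθ.1]),
      dyadicLabel_eq_sub_fract k (by linarith [hθ.1])]
    push_cast
    ring
  rw [intervalIntegral.integral_congr label_eq,
    intervalIntegral.integral_sub intervalIntegrable_const
      ((intervalIntegrable_fract_mul_add _ _).sub (intervalIntegrable_fract_mul_add _ _)),
    intervalIntegral.integral_sub (intervalIntegrable_fract_mul_add _ _)
      (intervalIntegrable_fract_mul_add _ _),
    integral_fract_natCast_mul_add, integral_fract_natCast_mul_add]
  simp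

/-- Indicator that `a` and `b` lie in the same interval of the `k`-th shifted dyadic grid. -/
def sameLabel (θ : ℝ) (k : ℕ) (a b : ℝ) : ℝ :=
  if dyadicLabel θ k a = dyadicLabel θ k b then 1 else 0

lemma sameLabel_nonneg (θ : ℝ) (k : ℕ) (a b : ℝ) : 0 ≤ sameLabel θ k a b := by
  unfold sameLabel
  split_ifs <;> norm_num

lemma sameLabel_le_one (θ : ℝ) (k : ℕ) (a b : ℝ) : sameLabel θ k a b ≤ 1 := by
  unfold sameLabel
  split_ifs <;> norm_num

lemma sameLabel_comm (θ : ℝ) (k : ℕ) (a b : ℝ) : sameLabel θ k a b = sameLabel θ k b a := by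
  simp only [sameLabel, eq_comm]

lemma measurable_sameLabel (k : ℕ) :
    Measurable fun p : ℝ × ℝ × ℝ => sameLabel p.1 k p.2.1 p.2.2 :=
  Measurable.ite
    (measurableSet_eq_fun
      ((measurable_dyadicLabel k).comp (measurable_fst.prodMk measurable_snd.fst))
      ((measurable_dyadicLabel k).comp (measurable_fst.prodMk measurable_snd.snd)))
    measurable_const measurable_const

lemma intervalIntegrable_sameLabel (k : ℕ) (a b : ℝ) :
    IntervalIntegrable (fun θ => sameLabel θ k a b) volume 0 1 := by
  have hmeas : Measurable fun θ => sameLabel θ k a b :=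
    (measurable_sameLabel k).comp (measurable_id.prodMk (measurable_const (a := (a, b))))
  refine intervalIntegrable_of_norm_le (C := 1) hmeas.stronglyMeasurable fun θ => ?_
  rw [norm_of_nonneg (sameLabel_nonneg ..)]
  exact sameLabel_le_one ..

lemma one_sub_le_sameLabel (θ : ℝ) (k : ℕ) {a b : ℝ} (hab : a ≤ b) :
    1 - ((dyadicLabel θ k b : ℝ) - dyadicLabel θ k a) ≤ sameLabel θ k a b := by
  have hmono := dyadicLabel_mono θ k hab
  unfold sameLabel
  split_ifs with h
  · rw [h, sub_self, sub_zero]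
  · have : (dyadicLabel θ k a : ℝ) + 1 ≤ dyadicLabel θ k b := by
      exact_mod_cast lt_of_le_of_ne hmono h
    linarith

/-- A uniform random shift separates two points at scale `2⁻ᵏ` with probability at most their
distance measured in that scale. -/
lemma one_sub_le_integral_sameLabel {a b : ℝ} (ha : -1 ≤ a) (hb : -1 ≤ b) (k : ℕ) :
    1 - 2 ^ k * |a - b| ≤ ∫ θ in (0 : ℝ)..1, sameLabel θ k a b := by
  wlog hab : a ≤ b generalizing a b
  · simp_rw [abs_sub_comm a, sameLabel_comm _ k a]
    exact this hb ha (le_of_not_ge hab)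
  have hint : IntervalIntegrable (fun θ => (dyadicLabel θ k b : ℝ) - dyadicLabel θ k a)
      volume 0 1 := (intervalIntegrable_dyadicLabel k b).sub (intervalIntegrable_dyadicLabel k a)
  calc
    1 - 2 ^ k * |a - b|
        = ∫ θ in (0 : ℝ)..1, (1 - ((dyadicLabel θ k b : ℝ) - dyadicLabel θ k a)) := by
      rw [intervalIntegral.integral_sub intervalIntegrable_const hint,
        integral_dyadicLabel_sub ha hb, abs_sub_comm, abs_of_nonneg (sub_nonneg.2 hab)]
      simp
    _ ≤ _ := intervalIntegral.integral_mono_on zero_le_one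
      (intervalIntegrable_const.sub hint) (intervalIntegrable_sameLabel k a b)
      fun θ _ => one_sub_le_sameLabel θ k hab

/-- Indicator that `x` and `y` lie in the same square of the `k`-th dyadic grid of the plane; both
coordinates are shifted by the same `θ`. -/
def sameCell (θ : ℝ) (k : ℕ) (x y : E2) : ℝ :=
  sameLabel θ k (x 0) (y 0) * sameLabel θ k (x 1) (y 1)

lemma sameCell_nonneg (θ : ℝ) (k : ℕ) (x y : E2) : 0 ≤ sameCell θ k x y :=
  mul_nonneg (sameLabel_nonneg ..) (sameLabel_nonneg ..)

lemma sameCell_le_one (θ : ℝ) (k : ℕ) (x y : E2) : sameCell θ k x y ≤ 1 :=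
  mul_le_one₀ (sameLabel_le_one ..) (sameLabel_nonneg ..) (sameLabel_le_one ..)

lemma norm_sameCell_le_one (θ : ℝ) (k : ℕ) (x y : E2) : ‖sameCell θ k x y‖ ≤ 1 := by
  rw [norm_of_nonneg (sameCell_nonneg ..)]
  exact sameCell_le_one ..

lemma measurable_sameCell (k : ℕ) :
    Measurable fun p : ℝ × E2 × E2 => sameCell p.1 k p.2.1 p.2.2 := by
  have hcoord (i : Fin 2) : Measurable fun p : ℝ × E2 × E2 => (p.1, p.2.1 i, p.2.2 i) := by
    fun_prop
  have hlabel (i : Fin 2) :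
      Measurable fun p : ℝ × E2 × E2 => sameLabel p.1 k (p.2.1 i) (p.2.2 i) :=
    (measurable_sameLabel k).comp (hcoord i)
  exact (hlabel 0).mul (hlabel 1)

lemma intervalIntegrable_sameCell (k : ℕ) (x y : E2) :
    IntervalIntegrable (fun θ => sameCell θ k x y) volume 0 1 := by
  have hmeas : Measurable fun θ => sameCell θ k x y :=
    Measurable.of_uncurry_right (f := fun θ (p : E2 × E2) => sameCell θ k p.1 p.2)
      (measurable_sameCell k) (y := (x, y))
  exact intervalIntegrable_of_norm_le hmeas.stronglyMeasurable fun θ => norm_sameCell_le_one θ k x y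

lemma max_le_integral_sameCell {x y : E2} (hx : ‖x‖ ≤ 1) (hy : ‖y‖ ≤ 1) (k : ℕ) :
    max 0 (1 - 2 ^ k * (|x 0 - y 0| + |x 1 - y 1|)) ≤ ∫ θ in (0 : ℝ)..1, sameCell θ k x y := by
  refine max_le (intervalIntegral.integral_nonneg zero_le_one fun θ _ => sameCell_nonneg ..) ?_
  have neg_one_le {z : E2} (hz : ‖z‖ ≤ 1) (i : Fin 2) : -1 ≤ z i :=
    (abs_le.1 ((PiLp.norm_apply_le z i).trans hz)).1
  have hlabel (i : Fin 2) := intervalIntegrable_sameLabel k (x i) (y i)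
  have same (i : Fin 2) := one_sub_le_integral_sameLabel (neg_one_le hx i) (neg_one_le hy i) k
  calc
    _ ≤ ∫ θ in (0 : ℝ)..1,
        (sameLabel θ k (x 0) (y 0) + sameLabel θ k (x 1) (y 1) - 1) := by
      rw [intervalIntegral.integral_sub ((hlabel 0).add (hlabel 1)) intervalIntegrable_const,
        intervalIntegral.integral_add (hlabel 0) (hlabel 1), integral_one, sub_zero]
      linarith [same 0, same 1]
    _ ≤ _ := intervalIntegral.integral_mono_on zero_le_one
      (((hlabel 0).add (hlabel 1)).sub intervalIntegrable_const)
        (intervalIntegrable_sameCell k x y) fun θ _ => by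
        have := sameLabel_le_one θ k (x 0) (y 0)
        have := sameLabel_le_one θ k (x 1) (y 1)
        unfold sameCell
        nlinarith

lemma sub_le_sum_max (n : ℕ) {d : ℝ} (hd : 0 ≤ d) :
    n - 2 ^ (n + 1) * d ≤ ∑ k ∈ Finset.range n, max 0 (1 - 2 ^ (k + 1) * d) := by
  induction n with
  | zero => simpa using hd
  | succ n ih =>
    rw [Finset.sum_range_succ, pow_succ]
    push_cast
    linarith [le_max_right (0 : ℝ) (1 - 2 ^ (n + 1) * d)]

/-- If `2⁻ᴶ⁻¹ < L ≤ 2⁻ᴶ`, then the first `J` summands are `1` up to a geometric series. -/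
lemma neg_log_le_log_two_mul_sum {n : ℕ} {L d : ℝ} (hn : (1 / 2) ^ n ≤ L) (hd : 0 ≤ d)
    (hdL : d ≤ 2 * L) :
    -log L ≤ 4 + log 2 * ∑ k ∈ Finset.range n, max 0 (1 - 2 ^ (k + 1) * d) := by
  have hlog : 0 ≤ log 2 := log_nonneg one_le_two
  have hterm (k : ℕ) : 0 ≤ max 0 (1 - 2 ^ (k + 1) * d) := le_max_left _ _
  have hL : 0 < L := (by positivity : (0 : ℝ) < (1 / 2) ^ n).trans_le hn
  rcases le_total 1 L with hL1 | hL1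
  · linarith [log_nonneg hL1, mul_nonneg hlog (Finset.sum_nonneg fun k (_ : k ∈ Finset.range n) =>
      hterm k)]
  obtain ⟨J, hJ₁, hJ₂⟩ := exists_nat_pow_near_of_lt_one hL hL1 (y := (1 / 2 : ℝ)) (by norm_num)
    (by norm_num)
  have hJn : J ≤ n :=
    (pow_le_pow_iff_right_of_lt_one₀ (by norm_num) (by norm_num)).1 (hn.trans hJ₂)
  have log_le : -log L ≤ (J + 1) * log 2 := by
    have := log_le_log (by positivity) hJ₁.le
    rw [log_pow, one_div, log_inv] at this
    push_cast at this
    linarith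
  have geom_le : 2 ^ (J + 1) * d ≤ 4 := by
    have := mul_le_mul_of_nonneg_left (hdL.trans (mul_le_mul_of_nonneg_left hJ₂ zero_le_two))
      (by positivity : (0 : ℝ) ≤ 2 ^ (J + 1))
    rw [show (2 : ℝ) ^ (J + 1) * (2 * (1 / 2) ^ J) = 4 by
      rw [one_div, inv_pow, pow_succ]; field_simp; norm_num] at this
    exact this
  have sum_le : ∑ k ∈ Finset.range J, max 0 (1 - 2 ^ (k + 1) * d) ≤
      ∑ k ∈ Finset.range n, max 0 (1 - 2 ^ (k + 1) * d) :=
    Finset.sum_le_sum_of_subset_of_nonneg (Finset.range_mono hJn) fun k _ _ => hterm k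
  have hJ := (sub_le_sum_max J hd).trans sum_le
  have := mul_le_mul_of_nonneg_left (sub_le_iff_le_add.1 hJ) hlog
  have := mul_le_mul_of_nonneg_left geom_le hlog
  have := log_two_lt_d9
  linarith

/-! ### The logarithmic Hardy–Littlewood–Sobolev inequality -/

lemma ae_prod_mem {α β : Type*} [MeasurableSpace α] [MeasurableSpace β] {μ : Measure α}
    {ν : Measure β} [SFinite ν] {s : Set α} {t : Set β} (hs : ∀ᵐ x ∂μ, x ∈ s)
    (ht : ∀ᵐ y ∂ν, y ∈ t) : ∀ᵐ p ∂(μ.prod ν), p ∈ s ×ˢ t :=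
  (Measure.quasiMeasurePreserving_fst.ae hs).and (Measure.quasiMeasurePreserving_snd.ae ht)

lemma integrable_of_ae_mem_compact {X E : Type*} [TopologicalSpace X] [T2Space X]
    [TopologicalSpace.PseudoMetrizableSpace X] [MeasurableSpace X] [BorelSpace X]
    [NormedAddCommGroup E] {μ : Measure X} [IsFiniteMeasure μ] {K : Set X} (hK : IsCompact K)
    (hμ : ∀ᵐ x ∂μ, x ∈ K) {f : X → E} (hf : ContinuousOn f K) : Integrable f μ := by
  have h := hf.integrableOn_compact (μ := μ) hK
  rwa [IntegrableOn, Measure.restrict_eq_self_of_ae_mem hμ] at h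

lemma mul_log_add_sub_le_mul_log {r a : ℝ} (hr : 0 ≤ r) (ha : 0 < a) :
    r * log a + r - a ≤ r * log r := by
  rcases hr.eq_or_lt with rfl | hr
  · linarith
  · have h := mul_le_mul_of_nonneg_left (log_le_log_add_sub_div ha hr) hr.le
    rw [mul_add, mul_div_cancel₀ _ hr.ne'] at h
    linarith

lemma integral_mul_log_integral_sub_log_le {α : Type*} [MeasurableSpace α] {μ : Measure α}
    [IsFiniteMeasure μ] {ρ : α → ℝ} {v : ℝ} (hv : 0 < v) (hμv : μ.real Set.univ ≤ v)
    (hρ : ∀ x, 0 ≤ ρ x) (hint : Integrable ρ μ)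
    (hint_log : Integrable (fun x => ρ x * log (ρ x)) μ) :
    (∫ x, ρ x ∂μ) * (log (∫ x, ρ x ∂μ) - log v) ≤ ∫ x, ρ x * log (ρ x) ∂μ := by
  obtain ⟨m, hm⟩ : ∃ m, m = ∫ x, ρ x ∂μ := ⟨_, rfl⟩
  rw [← hm]
  have m_nonneg : 0 ≤ m := hm ▸ integral_nonneg hρ
  rcases m_nonneg.eq_or_lt with rfl | m_pos
  · have : ρ =ᵐ[μ] 0 := (integral_eq_zero_iff_of_nonneg hρ hint).1 hm.symm
    rw [zero_mul, integral_eq_zero_of_ae]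
    filter_upwards [this] with x hx
    rw [hx, Pi.zero_apply, zero_mul]
  · have ha : 0 < m / v := div_pos m_pos hv
    have h := integral_mono (((hint.mul_const _).add hint).sub (integrable_const (m / v)))
      hint_log fun x => mul_log_add_sub_le_mul_log (hρ x) ha
    rw [integral_sub' ((hint.mul_const _).add hint) (integrable_const _),
      integral_add' (hint.mul_const _) hint, integral_mul_const, ← hm, integral_const,
      smul_eq_mul] at h
    have : μ.real Set.univ * (m / v) ≤ m :=
      (mul_le_mul_of_nonneg_right hμv ha.le).trans_eq (mul_div_cancel₀ _ hv.ne')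
    rw [← log_div m_pos.ne' hv.ne']
    linarith

section Density

variable {ρ : E2 → ℝ}

/-- The measure on the disc with density `ρ` with respect to Lebesgue measure. -/
def densMeasure (ρ : E2 → ℝ) : Measure E2 :=
  (volume.restrict B2).withDensity fun x => ENNReal.ofReal (ρ x)

lemma mem_B2 {x : E2} : x ∈ B2 ↔ ‖x‖ < 1 := mem_ball_zero_iff

lemma measurableSet_B2 : MeasurableSet B2 := Metric.isOpen_ball.measurableSet

lemma integrableOn_B2 {f : E2 → ℝ} (hf : Continuous f) : IntegrableOn f B2 :=
  (hf.continuousOn.integrableOn_compact (isCompact_closedBall 0 1)).mono_set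
    Metric.ball_subset_closedBall

instance : IsFiniteMeasure (volume.restrict B2) :=
  isFiniteMeasure_restrict.2 measure_ball_lt_top.ne

lemma integral_densMeasure (hc : Continuous ρ) (hρ : ∀ x, 0 ≤ ρ x) (f : E2 → ℝ) :
    ∫ x, f x ∂(densMeasure ρ) = ∫ x in B2, ρ x * f x := by
  unfold densMeasure
  rw [integral_withDensity_eq_integral_toReal_smul hc.measurable.ennreal_ofReal
    (Eventually.of_forall fun x => ENNReal.ofReal_lt_top)]
  simp only [fun x => ENNReal.toReal_ofReal (hρ x), smul_eq_mul]

lemma isProbabilityMeasure_densMeasure (hc : Continuous ρ) (hρ : ∀ x, 0 ≤ ρ x)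
    (h1 : ∫ x in B2, ρ x = 1) : IsProbabilityMeasure (densMeasure ρ) where
  measure_univ := by
    rw [densMeasure, withDensity_apply _ MeasurableSet.univ, Measure.restrict_univ,
      ← ofReal_integral_eq_lintegral_ofReal (integrableOn_B2 hc) (Eventually.of_forall hρ), h1,
      ENNReal.ofReal_one]

lemma ae_mem_densMeasure (ρ : E2 → ℝ) : ∀ᵐ x ∂(densMeasure ρ), x ∈ B2 :=
  (withDensity_absolutelyContinuous _ _).ae_le (ae_restrict_mem measurableSet_B2)

lemma densMeasure_real (hc : Continuous ρ) (hρ : ∀ x, 0 ≤ ρ x) {s : Set E2}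
    (hs : MeasurableSet s) : (densMeasure ρ).real s = ∫ x in s, ρ x ∂(volume.restrict B2) := by
  rw [← integral_indicator_one hs, integral_densMeasure hc hρ, ← integral_indicator hs]
  refine integral_congr_ae (Eventually.of_forall fun x => ?_)
  by_cases hx : x ∈ s <;> simp [hx]

/-- Index of the side in direction `i` of the square of the `k`-th shifted grid containing `x`. -/
def coordLabel (θ : ℝ) (k : ℕ) (i : Fin 2) (x : E2) : ℕ := dyadicLabel θ k (x i)

lemma measurable_coordLabel (θ : ℝ) (k : ℕ) (i : Fin 2) : Measurable (coordLabel θ k i) :=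
  (measurable_dyadicLabel k).comp (by fun_prop : Measurable fun x : E2 => (θ, x i))

lemma coordLabel_lt {θ : ℝ} (hθ : θ ≤ 1) (k : ℕ) (i : Fin 2) {x : E2} (hx : x ∈ B2) :
    coordLabel θ k i x < 4 * 2 ^ k :=
  dyadicLabel_lt hθ ((le_abs_self _).trans ((PiLp.norm_apply_le x i).trans (mem_B2.1 hx).le)) k

lemma mem_Ico_of_dyadicLabel_eq {θ t : ℝ} {n m : ℕ} (h : 0 ≤ t + 1 + θ)
    (hm : dyadicLabel θ n t = m) :
    t ∈ Set.Ico ((m : ℝ) / 2 ^ n - 1 - θ) ((m + 1) / 2 ^ n - 1 - θ) := by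
  have hpow : (0 : ℝ) < 2 ^ n := by positivity
  rw [dyadicLabel, Nat.floor_eq_iff (mul_nonneg hpow.le h), mul_comm, ← div_le_iff₀ hpow,
    ← lt_div_iff₀ hpow] at hm
  constructor <;> linarith

lemma volume_setOf_forall_mem_Ico {ι : Type*} [Fintype ι] (a b : ι → ℝ) :
    volume {x : EuclideanSpace ℝ ι | ∀ i, x i ∈ Set.Ico (a i) (b i)} =
      ∏ i, ENNReal.ofReal (b i - a i) := by
  have h := (EuclideanSpace.volume_preserving_symm_measurableEquiv_toLp ι).measure_preimage
    (MeasurableSet.univ_pi fun i => measurableSet_Ico (a := a i) (b := b i)).nullMeasurableSet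
  rw [Real.volume_pi_Ico] at h
  rw [← h]
  congr 1
  ext x
  simp

lemma volume_real_cell_le {θ : ℝ} (hθ : 0 ≤ θ) (n i j : ℕ) :
    (volume.restrict B2).real {x | coordLabel θ n 0 x = i ∧ coordLabel θ n 1 x = j} ≤
      (1 / 4) ^ n := by
  have hsub : {x | coordLabel θ n 0 x = i ∧ coordLabel θ n 1 x = j} ∩ B2 ⊆
      {x : E2 | ∀ l, x l ∈ Set.Ico (((![i, j] l : ℕ) : ℝ) / 2 ^ n - 1 - θ)
        (((![i, j] l : ℕ) + 1) / 2 ^ n - 1 - θ)} := by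
    rintro x ⟨⟨h₀, h₁⟩, hx⟩ l
    have hl : 0 ≤ x l + 1 + θ := by
      linarith [(abs_le.1 ((PiLp.norm_apply_le x l).trans (mem_B2.1 hx).le)).1]
    fin_cases l
    · exact mem_Ico_of_dyadicLabel_eq hl h₀
    · exact mem_Ico_of_dyadicLabel_eq hl h₁
  rw [measureReal_restrict_apply' measurableSet_B2]
  refine ENNReal.toReal_le_of_le_ofReal (by positivity) ((measure_mono hsub).trans_eq ?_)
  have side (l : Fin 2) : ((![i, j] l : ℕ) + 1 : ℝ) / 2 ^ n - 1 - θ -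
      (((![i, j] l : ℕ) : ℝ) / 2 ^ n - 1 - θ) = (1 / 2) ^ n := by
    rw [one_div_pow]
    ring
  simp_rw [volume_setOf_forall_mem_Ico, side, Finset.prod_const, Finset.card_univ,
    Fintype.card_fin]
  rw [← ENNReal.ofReal_pow (by positivity), ← pow_mul, mul_comm, pow_mul]
  norm_num

lemma continuous_mul_log_comp (hc : Continuous ρ) : Continuous fun x => ρ x * log (ρ x) :=
  continuous_mul_log.comp hc

/-- Cells have area `4⁻ⁿ`, so by Jensen's inequality their masses have nearly at least the entropy
of the uniform distribution, reduced by the relative entropy of `ρ`. -/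
lemma le_sum_splitEntropy_cellMass (hc : Continuous ρ) (hρ : ∀ x, 0 ≤ ρ x)
    (h1 : ∫ x in B2, ρ x = 1) {θ : ℝ} (hθ0 : 0 ≤ θ) (hθ1 : θ ≤ 1) (n : ℕ) :
    2 * n * log 2 - 1 - ∫ x in B2, ρ x * log (ρ x) ≤
      ∑ i ∈ Finset.range (4 * 2 ^ n), ∑ j ∈ Finset.range (4 * 2 ^ n), splitEntropy
        (cellMass (densMeasure ρ) (coordLabel θ n 0) (coordLabel θ n 1) i j) := by
  have hP := isProbabilityMeasure_densMeasure hc hρ h1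
  obtain ⟨M, hM⟩ : ∃ M, M = cellMass (densMeasure ρ) (coordLabel θ n 0) (coordLabel θ n 1) :=
    ⟨_, rfl⟩
  have label_lt (l : Fin 2) : ∀ᵐ x ∂(volume.restrict B2), coordLabel θ n l x < 4 * 2 ^ n :=
    (ae_restrict_mem measurableSet_B2).mono fun x hx => coordLabel_lt hθ1 n l hx
  have label_lt' (l : Fin 2) : ∀ᵐ x ∂(densMeasure ρ), coordLabel θ n l x < 4 * 2 ^ n :=
    (ae_mem_densMeasure ρ).mono fun x hx => coordLabel_lt hθ1 n l hx
  have hlog : log ((1 / 4) ^ n) = -(2 * n * log 2) := by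
    rw [log_pow, show (1 / 4 : ℝ) = (2 ^ 2)⁻¹ by norm_num, log_inv, log_pow]
    push_cast
    ring
  have cell_le (i j : ℕ) : 2 * n * log 2 * M i j - M i j - splitEntropy (M i j) ≤
      ∫ x in {x | coordLabel θ n 0 x = i ∧ coordLabel θ n 1 x = j}, ρ x * log (ρ x)
        ∂(volume.restrict B2) := by
    have jensen := integral_mul_log_integral_sub_log_le
      (μ := (volume.restrict B2).restrict {x | coordLabel θ n 0 x = i ∧ coordLabel θ n 1 x = j})
      (by positivity) ((measureReal_restrict_apply_univ _).trans_le (volume_real_cell_le hθ0 n i j))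
      hρ (integrableOn_B2 hc).integrable.restrict
      (integrableOn_B2 (continuous_mul_log_comp hc)).integrable.restrict
    rw [← densMeasure_real hc hρ (measurableSet_cell (measurable_coordLabel θ n 0)
      (measurable_coordLabel θ n 1) i j), hlog] at jensen
    have := negMulLog_sub_le_splitEntropy (m := M i j) (hM ▸ cellMass_le_one ..)
    rw [hM] at this ⊢
    unfold negMulLog cellMass at *
    linarith
  have total := sum_cellMass (densMeasure ρ) (measurable_coordLabel θ n 0)
    (measurable_coordLabel θ n 1) (label_lt' 0) (label_lt' 1)
  have := Finset.sum_le_sum fun i (_ : i ∈ Finset.range (4 * 2 ^ n)) =>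
    Finset.sum_le_sum fun j (_ : j ∈ Finset.range (4 * 2 ^ n)) => cell_le i j
  rw [← integral_eq_sum_setIntegral_cell (measurable_coordLabel θ n 0)
    (measurable_coordLabel θ n 1) (label_lt 0) (label_lt 1)
    (integrableOn_B2 (continuous_mul_log_comp hc))] at this
  simp only [Finset.sum_sub_distrib, ← Finset.mul_sum] at this
  rw [← hM] at total ⊢
  rw [total] at this
  linarith

lemma sum_integral_sameCell_le_entropy (hc : Continuous ρ) (hρ : ∀ x, 0 ≤ ρ x)
    (h1 : ∫ x in B2, ρ x = 1) {θ : ℝ} (hθ0 : 0 ≤ θ) (hθ1 : θ ≤ 1) (n : ℕ) :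
    2 * log 2 * ∑ k ∈ Finset.range n,
        ∫ x, ∫ y, sameCell θ (k + 1) x y ∂(densMeasure ρ) ∂(densMeasure ρ) ≤
      (∫ x in B2, ρ x * log (ρ x)) + 41 := by
  have hP := isProbabilityMeasure_densMeasure hc hρ h1
  have label_lt (i : Fin 2) (k : ℕ) : ∀ᵐ x ∂(densMeasure ρ), coordLabel θ k i x < 4 * 2 ^ k :=
    (ae_mem_densMeasure ρ).mono fun x hx => coordLabel_lt hθ1 k i hx
  have collision (k : ℕ) : ∫ x, ∫ y, sameCell θ k x y ∂(densMeasure ρ) ∂(densMeasure ρ) =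
      ∑ i ∈ Finset.range (4 * 2 ^ k), ∑ j ∈ Finset.range (4 * 2 ^ k),
        cellMass (densMeasure ρ) (coordLabel θ k 0) (coordLabel θ k 1) i j ^ 2 := by
    rw [sum_sq_cellMass (densMeasure ρ) (measurable_coordLabel θ k 0)
      (measurable_coordLabel θ k 1) (label_lt 0 k) (label_lt 1 k)]
    simp only [sameCell, sameLabel, coordLabel, ite_and, ite_mul, one_mul, zero_mul,
      eq_comm]
  have tree := sum_splitEntropy_add_sum_sq_cellMass_le (densMeasure ρ)
    (fun k => measurable_coordLabel θ k 0) (fun k => measurable_coordLabel θ k 1)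
    (fun k x => dyadicLabel_eq_half θ k (x 0)) (fun k x => dyadicLabel_eq_half θ k (x 1))
    (label_lt 0) (label_lt 1) n
  have entropy := le_sum_splitEntropy_cellMass hc hρ h1 hθ0 hθ1 n
  simp only [collision]
  push_cast at tree
  linarith

lemma integrable_sameCell (τ : Measure ℝ) [IsFiniteMeasure τ] (ν : Measure (E2 × E2))
    [IsFiniteMeasure ν] (k : ℕ) :
    Integrable (fun p : ℝ × E2 × E2 => sameCell p.1 k p.2.1 p.2.2) (τ.prod ν) :=
  Integrable.of_bound (measurable_sameCell k).aestronglyMeasurable 1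
    (Eventually.of_forall fun _ => norm_sameCell_le_one ..)

lemma integral_prod_sameCell (ν : Measure E2) [IsFiniteMeasure ν] (θ : ℝ) (k : ℕ) :
    ∫ p : E2 × E2, sameCell θ k p.1 p.2 ∂(ν.prod ν) = ∫ x, ∫ y, sameCell θ k x y ∂ν ∂ν := by
  have hmeas : Measurable fun p : E2 × E2 => sameCell θ k p.1 p.2 :=
    Measurable.of_uncurry_left (f := fun θ (p : E2 × E2) => sameCell θ k p.1 p.2)
      (measurable_sameCell k)
  exact integral_prod _ (Integrable.of_bound hmeas.aestronglyMeasurable 1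
    (Eventually.of_forall fun _ => norm_sameCell_le_one ..))

lemma sum_integral_integral_sameCell_le_entropy (hc : Continuous ρ) (hρ : ∀ x, 0 ≤ ρ x)
    (h1 : ∫ x in B2, ρ x = 1) (n : ℕ) :
    2 * log 2 * ∑ k ∈ Finset.range n, ∫ p : E2 × E2, (∫ θ in Set.Ioc (0 : ℝ) 1,
        sameCell θ (k + 1) p.1 p.2) ∂((densMeasure ρ).prod (densMeasure ρ)) ≤
      (∫ x in B2, ρ x * log (ρ x)) + 41 := by
  have hP := isProbabilityMeasure_densMeasure hc hρ h1
  obtain ⟨ν, hν⟩ : ∃ ν, ν = densMeasure ρ := ⟨_, rfl⟩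
  rw [← hν] at hP ⊢
  have hint (k : ℕ) := integrable_sameCell (volume.restrict (Set.Ioc (0 : ℝ) 1)) (ν.prod ν) k
  have swap (k : ℕ) :
      ∫ p : E2 × E2, (∫ θ in Set.Ioc (0 : ℝ) 1, sameCell θ k p.1 p.2) ∂(ν.prod ν) =
        ∫ θ in Set.Ioc (0 : ℝ) 1, ∫ p : E2 × E2, sameCell θ k p.1 p.2 ∂(ν.prod ν) :=
    (integral_integral_swap (f := fun θ (p : E2 × E2) => sameCell θ k p.1 p.2) (hint k)).symm
  simp_rw [swap]
  rw [← integral_finsetSum _ fun k _ => (hint (k + 1)).integral_prod_left, ← integral_const_mul]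
  calc
    _ ≤ ∫ θ in Set.Ioc (0 : ℝ) 1, ((∫ x in B2, ρ x * log (ρ x)) + 41) := by
      refine integral_mono_ae ((integrable_finsetSum _ fun k _ =>
        (hint (k + 1)).integral_prod_left).const_mul _) (integrable_const _) ?_
      filter_upwards [ae_restrict_mem measurableSet_Ioc] with θ hθ
      simp_rw [integral_prod_sameCell]
      exact hν ▸ sum_integral_sameCell_le_entropy hc hρ h1 hθ.1.le hθ.2 n
    _ = _ := by simp

lemma neg_log_max_norm_sub_le {n : ℕ} {δ : ℝ} (hn : (1 / 2) ^ n ≤ δ) {x y : E2} (hx : ‖x‖ ≤ 1)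
    (hy : ‖y‖ ≤ 1) :
    -log (max ‖x - y‖ δ) ≤ 4 + log 2 * ∑ k ∈ Finset.range n,
      ∫ θ in Set.Ioc (0 : ℝ) 1, sameCell θ (k + 1) x y := by
  have coord (i : Fin 2) : |x i - y i| ≤ max ‖x - y‖ δ :=
    (PiLp.norm_apply_le (x - y) i).trans (le_max_left _ _)
  refine (neg_log_le_log_two_mul_sum (d := |x 0 - y 0| + |x 1 - y 1|)
    (hn.trans (le_max_right _ _)) (by positivity) (by linarith [coord 0, coord 1])).trans ?_
  have : 0 ≤ log 2 := log_nonneg one_le_two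
  gcongr with k _
  rw [← intervalIntegral.integral_of_le zero_le_one]
  exact max_le_integral_sameCell hx hy (k + 1)

lemma integrable_neg_log_max_norm_sub {E : Type*} [NormedAddCommGroup E] [MeasurableSpace E]
    [BorelSpace E] [SecondCountableTopology E] {ν : Measure E} [IsFiniteMeasure ν] {K : Set E}
    (hK : IsCompact K) (hν : ∀ᵐ x ∂ν, x ∈ K) {δ : ℝ} (hδ : 0 < δ) :
    Integrable (fun p : E × E => -log (max ‖p.1 - p.2‖ δ)) (ν.prod ν) := by
  have hcont : Continuous fun p : E × E => -log (max ‖p.1 - p.2‖ δ) :=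
    (Continuous.log (by fun_prop) fun p => (lt_max_of_lt_right hδ).ne').neg
  exact integrable_of_ae_mem_compact (hK.prod hK) (ae_prod_mem hν hν) hcont.continuousOn

/-- The factor `1 / 2` is sharp, the additive constant is not. -/
lemma integral_neg_log_max_norm_sub_le (hc : Continuous ρ) (hρ : ∀ x, 0 ≤ ρ x)
    (h1 : ∫ x in B2, ρ x = 1) {δ : ℝ} (hδ : 0 < δ) :
    ∫ p : E2 × E2, -log (max ‖p.1 - p.2‖ δ) ∂((densMeasure ρ).prod (densMeasure ρ)) ≤
      1 / 2 * (∫ x in B2, ρ x * log (ρ x)) + 25 := by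
  have hP := isProbabilityMeasure_densMeasure hc hρ h1
  have average := sum_integral_integral_sameCell_le_entropy hc hρ h1
  have hmem := ae_mem_densMeasure ρ
  obtain ⟨ν, hν⟩ : ∃ ν, ν = densMeasure ρ := ⟨_, rfl⟩
  rw [← hν] at hP hmem average ⊢
  obtain ⟨n, hn⟩ := exists_pow_lt_of_lt_one hδ (by norm_num : (1 / 2 : ℝ) < 1)
  have kernel_le : ∀ᵐ p ∂(ν.prod ν), -log (max ‖p.1 - p.2‖ δ) ≤ 4 + log 2 *
      ∑ k ∈ Finset.range n, ∫ θ in Set.Ioc (0 : ℝ) 1, sameCell θ (k + 1) p.1 p.2 := by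
    filter_upwards [ae_prod_mem hmem hmem] with p hp
    exact neg_log_max_norm_sub_le hn.le (mem_B2.1 hp.1).le (mem_B2.1 hp.2).le
  have hcell (k : ℕ) : Integrable (fun p : E2 × E2 =>
      ∫ θ in Set.Ioc (0 : ℝ) 1, sameCell θ (k + 1) p.1 p.2) (ν.prod ν) :=
    (integrable_sameCell _ (ν.prod ν) (k + 1)).integral_prod_right
  have hsum := (integrable_finsetSum (Finset.range n) fun k _ => hcell k).const_mul (log 2)
  have hlog := integrable_neg_log_max_norm_sub (isCompact_closedBall (0 : E2) 1)
    (hmem.mono fun x hx => Metric.ball_subset_closedBall hx) hδ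
  have := integral_mono_ae hlog ((integrable_const 4).add hsum) kernel_le
  rw [integral_add' (integrable_const 4) hsum, integral_const_mul,
    integral_finsetSum _ fun k _ => hcell k, integral_const, probReal_univ, one_smul] at this
  linarith [average n]

end Density

/-! ### Two radial kernels -/

section RadialPrimitive

variable {g G : ℝ → ℝ} {l : ℝ}

lemma integrable_comp_norm_of_hasDerivAt (hG0 : ContinuousWithinAt G (Set.Ici 0) 0)
    (hG : ∀ r ∈ Set.Ioi (0 : ℝ), HasDerivAt G (r * g r) r) (hg : ∀ r ∈ Set.Ioi (0 : ℝ), 0 ≤ g r)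
    (hlim : Tendsto G atTop (nhds l)) : Integrable fun x : E2 => g ‖x‖ := by
  rw [integrable_fun_norm_addHaar]
  simpa using integrableOn_Ioi_deriv_of_nonneg hG0 hG
    (fun r hr => mul_nonneg (le_of_lt hr) (hg r hr)) hlim

lemma integral_comp_norm_of_hasDerivAt (hG0 : ContinuousWithinAt G (Set.Ici 0) 0)
    (hG : ∀ r ∈ Set.Ioi (0 : ℝ), HasDerivAt G (r * g r) r) (hg : ∀ r ∈ Set.Ioi (0 : ℝ), 0 ≤ g r)
    (hlim : Tendsto G atTop (nhds l)) : ∫ x : E2, g ‖x‖ = 2 * π * (l - G 0) := by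
  have volume_ball : volume.real (Metric.ball (0 : E2) 1) = π := by
    simp [measureReal_def, EuclideanSpace.volume_ball_fin_two, pi_pos.le]
  rw [integral_fun_norm_addHaar, volume_ball, ← integral_Ioi_of_hasDerivAt_of_nonneg hG0 hG
    (fun r hr => mul_nonneg (le_of_lt hr) (hg r hr)) hlim]
  simp [mul_assoc]

end RadialPrimitive

/-- The bubble of width `γ`: an approximate identity on the plane as `γ → 0`. -/
def bubble (γ : ℝ) (x : E2) : ℝ := 1 / π * (γ ^ 2 / (‖x‖ ^ 2 + γ ^ 2) ^ 2)

/-- A radial function, singular at the origin, whose integral does not depend on `b > 0`. It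
dominates the first moment of the bubble and the errors made in replacing `|x - y|²` by the kernel
`regDistSq`. -/
def singularKernel (b : ℝ) (x : E2) : ℝ := b / (‖x‖ * (b ^ 2 + ‖x‖ ^ 2))

section RadialKernels

variable {γ b : ℝ}

lemma hasDerivAt_bubble_primitive (hγ : 0 < γ) (r : ℝ) :
    HasDerivAt (fun r : ℝ => -(γ ^ 2 / (2 * π)) * (r ^ 2 + γ ^ 2)⁻¹)
      (r * (1 / π * (γ ^ 2 / (r ^ 2 + γ ^ 2) ^ 2))) r := by
  have h : HasDerivAt (fun r : ℝ => r ^ 2 + γ ^ 2) (2 * r) r := by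
    simpa using (hasDerivAt_pow 2 r).add_const (γ ^ 2)
  refine ((h.inv (by positivity)).const_mul (-(γ ^ 2 / (2 * π)))).congr_deriv ?_
  field_simp

lemma tendsto_bubble_primitive (γ : ℝ) :
    Tendsto (fun r : ℝ => -(γ ^ 2 / (2 * π)) * (r ^ 2 + γ ^ 2)⁻¹) atTop (nhds 0) := by
  have : Tendsto (fun r : ℝ => r ^ 2 + γ ^ 2) atTop atTop :=
    tendsto_atTop_add_const_right _ _ (tendsto_pow_atTop two_ne_zero)
  simpa using this.inv_tendsto_atTop.const_mul (-(γ ^ 2 / (2 * π)))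

lemma integrable_bubble (hγ : 0 < γ) : Integrable (bubble γ) :=
  integrable_comp_norm_of_hasDerivAt
    (hasDerivAt_bubble_primitive hγ 0).continuousAt.continuousWithinAt
    (fun r _ => hasDerivAt_bubble_primitive hγ r) (fun _ _ => by positivity)
    (tendsto_bubble_primitive γ)

lemma integral_bubble (hγ : 0 < γ) : ∫ x, bubble γ x = 1 := by
  have h := integral_comp_norm_of_hasDerivAt (g := fun r => 1 / π * (γ ^ 2 / (r ^ 2 + γ ^ 2) ^ 2))
    (hasDerivAt_bubble_primitive hγ 0).continuousAt.continuousWithinAt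
    (fun r _ => hasDerivAt_bubble_primitive hγ r) (fun _ _ => by positivity)
    (tendsto_bubble_primitive γ)
  refine h.trans ?_
  field_simp
  ring

lemma hasDerivAt_arctan_div (hb : 0 < b) {r : ℝ} (hr : 0 < r) :
    HasDerivAt (fun r : ℝ => arctan (r / b)) (r * (b / (r * (b ^ 2 + r ^ 2)))) r := by
  refine ((hasDerivAt_id' r).div_const b).arctan.congr_deriv ?_
  field_simp

lemma tendsto_arctan_div_atTop (hb : 0 < b) :
    Tendsto (fun r : ℝ => arctan (r / b)) atTop (nhds (π / 2)) :=
  (tendsto_nhds_of_tendsto_nhdsWithin tendsto_arctan_atTop).comp (tendsto_id.atTop_div_const hb)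

lemma integrable_singularKernel (hb : 0 < b) : Integrable (singularKernel b) :=
  integrable_comp_norm_of_hasDerivAt (g := fun r => b / (r * (b ^ 2 + r ^ 2)))
    (by fun_prop : Continuous fun r : ℝ => arctan (r / b)).continuousWithinAt
    (fun _ hr => hasDerivAt_arctan_div hb hr)
    (fun r hr => by have : 0 < r := hr; positivity) (tendsto_arctan_div_atTop hb)

lemma integral_singularKernel (hb : 0 < b) : ∫ x, singularKernel b x = π ^ 2 := by
  have h := integral_comp_norm_of_hasDerivAt (g := fun r => b / (r * (b ^ 2 + r ^ 2)))
    (by fun_prop : Continuous fun r : ℝ => arctan (r / b)).continuousWithinAt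
    (fun _ hr => hasDerivAt_arctan_div hb hr)
    (fun r hr => by have : 0 < r := hr; positivity) (tendsto_arctan_div_atTop hb)
  refine h.trans ?_
  rw [zero_div, arctan_zero]
  ring

lemma bubble_nonneg (γ : ℝ) (x : E2) : 0 ≤ bubble γ x := by
  unfold bubble
  positivity

lemma singularKernel_nonneg (hb : 0 ≤ b) (x : E2) : 0 ≤ singularKernel b x := by
  unfold singularKernel
  positivity

lemma bubble_mul_norm_le (hγ : 0 < γ) (x : E2) :
    bubble γ x * ‖x‖ ≤ γ / π * singularKernel γ x := by
  rcases (norm_nonneg x).eq_or_lt with h | h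
  · simp [bubble, singularKernel, ← h]
  · have key : γ / π * singularKernel γ x - bubble γ x * ‖x‖ =
        1 / π * (γ ^ 2 * γ ^ 2 / (‖x‖ * (‖x‖ ^ 2 + γ ^ 2) ^ 2)) := by
      unfold bubble singularKernel
      field_simp
      ring
    exact sub_nonneg.1 (key ▸ by positivity)

lemma continuous_bubble (hγ : 0 < γ) : Continuous (bubble γ) :=
  continuous_const.mul (continuous_const.div (by fun_prop) fun x => by positivity)

end RadialKernels

/-! ### The divergence theorem with the weight `1 - ‖x‖²` -/

lemma lipschitzWith_max_one_sub_norm_sq {E : Type*} [SeminormedAddCommGroup E] :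
    LipschitzWith 2 fun x : E => max (1 - ‖x‖ ^ 2) 0 := by
  have eq_min : ∀ x : E, max (1 - ‖x‖ ^ 2) 0 = 1 - min ‖x‖ 1 ^ 2 := fun x => by
    rcases le_total ‖x‖ 1 with h | h
    · rw [min_eq_left h, max_eq_left (by nlinarith [norm_nonneg x])]
    · rw [min_eq_right h, max_eq_right (by nlinarith [norm_nonneg x]), one_pow, sub_self]
  refine LipschitzWith.of_dist_le_mul fun x y => ?_
  have diff_le : |min ‖x‖ 1 - min ‖y‖ 1| ≤ dist x y := by
    refine (abs_min_sub_min_le_max _ _ _ _).trans ?_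
    rw [sub_self, abs_zero, dist_eq_norm, max_eq_left (abs_nonneg _)]
    exact abs_norm_sub_norm_le x y
  have sum_le : |min ‖x‖ 1 + min ‖y‖ 1| ≤ 2 := by
    rw [abs_of_nonneg (by positivity)]
    linarith [min_le_right ‖x‖ 1, min_le_right ‖y‖ 1]
  calc dist (max (1 - ‖x‖ ^ 2) 0) (max (1 - ‖y‖ ^ 2) 0)
      = |min ‖x‖ 1 + min ‖y‖ 1| * |min ‖x‖ 1 - min ‖y‖ 1| := by
        rw [eq_min, eq_min, Real.dist_eq, ← abs_mul, abs_sub_comm]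
        congr 1
        ring
    _ ≤ 2 * dist x y := by gcongr

lemma exists_contDiff_hasCompactSupport_eventuallyEq {E F : Type*} [NormedAddCommGroup E]
    [NormedSpace ℝ E] [FiniteDimensional ℝ E] [HasContDiffBump E] [NormedAddCommGroup F]
    [NormedSpace ℝ F] {f : E → F} {c : E} {r R : ℝ} {n : ℕ∞} (hr : 0 < r) (hrR : r < R)
    (hf : ContDiffOn ℝ n f (Metric.ball c R)) :
    ∃ g : E → F, ContDiff ℝ n g ∧ HasCompactSupport g ∧
      ∀ x ∈ Metric.ball c r, g =ᶠ[nhds x] f := by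
  let χ : ContDiffBump c := ⟨r, (r + R) / 2, hr, by linarith⟩
  refine ⟨fun x => χ x • f x, contDiff_iff_contDiffAt.2 fun x => ?_,
    χ.hasCompactSupport.smul_right, fun x hx => ?_⟩
  · by_cases hx : x ∈ Metric.ball c R
    · exact χ.contDiffAt.smul (hf.contDiffAt (Metric.isOpen_ball.mem_nhds hx))
    · have notMem : x ∉ tsupport χ := by
        rw [χ.tsupport_eq, Metric.mem_closedBall, not_le]
        rw [Metric.mem_ball, not_lt] at hx
        change (r + R) / 2 < _
        linarith
      refine (contDiffAt_const (c := 0)).congr_of_eventuallyEq ?_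
      filter_upwards [notMem_tsupport_iff_eventuallyEq.1 notMem] with y hy
      rw [hy, Pi.zero_apply, zero_smul]
  · filter_upwards [Metric.isOpen_ball.mem_nhds hx] with y hy
    rw [χ.one_of_mem_closedBall (Metric.ball_subset_closedBall hy), one_smul]

section WeightedDivergence

variable {E : Type*} [NormedAddCommGroup E] [InnerProductSpace ℝ E]

lemma lineDeriv_max_one_sub_norm_sq_of_norm_lt_one {x : E} (hx : ‖x‖ < 1) (v : E) :
    lineDeriv ℝ (fun x : E => max (1 - ‖x‖ ^ 2) 0) x v = -(2 * inner ℝ x v) := by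
  have heq : (fun x : E => max (1 - ‖x‖ ^ 2) 0) =ᶠ[nhds x] fun x => 1 - ‖x‖ ^ 2 := by
    filter_upwards [(isOpen_lt continuous_norm continuous_const).mem_nhds hx] with y hy
    exact max_eq_left (sub_nonneg.2 (pow_le_one₀ (norm_nonneg y) (le_of_lt hy)))
  have hd : HasFDerivAt (fun x : E => max (1 - ‖x‖ ^ 2) 0) (-(2 • innerSL ℝ x)) x :=
    ((hasStrictFDerivAt_norm_sq x).hasFDerivAt.const_sub 1).congr_of_eventuallyEq heq
  simpa using (hd.hasLineDerivAt v).lineDeriv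

lemma lineDeriv_max_one_sub_norm_sq_of_one_lt_norm {x : E} (hx : 1 < ‖x‖) (v : E) :
    lineDeriv ℝ (fun x : E => max (1 - ‖x‖ ^ 2) 0) x v = 0 := by
  have heq : (fun x : E => max (1 - ‖x‖ ^ 2) 0) =ᶠ[nhds x] fun _ => 0 := by
    filter_upwards [(isOpen_lt continuous_const continuous_norm).mem_nhds hx] with y hy
    exact max_eq_right (sub_nonpos.2 (one_le_pow₀ (le_of_lt hy)))
  exact (((hasFDerivAt_const (0 : ℝ) x).congr_of_eventuallyEq heq).hasLineDerivAt v).lineDeriv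

variable [FiniteDimensional ℝ E] [MeasurableSpace E] [BorelSpace E]

lemma integral_one_sub_norm_sq_mul_fderiv (μ : Measure E) [μ.IsAddHaarMeasure] {f : E → ℝ} {r : ℝ}
    (hr : 1 < r) (hf : ContDiffOn ℝ 1 f (Metric.ball 0 r)) (v : E) :
    ∫ x in Metric.ball 0 1, (1 - ‖x‖ ^ 2) * fderiv ℝ f x v ∂μ =
      ∫ x in Metric.ball 0 1, 2 * inner ℝ x v * f x ∂μ := by
  obtain ⟨g, hg, hgc, hgf⟩ :=
    exists_contDiff_hasCompactSupport_eventuallyEq (n := 1) one_pos hr hf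
  obtain ⟨C, hC⟩ := hg.lipschitzWith_of_hasCompactSupport hgc one_ne_zero
  have weight_of_one_le : ∀ x : E, 1 ≤ ‖x‖ → max (1 - ‖x‖ ^ 2) 0 = 0 := fun x hx =>
    max_eq_right (sub_nonpos.2 (one_le_pow₀ hx))
  have weight_compact : HasCompactSupport fun x : E => max (1 - ‖x‖ ^ 2) 0 :=
    .intro (isCompact_closedBall (0 : E) 1) fun x hx =>
      weight_of_one_le x (le_of_lt (by simpa using hx))
  have by_parts := hC.integral_lineDeriv_mul_eq (μ := μ) lipschitzWith_max_one_sub_norm_sq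
    weight_compact v
  rw [← integral_indicator Metric.isOpen_ball.measurableSet,
    ← integral_indicator Metric.isOpen_ball.measurableSet]
  refine Eq.trans (integral_congr_ae (.of_forall fun x => ?_))
    (by_parts.trans (integral_congr_ae ?_))
  · by_cases hx : x ∈ Metric.ball (0 : E) 1
    · have hx1 : ‖x‖ ≤ 1 := (mem_ball_zero_iff.1 hx).le
      simp only [Set.indicator_of_mem hx]
      rw [max_eq_left (sub_nonneg.2 (pow_le_one₀ (norm_nonneg x) hx1)),
        (hg.differentiable one_ne_zero x).lineDeriv_eq_fderiv, (hgf x hx).fderiv_eq, mul_comm]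
    · simp only [Set.indicator_of_notMem hx]
      rw [weight_of_one_le x (not_lt.1 (mt mem_ball_zero_iff.2 hx)), mul_zero]
  · filter_upwards [measure_eq_zero_iff_ae_notMem.1
      (Measure.addHaar_sphere_of_ne_zero μ (0 : E) one_ne_zero)] with x hxs
    by_cases hx : x ∈ Metric.ball (0 : E) 1
    · simp only [Set.indicator_of_mem hx]
      rw [lineDeriv_max_one_sub_norm_sq_of_norm_lt_one (mem_ball_zero_iff.1 hx),
        (hgf x hx).eq_of_nhds, inner_neg_right]
      ring
    · simp only [Set.indicator_of_notMem hx]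
      rw [lineDeriv_max_one_sub_norm_sq_of_one_lt_norm, zero_mul]
      exact lt_of_le_of_ne (not_lt.1 (mt mem_ball_zero_iff.2 hx))
        (Ne.symm (mt mem_sphere_zero_iff_norm.2 hxs))

end WeightedDivergence

/-! ### The ground-state form and its operator -/

/-- The partial derivative in the `i`-th coordinate. -/
def partialDeriv (i : Fin 2) (f : E2 → ℝ) (x : E2) : ℝ :=
  fderiv ℝ f x (EuclideanSpace.single i 1)

/-- The operator `ψ ↦ -div((1 - |x|²)∇ψ) + ψ`, whose form is `groundForm`. -/
def groundOp (ψ : E2 → ℝ) (x : E2) : ℝ :=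
  ψ x + ∑ i, (-((1 - ‖x‖ ^ 2) * partialDeriv i (partialDeriv i ψ) x) +
    2 * x i * partialDeriv i ψ x)

/-- The bilinear form which the Hardy functional becomes after division by its ground state
`√(1 - |x|²)`. -/
def groundForm (f g : E2 → ℝ) : ℝ :=
  ∫ x in B2, ((1 - ‖x‖ ^ 2) * ∑ i, partialDeriv i f x * partialDeriv i g x + f x * g x)

section GroundForm

variable {f g ψ : E2 → ℝ} {r : ℝ}

lemma contDiffOn_partialDeriv {m n : ℕ∞} (hmn : m + 1 ≤ n)
    (hf : ContDiffOn ℝ n f (Metric.ball 0 r)) (i : Fin 2) :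
    ContDiffOn ℝ m (partialDeriv i f) (Metric.ball 0 r) :=
  (hf.fderiv_of_isOpen Metric.isOpen_ball (by exact_mod_cast hmn)).clm_apply contDiffOn_const

lemma continuousOn_partialDeriv (hf : ContDiffOn ℝ 1 f (Metric.ball 0 r)) (i : Fin 2) :
    ContinuousOn (partialDeriv i f) (Metric.ball 0 r) :=
  (contDiffOn_partialDeriv (m := 0) (n := 1) (by norm_num) hf i).continuousOn

lemma partialDeriv_mul {x : E2} (hf : DifferentiableAt ℝ f x) (hg : DifferentiableAt ℝ g x)
    (i : Fin 2) :
    partialDeriv i (fun y => f y * g y) x =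
      f x * partialDeriv i g x + g x * partialDeriv i f x := by
  simp only [partialDeriv, fderiv_fun_mul hf hg, add_apply, smul_apply, smul_eq_mul]

lemma integrableOn_B2_of_continuousOn_ball (hr : 1 < r) (hf : ContinuousOn f (Metric.ball 0 r)) :
    IntegrableOn f B2 :=
  ((hf.mono (Metric.closedBall_subset_ball hr)).integrableOn_compact
    (isCompact_closedBall 0 1)).mono_set Metric.ball_subset_closedBall

lemma integral_weight_mul_partialDeriv_mul (hr : 1 < r) (hf : ContDiffOn ℝ 1 f (Metric.ball 0 r))
    (hg : ContDiffOn ℝ 1 g (Metric.ball 0 r)) (i : Fin 2) :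
    ∫ x in B2, (1 - ‖x‖ ^ 2) * (partialDeriv i f x * g x) =
      ∫ x in B2, f x * (-((1 - ‖x‖ ^ 2) * partialDeriv i g x) + 2 * x i * g x) := by
  have cf := hf.continuousOn
  have cg := hg.continuousOn
  have cdf := continuousOn_partialDeriv hf i
  have cdg := continuousOn_partialDeriv hg i
  have divergence : ∫ x in B2, ((1 - ‖x‖ ^ 2) * (partialDeriv i f x * g x) +
      (1 - ‖x‖ ^ 2) * (f x * partialDeriv i g x)) = ∫ x in B2, 2 * x i * (f x * g x) := by
    refine Eq.trans (setIntegral_congr_fun measurableSet_B2 fun x hx => ?_)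
      ((integral_one_sub_norm_sq_mul_fderiv volume hr (hf.mul hg)
        (EuclideanSpace.single i 1)).trans
          (setIntegral_congr_fun measurableSet_B2 fun x _ => ?_))
    · have hx' := Metric.isOpen_ball.mem_nhds (Metric.ball_subset_ball hr.le hx)
      have product_rule := partialDeriv_mul ((hf.contDiffAt hx').differentiableAt one_ne_zero)
        ((hg.contDiffAt hx').differentiableAt one_ne_zero) i
      change _ = (1 - ‖x‖ ^ 2) * partialDeriv i (fun y => f y * g y) x
      rw [product_rule]
      ring
    · simp only [EuclideanSpace.inner_single_right, one_mul, starRingEnd_apply, star_trivial]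
  rw [integral_add (integrableOn_B2_of_continuousOn_ball hr (by fun_prop))
    (integrableOn_B2_of_continuousOn_ball hr (by fun_prop)), ← eq_sub_iff_add_eq,
    ← integral_sub (integrableOn_B2_of_continuousOn_ball hr (by fun_prop))
    (integrableOn_B2_of_continuousOn_ball hr (by fun_prop))] at divergence
  rw [divergence]
  congr with x
  ring

-- There is no boundary term: the weight `1 - |x|²` vanishes on the circle, `f` and `ψ` need not.
lemma groundForm_eq_integral_mul_groundOp (hr : 1 < r) (hf : ContDiffOn ℝ 1 f (Metric.ball 0 r))
    (hψ : ContDiffOn ℝ 2 ψ (Metric.ball 0 r)) :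
    groundForm f ψ = ∫ x in B2, f x * groundOp ψ x := by
  have hdψ : ∀ i, ContDiffOn ℝ 1 (partialDeriv i ψ) (Metric.ball 0 r) :=
    contDiffOn_partialDeriv (m := 1) (n := 2) (by norm_num) hψ
  have cf := hf.continuousOn
  have cψ := hψ.continuousOn
  have cdf := continuousOn_partialDeriv hf
  have cdψ := fun i => (hdψ i).continuousOn
  have cddψ := fun i => continuousOn_partialDeriv (hdψ i) i
  calc groundForm f ψ
      = ∑ i, (∫ x in B2, (1 - ‖x‖ ^ 2) * (partialDeriv i f x * partialDeriv i ψ x)) +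
          ∫ x in B2, f x * ψ x := by
        rw [← integral_finsetSum _ fun i _ =>
            integrableOn_B2_of_continuousOn_ball hr (by fun_prop),
          ← integral_add (integrable_finsetSum _ fun i _ =>
              integrableOn_B2_of_continuousOn_ball hr (by fun_prop))
            (integrableOn_B2_of_continuousOn_ball hr (by fun_prop))]
        simp only [groundForm, Finset.mul_sum]
    _ = ∑ i, (∫ x in B2, f x * (-((1 - ‖x‖ ^ 2) * partialDeriv i (partialDeriv i ψ) x) +
          2 * x i * partialDeriv i ψ x)) + ∫ x in B2, f x * ψ x := by
        simp only [fun i => integral_weight_mul_partialDeriv_mul hr hf (hdψ i) i]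
    _ = ∫ x in B2, f x * groundOp ψ x := by
        rw [← integral_finsetSum _ fun i _ =>
            integrableOn_B2_of_continuousOn_ball hr (by fun_prop),
          ← integral_add (integrable_finsetSum _ fun i _ =>
              integrableOn_B2_of_continuousOn_ball hr (by fun_prop))
            (integrableOn_B2_of_continuousOn_ball hr (by fun_prop))]
        congr with x
        rw [groundOp, ← Finset.mul_sum]
        ring

end GroundForm

/-! ### An explicit approximate Green's function -/

/-- The width of the regularisation at the pole `y`, proportional to the distance of `y` to the
circle. -/
def regWidth (ε : ℝ) (y : E2) : ℝ := √ε * (1 - ‖y‖ ^ 2)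

/-- The regularised squared distance to the pole `y`. -/
def regDistSq (ε : ℝ) (y x : E2) : ℝ := ‖x - y‖ ^ 2 + regWidth ε y ^ 2

/-- The square of `|y||x - y*|`, where `y*` is the reflection of the pole `y` in the unit circle. -/
def reflDistSq (y x : E2) : ℝ := 1 - 2 * inner ℝ x y + ‖x‖ ^ 2 * ‖y‖ ^ 2

/-- The reciprocal of the distance to the reflected pole; see `reflDistSq`. -/
def invReflDist (y x : E2) : ℝ := (√(reflDistSq y x))⁻¹

/-- The factor of `greenKernel` which is positive and smooth up to the circle. It is normalised so
that `√(1 - |x|²) * greenWeight y x` is `1` at the pole `x = y`. -/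
def greenWeight (y x : E2) : ℝ := √(1 - ‖y‖ ^ 2) * invReflDist y x

/-- The logarithmic factor of `greenKernel`. -/
def logFactor (ε : ℝ) (y x : E2) : ℝ := log (reflDistSq y x) - log (regDistSq ε y x) + 5

/-- A regularised and slightly enlarged version of Green's function of `groundOp` with pole `y`. -/
def greenKernel (ε : ℝ) (y x : E2) : ℝ := 1 / (4 * π) * greenWeight y x * logFactor ε y x

/-- The partial derivatives of `greenKernel`, in closed form. -/
def greenKernelDeriv (ε : ℝ) (i : Fin 2) (y x : E2) : ℝ :=
  1 / (4 * π) * √(1 - ‖y‖ ^ 2) *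
    (-(‖y‖ ^ 2 * x i - y i) * invReflDist y x ^ 3 * logFactor ε y x
      + 2 * (‖y‖ ^ 2 * x i - y i) * invReflDist y x ^ 3
      - 2 * (x i - y i) * invReflDist y x * (regDistSq ε y x)⁻¹)

lemma one_sub_norm_sq_pos {E : Type*} [SeminormedAddCommGroup E] {x : E} (hx : ‖x‖ < 1) :
    0 < 1 - ‖x‖ ^ 2 :=
  sub_pos.2 (pow_lt_one₀ (norm_nonneg x) hx two_ne_zero)

lemma norm_mul_norm_lt_one {E : Type*} [SeminormedAddCommGroup E] {x y : E} (hx : ‖x‖ < 1)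
    (hy : ‖y‖ < 1) : ‖x‖ * ‖y‖ < 1 :=
  mul_lt_one_of_nonneg_of_lt_one_left (norm_nonneg x) hx hy.le

section GreenKernel

variable {ε r : ℝ} {x y : E2}

lemma regWidth_pos (hε : 0 < ε) (hy : ‖y‖ < 1) : 0 < regWidth ε y :=
  mul_pos (sqrt_pos.2 hε) (one_sub_norm_sq_pos hy)

lemma regDistSq_pos (hε : 0 < ε) (hy : ‖y‖ < 1) (x : E2) : 0 < regDistSq ε y x := by
  have := regWidth_pos hε hy
  unfold regDistSq
  positivity

lemma sq_one_sub_norm_mul_norm_le_reflDistSq (y x : E2) :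
    (1 - ‖x‖ * ‖y‖) ^ 2 ≤ reflDistSq y x := by
  have := real_inner_le_norm x y
  unfold reflDistSq
  linarith [mul_pow ‖x‖ ‖y‖ 2]

lemma reflDistSq_pos (hxy : ‖x‖ * ‖y‖ < 1) : 0 < reflDistSq y x :=
  (pow_pos (sub_pos.2 hxy) 2).trans_le (sq_one_sub_norm_mul_norm_le_reflDistSq y x)

lemma reflDistSq_eq (y x : E2) :
    reflDistSq y x = ‖x - y‖ ^ 2 + (1 - ‖x‖ ^ 2) * (1 - ‖y‖ ^ 2) := by
  rw [reflDistSq, norm_sub_sq_real]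
  ring

lemma invReflDist_pos (hxy : ‖x‖ * ‖y‖ < 1) : 0 < invReflDist y x :=
  inv_pos.2 (sqrt_pos.2 (reflDistSq_pos hxy))

lemma invReflDist_sq (hxy : ‖x‖ * ‖y‖ < 1) : invReflDist y x ^ 2 = (reflDistSq y x)⁻¹ := by
  rw [invReflDist, inv_pow, sq_sqrt (reflDistSq_pos hxy).le]

lemma greenWeight_pos (hx : ‖x‖ < 1) (hy : ‖y‖ < 1) : 0 < greenWeight y x :=
  mul_pos (sqrt_pos.2 (one_sub_norm_sq_pos hy)) (invReflDist_pos (norm_mul_norm_lt_one hx hy))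

lemma exists_one_lt_mul_norm_lt_one (hy : ‖y‖ < 1) : ∃ r : ℝ, 1 < r ∧ r * ‖y‖ < 1 := by
  have := norm_nonneg y
  refine ⟨2 / (1 + ‖y‖), ?_, ?_⟩
  · rw [lt_div_iff₀ (by linarith)]
    linarith
  · rw [div_mul_eq_mul_div, div_lt_one (by linarith)]
    linarith

lemma contDiff_reflDistSq (y : E2) {n : ℕ∞} : ContDiff ℝ n (reflDistSq y) :=
  (contDiff_const.sub (contDiff_const.mul (contDiff_id.inner ℝ contDiff_const))).add
    ((contDiff_norm_sq ℝ).mul contDiff_const)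

lemma contDiffOn_greenKernel (hε : 0 < ε) (hry : r * ‖y‖ < 1) (hr : 1 < r) {n : ℕ∞} :
    ContDiffOn ℝ n (greenKernel ε y) (Metric.ball 0 r) := by
  have hy : ‖y‖ < 1 := by nlinarith [norm_nonneg y]
  have refl_pos : ∀ x ∈ Metric.ball (0 : E2) r, 0 < reflDistSq y x := fun x hx =>
    reflDistSq_pos ((mul_le_mul_of_nonneg_right (mem_ball_zero_iff.1 hx).le
      (norm_nonneg y)).trans_lt hry)
  have refl_ne : ∀ x ∈ Metric.ball (0 : E2) r, reflDistSq y x ≠ 0 := fun x hx => (refl_pos x hx).ne'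
  have hrefl : ContDiffOn ℝ n (reflDistSq y) (Metric.ball 0 r) :=
    (contDiff_reflDistSq y).contDiffOn
  have hreg : ContDiffOn ℝ n (regDistSq ε y) (Metric.ball 0 r) :=
    (((contDiff_norm_sq ℝ).comp (contDiff_id.sub contDiff_const)).add contDiff_const).contDiffOn
  have hinv : ContDiffOn ℝ n (invReflDist y) (Metric.ball 0 r) :=
    (hrefl.sqrt refl_ne).inv fun x hx => (sqrt_pos.2 (refl_pos x hx)).ne'
  exact (contDiffOn_const.mul (contDiffOn_const.mul hinv)).mul
    (((hrefl.log refl_ne).sub (hreg.log fun x _ => (regDistSq_pos hε hy x).ne')).add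
      contDiffOn_const)

lemma hasFDerivAt_reflDistSq (y x : E2) :
    HasFDerivAt (reflDistSq y) ((2 * ‖y‖ ^ 2) • innerSL ℝ x - (2 : ℝ) • innerSL ℝ y) x := by
  have hnorm : HasFDerivAt (fun x : E2 => ‖x‖ ^ 2) (2 • innerSL ℝ x) x :=
    (hasStrictFDerivAt_norm_sq x).hasFDerivAt
  have hinner : HasFDerivAt (fun x : E2 => inner ℝ x y) (innerSL ℝ y) x :=
    ((innerSL ℝ y).hasFDerivAt (x := x)).congr_of_eventuallyEq
      (.of_forall fun z => real_inner_comm y z)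
  refine (((hinner.const_mul 2).const_sub 1).add (hnorm.mul_const (‖y‖ ^ 2))).congr_fderiv ?_
  ext e
  simp only [smul_apply, sub_apply, add_apply, neg_apply, smul_eq_mul, coe_innerSL_apply]
  ring

lemma hasFDerivAt_regDistSq (ε : ℝ) (y x : E2) :
    HasFDerivAt (regDistSq ε y) ((2 : ℝ) • innerSL ℝ (x - y)) x := by
  refine (((hasStrictFDerivAt_norm_sq (x - y)).hasFDerivAt.comp x
    ((hasFDerivAt_id (𝕜 := ℝ) x).sub_const y)).add_const (regWidth ε y ^ 2)).congr_fderiv ?_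
  ext e
  simp

lemma hasFDerivAt_invReflDist (hxy : ‖x‖ * ‖y‖ < 1) :
    HasFDerivAt (invReflDist y) ((-(1 / 2) * invReflDist y x ^ 3) •
      ((2 * ‖y‖ ^ 2) • innerSL ℝ x - (2 : ℝ) • innerSL ℝ y)) x := by
  have hpos := reflDistSq_pos hxy
  have hs : 0 < √(reflDistSq y x) := sqrt_pos.2 hpos
  have hinv : HasDerivAt (fun t : ℝ => (√t)⁻¹) (-(1 / 2) * invReflDist y x ^ 3)
      (reflDistSq y x) := by
    refine ((hasDerivAt_sqrt hpos.ne').inv hs.ne').congr_deriv ?_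
    unfold invReflDist
    field_simp
  exact hinv.comp_hasFDerivAt x (hasFDerivAt_reflDistSq y x)

lemma hasFDerivAt_logFactor (hε : 0 < ε) (hy : ‖y‖ < 1) (hxy : ‖x‖ * ‖y‖ < 1) :
    HasFDerivAt (logFactor ε y)
      (invReflDist y x ^ 2 • ((2 * ‖y‖ ^ 2) • innerSL ℝ x - (2 : ℝ) • innerSL ℝ y) -
        (regDistSq ε y x)⁻¹ • ((2 : ℝ) • innerSL ℝ (x - y))) x := by
  rw [invReflDist_sq hxy]
  exact (((hasFDerivAt_reflDistSq y x).log (reflDistSq_pos hxy).ne').sub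
    ((hasFDerivAt_regDistSq ε y x).log (regDistSq_pos hε hy x).ne')).add_const 5

lemma partialDeriv_greenKernel (hε : 0 < ε) (hy : ‖y‖ < 1) (hxy : ‖x‖ * ‖y‖ < 1) (i : Fin 2) :
    partialDeriv i (greenKernel ε y) x = greenKernelDeriv ε i y x := by
  have hd : HasFDerivAt (greenKernel ε y) _ x :=
    (((hasFDerivAt_invReflDist hxy).const_mul √(1 - ‖y‖ ^ 2)).const_mul (1 / (4 * π))).mul
      (hasFDerivAt_logFactor hε hy hxy)
  rw [partialDeriv, hd.fderiv]
  simp only [greenKernelDeriv, smul_apply, sub_apply, add_apply, smul_eq_mul,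
    coe_innerSL_apply, EuclideanSpace.inner_single_right, PiLp.sub_apply, starRingEnd_apply,
    star_trivial]
  ring

lemma partialDeriv_greenKernelDeriv (hε : 0 < ε) (hy : ‖y‖ < 1) (hxy : ‖x‖ * ‖y‖ < 1)
    (i : Fin 2) :
    partialDeriv i (greenKernelDeriv ε i y) x = 1 / (4 * π) * √(1 - ‖y‖ ^ 2) *
      (-‖y‖ ^ 2 * invReflDist y x ^ 3 * logFactor ε y x
        + 3 * (‖y‖ ^ 2 * x i - y i) ^ 2 * invReflDist y x ^ 5 * logFactor ε y x
        - 2 * (‖y‖ ^ 2 * x i - y i) * invReflDist y x ^ 3 *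
          ((‖y‖ ^ 2 * x i - y i) * invReflDist y x ^ 2 - (x i - y i) * (regDistSq ε y x)⁻¹)
        + 2 * ‖y‖ ^ 2 * invReflDist y x ^ 3
        - 6 * (‖y‖ ^ 2 * x i - y i) ^ 2 * invReflDist y x ^ 5
        - 2 * invReflDist y x * (regDistSq ε y x)⁻¹
        + 2 * (x i - y i) * (‖y‖ ^ 2 * x i - y i) * invReflDist y x ^ 3 * (regDistSq ε y x)⁻¹
        + 4 * (x i - y i) ^ 2 * invReflDist y x * ((regDistSq ε y x)⁻¹) ^ 2) := by
  have hcoord : HasFDerivAt (fun x : E2 => x i) (EuclideanSpace.proj i : E2 →L[ℝ] ℝ) x :=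
    (EuclideanSpace.proj i : E2 →L[ℝ] ℝ).hasFDerivAt
  have hrefl := (hcoord.const_mul (‖y‖ ^ 2)).sub_const (y i)
  have hsub := hcoord.sub_const (y i)
  have hw := hasFDerivAt_invReflDist hxy
  have hreg := (hasDerivAt_inv (regDistSq_pos hε hy x).ne').comp_hasFDerivAt x
    (hasFDerivAt_regDistSq ε y x)
  have hd : HasFDerivAt (greenKernelDeriv ε i y) _ x :=
    ((((hrefl.neg.mul (hw.pow 3)).mul (hasFDerivAt_logFactor hε hy hxy)).add
      ((hrefl.const_mul 2).mul (hw.pow 3))).sub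
        (((hsub.const_mul 2).mul hw).mul hreg)).const_mul (1 / (4 * π) * √(1 - ‖y‖ ^ 2))
  rw [partialDeriv, hd.fderiv]
  simp only [smul_apply, sub_apply, add_apply, neg_apply, smul_eq_mul, nsmul_eq_mul,
    coe_innerSL_apply, EuclideanSpace.inner_single_right, PiLp.proj_apply,
    PiLp.single_eq_same, PiLp.sub_apply,
    Pi.mul_apply, Pi.neg_apply, Function.comp_apply, starRingEnd_apply, star_trivial]
  push_cast
  ring

end GreenKernel

section GroundOpGreenKernel

variable {ε : ℝ} {x y z : E2}

lemma partialDeriv_partialDeriv_greenKernel (hε : 0 < ε) (hy : ‖y‖ < 1) (hx : ‖x‖ < 1)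
    (i : Fin 2) : partialDeriv i (partialDeriv i (greenKernel ε y)) x =
      partialDeriv i (greenKernelDeriv ε i y) x := by
  have heq : partialDeriv i (greenKernel ε y) =ᶠ[nhds x] greenKernelDeriv ε i y := by
    filter_upwards [(isOpen_lt continuous_norm continuous_const).mem_nhds hx] with z hz
    exact partialDeriv_greenKernel hε hy (norm_mul_norm_lt_one hz hy) i
  rw [partialDeriv, heq.fderiv_eq, partialDeriv]

-- An approximate identity at `y`, a term which is nonnegative because of the logarithm, and a
-- remainder.
lemma groundOp_greenKernel (hε : 0 < ε) (hy : ‖y‖ < 1) (hx : ‖x‖ < 1) :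
    groundOp (greenKernel ε y) x = 1 / (4 * π) * greenWeight y x *
      (4 * (1 - ‖x‖ ^ 2) * regWidth ε y ^ 2 * ((regDistSq ε y x)⁻¹) ^ 2 +
        (1 - ‖y‖ ^ 2) * invReflDist y x ^ 2 * logFactor ε y x +
        4 * invReflDist y x ^ 2 *
          (-(1 - ‖y‖ ^ 2) + (1 - inner ℝ x y) * regWidth ε y ^ 2 * (regDistSq ε y x)⁻¹)) := by
  have hxy := norm_mul_norm_lt_one hx hy
  have norm_sq_coord : ∀ z : E2, ‖z‖ ^ 2 = z 0 ^ 2 + z 1 ^ 2 := fun z => by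
    simp [EuclideanSpace.norm_sq_eq]
  have inner_coord : inner ℝ x y = x 0 * y 0 + x 1 * y 1 := by
    simp only [PiLp.inner_apply, RCLike.inner_apply', conj_trivial, Fin.sum_univ_two]
  have refl_coord : invReflDist y x ^ 2 * (1 - 2 * (x 0 * y 0 + x 1 * y 1) +
      (x 0 ^ 2 + x 1 ^ 2) * (y 0 ^ 2 + y 1 ^ 2)) = 1 := by
    rw [← inner_coord, ← norm_sq_coord, ← norm_sq_coord, invReflDist_sq hxy]
    exact inv_mul_cancel₀ (reflDistSq_pos hxy).ne'
  have reg_coord : (regDistSq ε y x)⁻¹ *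
      ((x 0 - y 0) ^ 2 + (x 1 - y 1) ^ 2 + regWidth ε y ^ 2) = 1 := by
    rw [← PiLp.sub_apply, ← PiLp.sub_apply, ← norm_sq_coord]
    exact inv_mul_cancel₀ (regDistSq_pos hε hy x).ne'
  simp only [groundOp, partialDeriv_partialDeriv_greenKernel hε hy hx,
    partialDeriv_greenKernel hε hy hxy, partialDeriv_greenKernelDeriv hε hy hxy, Fin.sum_univ_two]
  unfold greenKernel greenKernelDeriv greenWeight
  rw [inner_coord, norm_sq_coord x, norm_sq_coord y]
  generalize (regDistSq ε y x)⁻¹ = P at *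
  generalize invReflDist y x = w at *
  generalize logFactor ε y x = N at *
  linear_combination 1 / (4 * π) * √(1 - (y 0 ^ 2 + y 1 ^ 2)) *
    ((-3 * (1 - (x 0 ^ 2 + x 1 ^ 2)) * (y 0 ^ 2 + y 1 ^ 2) * w ^ 3 * N - w * N
        + 8 * (1 - (x 0 ^ 2 + x 1 ^ 2)) * (y 0 ^ 2 + y 1 ^ 2) * w ^ 3
        + 4 * (x 0 ^ 2 + x 1 ^ 2 - (x 0 * y 0 + x 1 * y 1)) * w * P) * refl_coord
      + (-4 * (1 - (x 0 ^ 2 + x 1 ^ 2)) * w * P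
        - 4 * (1 - (x 0 * y 0 + x 1 * y 1)) * w ^ 3) * reg_coord)

lemma regWidth_sq_le_reflDistSq (hε : 0 ≤ ε) (hε1 : ε ≤ 1 / 4) (hy : ‖y‖ < 1) (hx : ‖x‖ < 1) :
    regWidth ε y ^ 2 ≤ reflDistSq y x := by
  have one_sub_le : 1 - ‖y‖ ≤ 1 - ‖x‖ * ‖y‖ := by nlinarith [norm_nonneg y]
  calc regWidth ε y ^ 2 = ε * (1 - ‖y‖ ^ 2) ^ 2 := by rw [regWidth, mul_pow, sq_sqrt hε]
    _ ≤ 1 / 4 * (2 * (1 - ‖y‖)) ^ 2 := by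
        gcongr
        · exact (one_sub_norm_sq_pos hy).le
        · nlinarith [norm_nonneg y]
    _ = (1 - ‖y‖) ^ 2 := by ring
    _ ≤ (1 - ‖x‖ * ‖y‖) ^ 2 := pow_le_pow_left₀ (by linarith) one_sub_le 2
    _ ≤ reflDistSq y x := sq_one_sub_norm_mul_norm_le_reflDistSq y x

-- The constant `5` in `logFactor` is chosen for this bound.
lemma four_le_logFactor (hε : 0 < ε) (hε1 : ε ≤ 1 / 4) (hy : ‖y‖ < 1) (hx : ‖x‖ < 1) :
    4 ≤ logFactor ε y x := by
  have hrefl := reflDistSq_pos (norm_mul_norm_lt_one hx hy)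
  have reg_le : regDistSq ε y x ≤ 2 * reflDistSq y x := by
    have := mul_pos (one_sub_norm_sq_pos hx) (one_sub_norm_sq_pos hy)
    unfold regDistSq
    linarith [reflDistSq_eq y x, regWidth_sq_le_reflDistSq hε.le hε1 hy hx]
  have log_le := log_le_log (regDistSq_pos hε hy x) reg_le
  rw [log_mul two_ne_zero hrefl.ne'] at log_le
  unfold logFactor
  linarith [log_two_lt_d9]

lemma bubble_regWidth_mul (ε : ℝ) (y x : E2) :
    bubble (regWidth ε y) (x - y) * ((1 - ‖x‖ ^ 2) * greenWeight y x) =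
      1 / (4 * π) * greenWeight y x *
        (4 * (1 - ‖x‖ ^ 2) * regWidth ε y ^ 2 * ((regDistSq ε y x)⁻¹) ^ 2) := by
  rw [bubble, regDistSq, div_eq_mul_inv (regWidth ε y ^ 2), inv_pow]
  field_simp

lemma bubble_mul_le_groundOp_greenKernel (hε : 0 < ε) (hε1 : ε ≤ 1 / 4) (hy : ‖y‖ < 1)
    (hx : ‖x‖ < 1) :
    bubble (regWidth ε y) (x - y) * ((1 - ‖x‖ ^ 2) * greenWeight y x) ≤
      groundOp (greenKernel ε y) x := by
  have hg := greenWeight_pos hx hy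
  have hreg := regDistSq_pos hε hy x
  have hY := one_sub_norm_sq_pos hy
  have hlog : 0 ≤ logFactor ε y x - 4 := sub_nonneg.2 (four_le_logFactor hε hε1 hy hx)
  have hinner : 0 ≤ 1 - inner ℝ x y :=
    sub_nonneg.2 ((real_inner_le_norm x y).trans (norm_mul_norm_lt_one hx hy).le)
  have rest_nonneg : 0 ≤ 1 / (4 * π) * greenWeight y x *
      ((1 - ‖y‖ ^ 2) * invReflDist y x ^ 2 * (logFactor ε y x - 4) +
        4 * invReflDist y x ^ 2 *
          ((1 - inner ℝ x y) * regWidth ε y ^ 2 * (regDistSq ε y x)⁻¹)) := by positivity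
  rw [groundOp_greenKernel hε hy hx, bubble_regWidth_mul]
  linarith

lemma one_sub_inner_le (hy : ‖y‖ ≤ 1) (x : E2) : 1 - inner ℝ x y ≤ 1 - ‖y‖ ^ 2 + ‖x - y‖ := by
  have h := real_inner_le_norm (y - x) y
  rw [inner_sub_left, real_inner_self_eq_norm_sq, norm_sub_rev] at h
  linarith [mul_le_of_le_one_right (norm_nonneg (x - y)) hy]

lemma one_sub_inner_mul_regWidth_sq_div_le (hε : 0 < ε) (hε1 : ε ≤ 1 / 4) (hy : ‖y‖ < 1) (x : E2) :
    (1 - inner ℝ x y) * regWidth ε y ^ 2 * (regDistSq ε y x)⁻¹ ≤ 3 / 2 * (1 - ‖y‖ ^ 2) := by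
  have hreg := regDistSq_pos hε hy x
  have ratio_le : regWidth ε y ^ 2 / regDistSq ε y x ≤ 1 := by
    rw [div_le_one hreg, regDistSq]
    linarith [sq_nonneg ‖x - y‖]
  have norm_mul_ratio_le : ‖x - y‖ * (regWidth ε y ^ 2 / regDistSq ε y x) ≤ regWidth ε y := by
    rw [← mul_div_assoc, div_le_iff₀ hreg, regDistSq]
    nlinarith [two_mul_le_add_sq ‖x - y‖ (regWidth ε y), norm_nonneg (x - y), regWidth_pos hε hy]
  have width_le : regWidth ε y ≤ 1 / 2 * (1 - ‖y‖ ^ 2) := by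
    have : √ε ≤ 1 / 2 := sqrt_le_iff.2 ⟨by norm_num, by linarith⟩
    exact mul_le_mul_of_nonneg_right this (one_sub_norm_sq_pos hy).le
  calc (1 - inner ℝ x y) * regWidth ε y ^ 2 * (regDistSq ε y x)⁻¹
      = (1 - inner ℝ x y) * (regWidth ε y ^ 2 / regDistSq ε y x) := by ring
    _ ≤ (1 - ‖y‖ ^ 2 + ‖x - y‖) * (regWidth ε y ^ 2 / regDistSq ε y x) := by
        gcongr
        exact one_sub_inner_le hy.le x
    _ ≤ 3 / 2 * (1 - ‖y‖ ^ 2) := by nlinarith [one_sub_norm_sq_pos hy]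

lemma greenWeight_cube (hy : ‖y‖ ≤ 1) (x : E2) :
    greenWeight y x ^ 3 = greenWeight y x * ((1 - ‖y‖ ^ 2) * invReflDist y x ^ 2) := by
  have hs : √(1 - ‖y‖ ^ 2) ^ 2 = 1 - ‖y‖ ^ 2 :=
    sq_sqrt (sub_nonneg.2 (pow_le_one₀ (norm_nonneg y) hy))
  unfold greenWeight
  linear_combination √(1 - ‖y‖ ^ 2) * invReflDist y x ^ 3 * hs

lemma groundOp_greenKernel_le (hε : 0 < ε) (hε1 : ε ≤ 1 / 4) (hy : ‖y‖ < 1) (hx : ‖x‖ < 1) :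
    groundOp (greenKernel ε y) x ≤
      bubble (regWidth ε y) (x - y) * ((1 - ‖x‖ ^ 2) * greenWeight y x) +
        1 / (4 * π) * greenWeight y x ^ 3 * (logFactor ε y x + 2) := by
  have hg := greenWeight_pos hx hy
  have remainder_nonneg : 0 ≤ 1 / (4 * π) * greenWeight y x * (4 * invReflDist y x ^ 2) *
      (3 / 2 * (1 - ‖y‖ ^ 2) -
        (1 - inner ℝ x y) * regWidth ε y ^ 2 * (regDistSq ε y x)⁻¹) :=
    mul_nonneg (by positivity)
      (sub_nonneg.2 (one_sub_inner_mul_regWidth_sq_div_le hε hε1 hy x))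
  rw [groundOp_greenKernel hε hy hx, bubble_regWidth_mul, greenWeight_cube hy.le]
  linarith

lemma weight_mul_greenWeight_sq (hy : ‖y‖ < 1) (hx : ‖x‖ < 1) :
    (1 - ‖x‖ ^ 2) * greenWeight y x ^ 2 = 1 - (‖x - y‖ * invReflDist y x) ^ 2 := by
  have hxy := norm_mul_norm_lt_one hx hy
  have hs : √(1 - ‖y‖ ^ 2) ^ 2 = 1 - ‖y‖ ^ 2 := sq_sqrt (one_sub_norm_sq_pos hy).le
  have hinv : invReflDist y x ^ 2 * reflDistSq y x = 1 := by
    rw [invReflDist_sq hxy]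
    exact inv_mul_cancel₀ (reflDistSq_pos hxy).ne'
  rw [reflDistSq_eq] at hinv
  rw [greenWeight, mul_pow, mul_pow, hs]
  linear_combination hinv

lemma weight_mul_greenWeight_sq_le_one (hy : ‖y‖ < 1) (hx : ‖x‖ < 1) :
    (1 - ‖x‖ ^ 2) * greenWeight y x ^ 2 ≤ 1 := by
  rw [weight_mul_greenWeight_sq hy hx]
  exact sub_le_self _ (sq_nonneg _)

lemma weight_mul_greenWeight_mul_greenWeight_le_one (hy : ‖y‖ < 1) (hz : ‖z‖ < 1) (hx : ‖x‖ < 1) :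
    (1 - ‖x‖ ^ 2) * greenWeight y x * greenWeight z x ≤ 1 := by
  nlinarith [weight_mul_greenWeight_sq_le_one hy hx, weight_mul_greenWeight_sq_le_one hz hx,
    mul_nonneg (one_sub_norm_sq_pos hx).le (sq_nonneg (greenWeight y x - greenWeight z x))]

lemma invReflDist_le (hy : ‖y‖ < 1) (hx : ‖x‖ ≤ 1) : invReflDist y x ≤ (1 - ‖y‖)⁻¹ := by
  have hle : 1 - ‖y‖ ≤ 1 - ‖x‖ * ‖y‖ :=
    sub_le_sub_left (mul_le_of_le_one_left (norm_nonneg y) hx) 1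
  exact inv_anti₀ (sub_pos.2 hy) (le_sqrt_of_sq_le
    ((pow_le_pow_left₀ (sub_nonneg.2 hy.le) hle 2).trans
      (sq_one_sub_norm_mul_norm_le_reflDistSq y x)))

lemma one_sub_le_sqrt_weight_mul_greenWeight (hy : ‖y‖ < 1) (hx : ‖x‖ < 1) :
    1 - ‖x - y‖ * (1 - ‖y‖)⁻¹ ≤ √(1 - ‖x‖ ^ 2) * greenWeight y x := by
  have hX := (one_sub_norm_sq_pos hx).le
  set s := ‖x - y‖ * invReflDist y x
  have hs : 0 ≤ s :=
    mul_nonneg (norm_nonneg _) (invReflDist_pos (norm_mul_norm_lt_one hx hy)).le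
  have eq_sqrt : √(1 - ‖x‖ ^ 2) * greenWeight y x = √(1 - s ^ 2) := by
    rw [← weight_mul_greenWeight_sq hy hx, sqrt_mul hX, sqrt_sq (greenWeight_pos hx hy).le]
  calc 1 - ‖x - y‖ * (1 - ‖y‖)⁻¹ ≤ 1 - s :=
        sub_le_sub_left (mul_le_mul_of_nonneg_left (invReflDist_le hy hx.le) (norm_nonneg _)) 1
    _ ≤ √(1 - s ^ 2) := by
        rcases le_total s 1 with h | h
        · exact le_sqrt_of_sq_le (by nlinarith)
        · exact (sub_nonpos.2 h).trans (sqrt_nonneg _)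
    _ = √(1 - ‖x‖ ^ 2) * greenWeight y x := eq_sqrt.symm

end GroundOpGreenKernel

/-! ### Pairings with the approximate Green's function -/

lemma integrableOn_mul_groundOp {f ψ : E2 → ℝ} {r : ℝ} (hr : 1 < r)
    (hf : ContinuousOn f (Metric.ball 0 r)) (hψ : ContDiffOn ℝ 2 ψ (Metric.ball 0 r)) :
    IntegrableOn (fun x => f x * groundOp ψ x) B2 := by
  have hdψ : ∀ i, ContDiffOn ℝ 1 (partialDeriv i ψ) (Metric.ball 0 r) :=
    contDiffOn_partialDeriv (m := 1) (n := 2) (by norm_num) hψ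
  have cψ := hψ.continuousOn
  have cdψ := fun i => (hdψ i).continuousOn
  have cddψ := fun i => continuousOn_partialDeriv (hdψ i) i
  refine integrableOn_B2_of_continuousOn_ball hr ?_
  unfold groundOp
  fun_prop

lemma integrable_bubble_mul_norm {γ : ℝ} (hγ : 0 < γ) :
    Integrable fun x : E2 => bubble γ x * ‖x‖ := by
  refine ((integrable_singularKernel hγ).const_mul (γ / π)).mono'
    ((continuous_bubble hγ).mul continuous_norm).aestronglyMeasurable (.of_forall fun x => ?_)
  rw [norm_of_nonneg (mul_nonneg (bubble_nonneg γ x) (norm_nonneg x))]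
  exact bubble_mul_norm_le hγ x

lemma integral_bubble_mul_norm_le {γ : ℝ} (hγ : 0 < γ) :
    ∫ x : E2, bubble γ x * ‖x‖ ≤ π * γ := by
  calc ∫ x : E2, bubble γ x * ‖x‖ ≤ ∫ x, γ / π * singularKernel γ x :=
        integral_mono (integrable_bubble_mul_norm hγ)
          ((integrable_singularKernel hγ).const_mul _) (bubble_mul_norm_le hγ)
    _ = π * γ := by
        rw [integral_const_mul, integral_singularKernel hγ]
        field_simp

section EvaluationAtPole

variable {u v : E2 → ℝ} {L : NNReal} {M R ε : ℝ} {y : E2}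

lemma bubble_mul_sub_le_mul_groundOp_greenKernel (hv : ∀ x, 0 ≤ v x)
    (hu : ∀ x, u x = √(1 - ‖x‖ ^ 2) * v x) (hL : LipschitzWith L u) (hM : ∀ x, u x ≤ M)
    (hR : R < 1) (hε : 0 < ε) (hε1 : ε ≤ 1 / 4) (hy : ‖y‖ ≤ R) {x : E2} (hx : ‖x‖ < 1) :
    bubble (regWidth ε y) (x - y) * (u y - (L + M * (1 - R)⁻¹) * ‖x - y‖) ≤
      v x * groundOp (greenKernel ε y) x := by
  have hy1 : ‖y‖ < 1 := hy.trans_lt hR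
  have hux : 0 ≤ u x := by
    rw [hu]
    exact mul_nonneg (sqrt_nonneg _) (hv x)
  have lipschitz : u y - u x ≤ L * ‖x - y‖ := by
    rw [← dist_eq_norm, dist_comm]
    exact (le_abs_self _).trans (hL.dist_le_mul y x)
  calc bubble (regWidth ε y) (x - y) * (u y - (L + M * (1 - R)⁻¹) * ‖x - y‖)
      ≤ bubble (regWidth ε y) (x - y) * (u x * (√(1 - ‖x‖ ^ 2) * greenWeight y x)) := by
        refine mul_le_mul_of_nonneg_left ?_ (bubble_nonneg _ _)
        have hyR : (1 - ‖y‖)⁻¹ ≤ (1 - R)⁻¹ := inv_anti₀ (sub_pos.2 hR) (by linarith)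
        have error_le : u x * (‖x - y‖ * (1 - ‖y‖)⁻¹) ≤ M * (‖x - y‖ * (1 - R)⁻¹) :=
          mul_le_mul (hM x) (mul_le_mul_of_nonneg_left hyR (norm_nonneg _))
            (mul_nonneg (norm_nonneg _) (inv_nonneg.2 (sub_nonneg.2 hy1.le)))
            (hux.trans (hM x))
        have := mul_le_mul_of_nonneg_left (one_sub_le_sqrt_weight_mul_greenWeight hy1 hx) hux
        linarith
    _ = v x * (bubble (regWidth ε y) (x - y) * ((1 - ‖x‖ ^ 2) * greenWeight y x)) := by
        rw [hu]
        linear_combination (v x * bubble (regWidth ε y) (x - y) * greenWeight y x) *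
          sq_sqrt (one_sub_norm_sq_pos hx).le
    _ ≤ v x * groundOp (greenKernel ε y) x :=
        mul_le_mul_of_nonneg_left (bubble_mul_le_groundOp_greenKernel hε hε1 hy1 hx) (hv x)

lemma bubble_mul_sub_le_indicator (hv : ∀ x, 0 ≤ v x) (hu : ∀ x, u x = √(1 - ‖x‖ ^ 2) * v x)
    (hL : LipschitzWith L u) (hM : ∀ x, u x ≤ M) (hR : R < 1) (hε : 0 < ε) (hε1 : ε ≤ 1 / 4)
    (hy : ‖y‖ ≤ R) (x : E2) :
    bubble (regWidth ε y) (x - y) * (u y - (L + M * (1 - R)⁻¹) * ‖x - y‖) ≤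
      B2.indicator (fun x => v x * groundOp (greenKernel ε y) x) x := by
  by_cases hx : x ∈ B2
  · rw [Set.indicator_of_mem hx]
    exact bubble_mul_sub_le_mul_groundOp_greenKernel hv hu hL hM hR hε hε1 hy (mem_B2.1 hx)
  · rw [Set.indicator_of_notMem hx]
    have hux : u x = 0 := by
      rw [hu, sqrt_eq_zero_of_nonpos, zero_mul]
      exact sub_nonpos.2 (one_le_pow₀ (not_lt.1 (mt mem_B2.2 hx)))
    have lipschitz := (le_abs_self _).trans (hL.dist_le_mul y x)
    rw [hux, dist_comm, dist_eq_norm] at lipschitz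
    have error_nonneg : 0 ≤ M * (1 - R)⁻¹ * ‖x - y‖ :=
      mul_nonneg (mul_nonneg (hux.ge.trans (hM x)) (inv_nonneg.2 (sub_nonneg.2 hR.le)))
        (norm_nonneg _)
    refine mul_nonpos_of_nonneg_of_nonpos (bubble_nonneg _ _) ?_
    linarith [add_mul (L : ℝ) (M * (1 - R)⁻¹) ‖x - y‖]

-- Testing with the Green's function of pole `y` almost evaluates `u = √(1 - |x|²) v` at `y`.
lemma sub_le_groundForm_greenKernel (hvd : ContDiff ℝ 1 v) (hv : ∀ x, 0 ≤ v x)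
    (hu : ∀ x, u x = √(1 - ‖x‖ ^ 2) * v x) (hL : LipschitzWith L u) (hM : ∀ x, u x ≤ M)
    (hR : R < 1) (hε : 0 < ε) (hε1 : ε ≤ 1 / 4) (hy : ‖y‖ ≤ R) :
    u y - (L + M * (1 - R)⁻¹) * (π * regWidth ε y) ≤ groundForm v (greenKernel ε y) := by
  have hy1 : ‖y‖ < 1 := hy.trans_lt hR
  have hγ := regWidth_pos hε hy1
  obtain ⟨r, hr, hry⟩ := exists_one_lt_mul_norm_lt_one hy1
  have hG := contDiffOn_greenKernel (n := 2) hε hry hr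
  have hM0 : 0 ≤ M := le_trans (by simpa [hu 0] using hv 0) (hM 0)
  have hΛ : 0 ≤ L + M * (1 - R)⁻¹ :=
    add_nonneg L.coe_nonneg (mul_nonneg hM0 (inv_nonneg.2 (sub_nonneg.2 hR.le)))
  have int_bubble := ((integrable_bubble hγ).comp_sub_right y).mul_const (u y)
  have int_moment :=
    ((integrable_bubble_mul_norm hγ).comp_sub_right y).const_mul (L + M * (1 - R)⁻¹)
  calc u y - (L + M * (1 - R)⁻¹) * (π * regWidth ε y)
      ≤ u y - (L + M * (1 - R)⁻¹) * ∫ x : E2, bubble (regWidth ε y) x * ‖x‖ :=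
        sub_le_sub_left (mul_le_mul_of_nonneg_left (integral_bubble_mul_norm_le hγ) hΛ) _
    _ = ∫ x, (bubble (regWidth ε y) (x - y) * u y -
          (L + M * (1 - R)⁻¹) * (bubble (regWidth ε y) (x - y) * ‖x - y‖)) := by
        rw [integral_sub int_bubble int_moment, integral_mul_const, integral_const_mul,
          integral_sub_right_eq_self (bubble (regWidth ε y)) y,
          integral_sub_right_eq_self (fun x => bubble (regWidth ε y) x * ‖x‖) y,
          integral_bubble hγ, one_mul]
    _ ≤ ∫ x, B2.indicator (fun x => v x * groundOp (greenKernel ε y) x) x :=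
        integral_mono (int_bubble.sub int_moment)
          ((integrableOn_mul_groundOp hr hvd.continuous.continuousOn hG).integrable_indicator
            measurableSet_B2) fun x =>
          (bubble_mul_sub_le_indicator hv hu hL hM hR hε hε1 hy x).trans' (by linarith)
    _ = groundForm v (greenKernel ε y) := by
        rw [integral_indicator measurableSet_B2,
          groundForm_eq_integral_mul_groundOp hr hvd.contDiffOn hG]

end EvaluationAtPole

lemma seven_add_log_pow_four_le {t : ℝ} (ht : 1 ≤ t) :
    (7 + log t) ^ 4 ≤ 384 * exp (7 / 2) * √t := by
  have taylor := pow_div_factorial_le_exp ((7 + log t) / 2) (by linarith [log_nonneg ht]) 4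
  rw [add_div, exp_add, exp_half (log t), exp_log (by linarith), div_le_iff₀ (by positivity)]
    at taylor
  norm_num [Nat.factorial] at taylor ⊢
  linarith

lemma mul_pow_three_le_pow_four_add_pow_four {a b : ℝ} (ha : 0 ≤ a) (hb : 0 ≤ b) :
    a * b ^ 3 ≤ a ^ 4 + b ^ 4 := by
  rcases le_total a b with h | h
  · calc a * b ^ 3 ≤ b * b ^ 3 := by gcongr
      _ ≤ a ^ 4 + b ^ 4 := by linarith [pow_nonneg ha 4]
  · calc a * b ^ 3 ≤ a * a ^ 3 := by gcongr
      _ ≤ a ^ 4 + b ^ 4 := by linarith [pow_nonneg hb 4]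

lemma bubble_le_of_le_norm {η : ℝ} (hη : 0 < η) {x : E2} (hx : η ≤ ‖x‖) (γ : ℝ) :
    bubble γ x ≤ 1 / π * (1 / (4 * η ^ 2)) := by
  have hsq : η ^ 2 ≤ ‖x‖ ^ 2 := pow_le_pow_left₀ hη.le hx 2
  have : 0 < ‖x‖ := hη.trans_le hx
  unfold bubble
  gcongr 1 / π * ?_
  rw [div_le_div_iff₀ (by positivity) (by positivity)]
  nlinarith [sq_nonneg (‖x‖ ^ 2 - γ ^ 2), sq_nonneg γ]

section EnergyOfGreenKernels

variable {ε η δ : ℝ} {x y z : E2}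

lemma norm_sub_sq_le_regDistSq (ε : ℝ) (y x : E2) : ‖x - y‖ ^ 2 ≤ regDistSq ε y x :=
  le_add_of_nonneg_right (sq_nonneg _)

lemma logFactor_add_two_pow_four_le (hε : 0 < ε) (hε1 : ε ≤ 1 / 4) (hy : ‖y‖ < 1) (hx : ‖x‖ < 1)
    (hxy : x ≠ y) :
    (logFactor ε y x + 2) ^ 4 ≤ 384 * exp (7 / 2) * (invReflDist y x * ‖x - y‖)⁻¹ := by
  have hrefl := reflDistSq_pos (norm_mul_norm_lt_one hx hy)
  have hr : 0 < ‖x - y‖ := norm_pos_iff.2 (sub_ne_zero.2 hxy)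
  have sq_le_refl : ‖x - y‖ ^ 2 ≤ reflDistSq y x := by
    rw [reflDistSq_eq]
    linarith [mul_pos (one_sub_norm_sq_pos hx) (one_sub_norm_sq_pos hy)]
  have factor_le : logFactor ε y x + 2 ≤ 7 + log (reflDistSq y x / ‖x - y‖ ^ 2) := by
    have := log_le_log (by positivity) (norm_sub_sq_le_regDistSq ε y x)
    rw [log_div hrefl.ne' (by positivity), logFactor]
    linarith
  calc (logFactor ε y x + 2) ^ 4 ≤ (7 + log (reflDistSq y x / ‖x - y‖ ^ 2)) ^ 4 :=
        pow_le_pow_left₀ (by linarith [four_le_logFactor hε hε1 hy hx]) factor_le 4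
    _ ≤ 384 * exp (7 / 2) * √(reflDistSq y x / ‖x - y‖ ^ 2) :=
        seven_add_log_pow_four_le ((one_le_div (by positivity)).2 sq_le_refl)
    _ = 384 * exp (7 / 2) * (invReflDist y x * ‖x - y‖)⁻¹ := by
        rw [sqrt_div hrefl.le, sqrt_sq hr.le, invReflDist, mul_inv, inv_inv,
          div_eq_mul_inv (√(reflDistSq y x))]

lemma one_sub_norm_sq_mul_invReflDist_le_two (hy : ‖y‖ < 1) (hx : ‖x‖ ≤ 1) :
    (1 - ‖y‖ ^ 2) * invReflDist y x ≤ 2 := by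
  have hY : 0 < 1 - ‖y‖ := sub_pos.2 hy
  calc (1 - ‖y‖ ^ 2) * invReflDist y x ≤ (1 - ‖y‖ ^ 2) * (1 - ‖y‖)⁻¹ :=
        mul_le_mul_of_nonneg_left (invReflDist_le hy hx) (one_sub_norm_sq_pos hy).le
    _ = 1 + ‖y‖ := by
        field_simp
        ring
    _ ≤ 2 := by linarith

lemma invReflDist_sq_le (hy : ‖y‖ < 1) (hx : ‖x‖ < 1) :
    invReflDist y x ^ 2 ≤ 2 / (((1 - ‖y‖ ^ 2) / 2) ^ 2 + ‖x - y‖ ^ 2) := by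
  have hY := one_sub_norm_sq_pos hy
  have hinv := invReflDist_pos (norm_mul_norm_lt_one hx hy)
  have boundary_le : ((1 - ‖y‖ ^ 2) / 2 * invReflDist y x) ^ 2 ≤ 1 :=
    pow_le_one₀ (by positivity) (by linarith [one_sub_norm_sq_mul_invReflDist_le_two hy hx.le])
  have pole_le : (‖x - y‖ * invReflDist y x) ^ 2 ≤ 1 := by
    have := mul_nonneg (one_sub_norm_sq_pos hx).le (sq_nonneg (greenWeight y x))
    linarith [weight_mul_greenWeight_sq hy hx]
  rw [le_div_iff₀ (by positivity)]
  linarith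

lemma greenWeight_mul_logFactor_pow_four_le (hε : 0 < ε) (hε1 : ε ≤ 1 / 4) (hy : ‖y‖ < 1)
    (hx : ‖x‖ < 1) (hxy : x ≠ y) :
    (greenWeight y x * (logFactor ε y x + 2)) ^ 4 ≤
      3072 * exp (7 / 2) * singularKernel ((1 - ‖y‖ ^ 2) / 2) (x - y) := by
  have hY := one_sub_norm_sq_pos hy
  have hr : 0 < ‖x - y‖ := norm_pos_iff.2 (sub_ne_zero.2 hxy)
  have hinv := invReflDist_pos (norm_mul_norm_lt_one hx hy)
  have weight_pow : greenWeight y x ^ 4 = (1 - ‖y‖ ^ 2) ^ 2 * invReflDist y x ^ 4 := by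
    rw [greenWeight, mul_pow, show √(1 - ‖y‖ ^ 2) ^ 4 = (√(1 - ‖y‖ ^ 2) ^ 2) ^ 2 by ring,
      sq_sqrt hY.le]
  rw [mul_pow, weight_pow]
  calc (1 - ‖y‖ ^ 2) ^ 2 * invReflDist y x ^ 4 * (logFactor ε y x + 2) ^ 4
      ≤ (1 - ‖y‖ ^ 2) ^ 2 * invReflDist y x ^ 4 *
          (384 * exp (7 / 2) * (invReflDist y x * ‖x - y‖)⁻¹) := by
        gcongr
        exact logFactor_add_two_pow_four_le hε hε1 hy hx hxy
    _ = 384 * exp (7 / 2) * ((1 - ‖y‖ ^ 2) / ‖x - y‖) * ((1 - ‖y‖ ^ 2) * invReflDist y x) *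
          invReflDist y x ^ 2 := by field_simp
    _ ≤ 384 * exp (7 / 2) * ((1 - ‖y‖ ^ 2) / ‖x - y‖) * 2 *
          (2 / (((1 - ‖y‖ ^ 2) / 2) ^ 2 + ‖x - y‖ ^ 2)) := by
        gcongr
        · exact one_sub_norm_sq_mul_invReflDist_le_two hy hx.le
        · exact invReflDist_sq_le hy hx
    _ = 3072 * exp (7 / 2) * singularKernel ((1 - ‖y‖ ^ 2) / 2) (x - y) := by
        rw [singularKernel, ← div_div ((1 - ‖y‖ ^ 2) / 2)]
        ring

lemma log_reflDistSq_le (hy : ‖y‖ < 1) (hx : ‖x‖ < 1) : log (reflDistSq y x) ≤ 2 * log 2 := by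
  have hxy := norm_mul_norm_lt_one hx hy
  have refl_le : reflDistSq y x ≤ 2 ^ 2 := by
    have := neg_le_of_abs_le (abs_real_inner_le_norm x y)
    unfold reflDistSq
    nlinarith [mul_nonneg (norm_nonneg x) (norm_nonneg y)]
  simpa using log_le_log (reflDistSq_pos hxy) refl_le

lemma logFactor_le_of_sq_le_regDistSq (hy : ‖y‖ < 1) (hx : ‖x‖ < 1) (hη : 0 < η)
    (h : η ^ 2 ≤ regDistSq ε y x) : logFactor ε y x ≤ 7 - 2 * log η := by
  have log_le := log_le_log (by positivity) h
  rw [log_pow, Nat.cast_two] at log_le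
  unfold logFactor
  linarith [log_reflDistSq_le hy hx, log_two_lt_d9]

lemma logFactor_le_add_div (hy : ‖y‖ < 1) (hx : ‖x‖ < 1) (hxy : x ≠ y) (hη : 0 < η) :
    logFactor ε y x ≤ 7 - 2 * log η + 2 * (η / ‖x - y‖) := by
  have hr : 0 < ‖x - y‖ := norm_pos_iff.2 (sub_ne_zero.2 hxy)
  have log_ratio := log_le_sub_one_of_pos (div_pos hη hr)
  rw [log_div hη.ne' hr.ne'] at log_ratio
  linarith [logFactor_le_of_sq_le_regDistSq hy hx hr (norm_sub_sq_le_regDistSq ε y x)]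

-- Where the logarithm with pole `z` is large, `x` is close to `z`, hence far from `y`.
lemma half_max_le_norm_sub (hδ : 0 < δ) (hδz : δ ≤ regWidth ε z)
    (h : regDistSq ε z x < (max ‖y - z‖ δ / 2) ^ 2) : max ‖y - z‖ δ / 2 ≤ ‖x - y‖ := by
  have hm : 0 < max ‖y - z‖ δ := lt_max_of_lt_right hδ
  have hxz : ‖x - z‖ < max ‖y - z‖ δ / 2 :=
    lt_of_pow_lt_pow_left₀ 2 (by positivity) ((norm_sub_sq_le_regDistSq ε z x).trans_lt h)
  have hδyz : δ ≤ ‖y - z‖ := by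
    by_contra! hlt
    rw [max_eq_right hlt.le, regDistSq] at h
    nlinarith [sq_nonneg ‖x - z‖, pow_le_pow_left₀ hδ.le hδz 2]
  rw [max_eq_left hδyz] at hxz ⊢
  linarith [norm_sub_le_norm_sub_add_norm_sub y x z, norm_sub_rev x y]

lemma bubble_mul_logFactor_le (hz : ‖z‖ < 1) (hx : ‖x‖ < 1) (hxz : x ≠ z) (hδ : 0 < δ)
    (hδz : δ ≤ regWidth ε z) :
    bubble (regWidth ε y) (x - y) * logFactor ε z x ≤
      bubble (regWidth ε y) (x - y) * (9 - 2 * log (max ‖y - z‖ δ)) +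
        1 / π * singularKernel (max ‖y - z‖ δ / 2) (x - z) := by
  have hm : 0 < max ‖y - z‖ δ := lt_max_of_lt_right hδ
  have hK := bubble_nonneg (regWidth ε y) (x - y)
  have far_le := half_max_le_norm_sub (y := y) (x := x) hδ hδz
  have log_half : log (max ‖y - z‖ δ / 2) = log (max ‖y - z‖ δ) - log 2 :=
    log_div hm.ne' two_ne_zero
  set η := max ‖y - z‖ δ / 2
  have hη : 0 < η := half_pos hm
  by_cases hc : η ^ 2 ≤ regDistSq ε z x
  · have factor_le : logFactor ε z x ≤ 9 - 2 * log (max ‖y - z‖ δ) := by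
      linarith [logFactor_le_of_sq_le_regDistSq hz hx hη hc, log_two_lt_d9]
    have : 0 ≤ 1 / π * singularKernel η (x - z) :=
      mul_nonneg (by positivity) (singularKernel_nonneg hη.le _)
    linarith [mul_le_mul_of_nonneg_left factor_le hK]
  · have hxzη : ‖x - z‖ ^ 2 ≤ η ^ 2 := (norm_sub_sq_le_regDistSq ε z x).trans (not_le.1 hc).le
    have hr : 0 < ‖x - z‖ := norm_pos_iff.2 (sub_ne_zero.2 hxz)
    have factor_le : logFactor ε z x ≤ 9 - 2 * log (max ‖y - z‖ δ) + 2 * (η / ‖x - z‖) := by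
      linarith [logFactor_le_add_div (ε := ε) hz hx hxz hη, log_two_lt_d9]
    have singular_le : bubble (regWidth ε y) (x - y) * (2 * (η / ‖x - z‖)) ≤
        1 / π * singularKernel η (x - z) := by
      calc bubble (regWidth ε y) (x - y) * (2 * (η / ‖x - z‖))
          ≤ 1 / π * (1 / (4 * η ^ 2)) * (2 * (η / ‖x - z‖)) := by
            gcongr
            exact bubble_le_of_le_norm hη (far_le (not_le.1 hc)) _
        _ = 1 / π * (η / (‖x - z‖ * (2 * η ^ 2))) := by ring
        _ ≤ 1 / π * singularKernel η (x - z) := by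
            unfold singularKernel
            gcongr
            linarith
    linarith [mul_le_mul_of_nonneg_left factor_le hK]

/-- An integrable majorant of the energy density of the kernels with poles `y` and `z`; the
parameter `m` stands for the truncated distance between the poles. -/
def energyMajorant (ε m : ℝ) (y z x : E2) : ℝ :=
  1 / (4 * π) * (bubble (regWidth ε y) (x - y) * (9 - 2 * log m) +
      1 / π * singularKernel (m / 2) (x - z)) +
    192 * exp (7 / 2) / π ^ 2 * (singularKernel ((1 - ‖z‖ ^ 2) / 2) (x - z) +
      singularKernel ((1 - ‖y‖ ^ 2) / 2) (x - y))

lemma greenKernel_nonneg (hε : 0 < ε) (hε1 : ε ≤ 1 / 4) (hy : ‖y‖ < 1) (hx : ‖x‖ < 1) :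
    0 ≤ greenKernel ε y x := by
  have := greenWeight_pos hx hy
  have := four_le_logFactor hε hε1 hy hx
  unfold greenKernel
  positivity

lemma greenKernel_mul_bubble_mul_le (hε : 0 < ε) (hε1 : ε ≤ 1 / 4) (hy : ‖y‖ < 1) (hz : ‖z‖ < 1)
    (hx : ‖x‖ < 1) (γ : ℝ) :
    greenKernel ε z x * (bubble γ (x - y) * ((1 - ‖x‖ ^ 2) * greenWeight y x)) ≤
      1 / (4 * π) * (bubble γ (x - y) * logFactor ε z x) := by
  have hl := four_le_logFactor hε hε1 hz hx
  have hK := bubble_nonneg γ (x - y)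
  calc _ = 1 / (4 * π) * (bubble γ (x - y) * logFactor ε z x) *
        ((1 - ‖x‖ ^ 2) * greenWeight y x * greenWeight z x) := by
        unfold greenKernel
        ring
    _ ≤ _ := mul_le_of_le_one_right (by positivity)
        (weight_mul_greenWeight_mul_greenWeight_le_one hy hz hx)

lemma greenKernel_mul_greenWeight_pow_three_le (hε : 0 < ε) (hε1 : ε ≤ 1 / 4) (hy : ‖y‖ < 1)
    (hz : ‖z‖ < 1) (hx : ‖x‖ < 1) :
    greenKernel ε z x * (1 / (4 * π) * greenWeight y x ^ 3 * (logFactor ε y x + 2)) ≤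
      1 / (16 * π ^ 2) * ((greenWeight z x * (logFactor ε z x + 2)) ^ 4 +
        (greenWeight y x * (logFactor ε y x + 2)) ^ 4) := by
  have hlz := four_le_logFactor hε hε1 hz hx
  have hly := four_le_logFactor hε hε1 hy hx
  have hgz := greenWeight_pos hx hz
  have hgy := greenWeight_pos hx hy
  calc _ = 1 / (16 * π ^ 2) * ((greenWeight z x * logFactor ε z x) *
        (greenWeight y x ^ 3 * (logFactor ε y x + 2))) := by
        unfold greenKernel
        ring
    _ ≤ 1 / (16 * π ^ 2) * ((greenWeight z x * (logFactor ε z x + 2)) *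
        (greenWeight y x ^ 3 * (logFactor ε y x + 2) ^ 3)) := by
        gcongr
        · linarith
        · exact le_self_pow₀ (by linarith) (by norm_num)
    _ ≤ _ := by
        rw [← mul_pow]
        gcongr
        exact mul_pow_three_le_pow_four_add_pow_four (by positivity) (by positivity)

lemma greenKernel_mul_groundOp_greenKernel_le (hε : 0 < ε) (hε1 : ε ≤ 1 / 4) (hy : ‖y‖ < 1)
    (hz : ‖z‖ < 1) (hδ : 0 < δ) (hδz : δ ≤ regWidth ε z) (hx : ‖x‖ < 1) (hxy : x ≠ y)
    (hxz : x ≠ z) :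
    greenKernel ε z x * groundOp (greenKernel ε y) x ≤
      energyMajorant ε (max ‖y - z‖ δ) y z x := by
  calc greenKernel ε z x * groundOp (greenKernel ε y) x
      ≤ greenKernel ε z x * (bubble (regWidth ε y) (x - y) * ((1 - ‖x‖ ^ 2) * greenWeight y x) +
          1 / (4 * π) * greenWeight y x ^ 3 * (logFactor ε y x + 2)) :=
        mul_le_mul_of_nonneg_left (groundOp_greenKernel_le hε hε1 hy hx)
          (greenKernel_nonneg hε hε1 hz hx)
    _ ≤ 1 / (4 * π) * (bubble (regWidth ε y) (x - y) * logFactor ε z x) +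
          1 / (16 * π ^ 2) * ((greenWeight z x * (logFactor ε z x + 2)) ^ 4 +
            (greenWeight y x * (logFactor ε y x + 2)) ^ 4) := by
        rw [mul_add]
        exact add_le_add (greenKernel_mul_bubble_mul_le hε hε1 hy hz hx _)
          (greenKernel_mul_greenWeight_pow_three_le hε hε1 hy hz hx)
    _ ≤ 1 / (4 * π) * (bubble (regWidth ε y) (x - y) * (9 - 2 * log (max ‖y - z‖ δ)) +
            1 / π * singularKernel (max ‖y - z‖ δ / 2) (x - z)) +
          1 / (16 * π ^ 2) *
            (3072 * exp (7 / 2) * singularKernel ((1 - ‖z‖ ^ 2) / 2) (x - z) +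
              3072 * exp (7 / 2) * singularKernel ((1 - ‖y‖ ^ 2) / 2) (x - y)) := by
        gcongr
        · exact bubble_mul_logFactor_le hz hx hxz hδ hδz
        · exact greenWeight_mul_logFactor_pow_four_le hε hε1 hz hx hxz
        · exact greenWeight_mul_logFactor_pow_four_le hε hε1 hy hx hxy
    _ = energyMajorant ε (max ‖y - z‖ δ) y z x := by
        unfold energyMajorant
        ring

section EnergyMajorant

variable {m : ℝ}

lemma energyMajorant_nonneg (hm : 0 < m) (hm2 : m ≤ 2) (hy : ‖y‖ ≤ 1) (hz : ‖z‖ ≤ 1) (x : E2) :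
    0 ≤ energyMajorant ε m y z x := by
  have hlog : 0 ≤ 9 - 2 * log m := by linarith [log_le_log hm hm2, log_two_lt_d9]
  have weight_nonneg : ∀ w : E2, ‖w‖ ≤ 1 → 0 ≤ (1 - ‖w‖ ^ 2) / 2 := fun w hw =>
    div_nonneg (sub_nonneg.2 (pow_le_one₀ (norm_nonneg w) hw)) zero_le_two
  have := bubble_nonneg (regWidth ε y) (x - y)
  have := singularKernel_nonneg (half_pos hm).le (x - z)
  have := singularKernel_nonneg (weight_nonneg z hz) (x - z)
  have := singularKernel_nonneg (weight_nonneg y hy) (x - y)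
  unfold energyMajorant
  positivity

lemma integrable_energyMajorant (hε : 0 < ε) (hm : 0 < m) (hy : ‖y‖ < 1) (hz : ‖z‖ < 1) :
    Integrable (energyMajorant ε m y z) :=
  (((((integrable_bubble (regWidth_pos hε hy)).comp_sub_right y).mul_const _).add
    (((integrable_singularKernel (half_pos hm)).comp_sub_right z).const_mul _)).const_mul _).add
    ((((integrable_singularKernel (half_pos (one_sub_norm_sq_pos hz))).comp_sub_right z).add
      ((integrable_singularKernel (half_pos (one_sub_norm_sq_pos hy))).comp_sub_right y)).const_mul
        _)

lemma integral_energyMajorant (hε : 0 < ε) (hm : 0 < m) (hy : ‖y‖ < 1) (hz : ‖z‖ < 1) :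
    ∫ x, energyMajorant ε m y z x =
      -(1 / (2 * π)) * log m + (9 / (4 * π) + 1 / 4 + 384 * exp (7 / 2)) := by
  have hγ := regWidth_pos hε hy
  have hm' := half_pos hm
  have hby := half_pos (one_sub_norm_sq_pos hy)
  have hbz := half_pos (one_sub_norm_sq_pos hz)
  have int_bubble := ((integrable_bubble hγ).comp_sub_right y).mul_const (9 - 2 * log m)
  have int_near := ((integrable_singularKernel hm').comp_sub_right z).const_mul (1 / π)
  have int_z := (integrable_singularKernel hbz).comp_sub_right z
  have int_y := (integrable_singularKernel hby).comp_sub_right y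
  have int_main : Integrable fun x => bubble (regWidth ε y) (x - y) * (9 - 2 * log m) +
      1 / π * singularKernel (m / 2) (x - z) := int_bubble.add int_near
  have int_tail : Integrable fun x => singularKernel ((1 - ‖z‖ ^ 2) / 2) (x - z) +
      singularKernel ((1 - ‖y‖ ^ 2) / 2) (x - y) := int_z.add int_y
  calc ∫ x, energyMajorant ε m y z x
      = 1 / (4 * π) * (1 * (9 - 2 * log m) + 1 / π * π ^ 2) +
          192 * exp (7 / 2) / π ^ 2 * (π ^ 2 + π ^ 2) := by
        unfold energyMajorant
        rw [integral_add (int_main.const_mul _) (int_tail.const_mul _),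
          integral_const_mul, integral_const_mul, integral_add int_bubble int_near,
          integral_add int_z int_y, integral_mul_const, integral_const_mul,
          integral_sub_right_eq_self (bubble (regWidth ε y)) y,
          integral_sub_right_eq_self (singularKernel (m / 2)) z,
          integral_sub_right_eq_self (singularKernel ((1 - ‖z‖ ^ 2) / 2)) z,
          integral_sub_right_eq_self (singularKernel ((1 - ‖y‖ ^ 2) / 2)) y,
          integral_bubble hγ, integral_singularKernel hm', integral_singularKernel hbz,
          integral_singularKernel hby]
    _ = -(1 / (2 * π)) * log m + (9 / (4 * π) + 1 / 4 + 384 * exp (7 / 2)) := by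
        field_simp
        ring

end EnergyMajorant

lemma groundForm_greenKernel_greenKernel_le (hε : 0 < ε) (hε1 : ε ≤ 1 / 4) (hy : ‖y‖ < 1)
    (hz : ‖z‖ < 1) (hδ : 0 < δ) (hδz : δ ≤ regWidth ε z) :
    groundForm (greenKernel ε z) (greenKernel ε y) ≤
      -(1 / (2 * π)) * log (max ‖y - z‖ δ) + (2 + 384 * exp (7 / 2)) := by
  obtain ⟨r, hr, hry, hrz⟩ : ∃ r : ℝ, 1 < r ∧ r * ‖y‖ < 1 ∧ r * ‖z‖ < 1 := by
    obtain ⟨r₁, hr₁, hr₁y⟩ := exists_one_lt_mul_norm_lt_one hy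
    obtain ⟨r₂, hr₂, hr₂z⟩ := exists_one_lt_mul_norm_lt_one hz
    exact ⟨min r₁ r₂, lt_min hr₁ hr₂,
      (mul_le_mul_of_nonneg_right (min_le_left _ _) (norm_nonneg y)).trans_lt hr₁y,
      (mul_le_mul_of_nonneg_right (min_le_right _ _) (norm_nonneg z)).trans_lt hr₂z⟩
  have hGy := contDiffOn_greenKernel (n := 2) hε hry hr
  have hGz := contDiffOn_greenKernel (n := 1) hε hrz hr
  have hm : 0 < max ‖y - z‖ δ := lt_max_of_lt_right hδ
  have hm2 : max ‖y - z‖ δ ≤ 2 := by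
    have hsqrt : √ε ≤ 1 := sqrt_le_iff.2 ⟨zero_le_one, by linarith⟩
    have hwidth : regWidth ε z ≤ 1 :=
      mul_le_one₀ hsqrt (one_sub_norm_sq_pos hz).le (sub_le_self 1 (sq_nonneg _))
    exact max_le (by linarith [norm_sub_le y z]) (by linarith)
  have indicator_le : ∀ᵐ x, B2.indicator
      (fun x => greenKernel ε z x * groundOp (greenKernel ε y) x) x ≤
        energyMajorant ε (max ‖y - z‖ δ) y z x := by
    filter_upwards [Measure.ae_ne volume y, Measure.ae_ne volume z] with x hxy hxz
    by_cases hx : x ∈ B2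
    · rw [Set.indicator_of_mem hx]
      exact greenKernel_mul_groundOp_greenKernel_le hε hε1 hy hz hδ hδz (mem_B2.1 hx) hxy hxz
    · rw [Set.indicator_of_notMem hx]
      exact energyMajorant_nonneg hm hm2 hy.le hz.le x
  have hπ : 9 / (4 * π) ≤ 1 := (div_le_one (by positivity)).2 (by linarith [pi_gt_three])
  calc groundForm (greenKernel ε z) (greenKernel ε y)
      = ∫ x, B2.indicator (fun x => greenKernel ε z x * groundOp (greenKernel ε y) x) x := by
        rw [integral_indicator measurableSet_B2, groundForm_eq_integral_mul_groundOp hr hGz hGy]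
    _ ≤ ∫ x, energyMajorant ε (max ‖y - z‖ δ) y z x :=
        integral_mono_ae ((integrableOn_mul_groundOp hr hGz.continuousOn hGy).integrable_indicator
          measurableSet_B2) (integrable_energyMajorant hε hm hy hz) indicator_le
    _ ≤ -(1 / (2 * π)) * log (max ‖y - z‖ δ) + (2 + 384 * exp (7 / 2)) := by
        rw [integral_energyMajorant hε hm hy hz]
        linarith

end EnergyOfGreenKernels

/-! ### Duality -/

section Young

variable {X Y F : Type*} [MeasurableSpace X] [MeasurableSpace Y] [NormedAddCommGroup F]
  [InnerProductSpace ℝ F] [CompleteSpace F] {μ : Measure X} {ν : Measure Y} [SFinite ν]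

lemma two_mul_inner_le_inner_self_add {F : Type*} [SeminormedAddCommGroup F] [InnerProductSpace ℝ F]
    (a b : F) (t : ℝ) : 2 * t * inner ℝ a b ≤ inner ℝ a a + t ^ 2 * inner ℝ b b := by
  have := real_inner_self_nonneg (x := a - t • b)
  rw [inner_sub_sub_self, real_inner_smul_right, real_inner_smul_left, real_inner_smul_left,
    real_inner_smul_right, real_inner_comm a b] at this
  linarith

lemma integral_prod_inner {b : Y → F} (hb : Integrable b ν) :
    ∫ q : Y × Y, inner ℝ (b q.1) (b q.2) ∂(ν.prod ν) = inner ℝ (∫ y, b y ∂ν) (∫ y, b y ∂ν) :=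
  integral_prod_bilin (innerSL ℝ) hb hb

-- Young's inequality for `a x` and the average `∫ b x y dν(y)`, integrated over `x`.
lemma two_mul_integral_integral_inner_le [SFinite μ] {a : X → F} {b : X → Y → F}
    (ha : Integrable (fun x => inner ℝ (a x) (a x)) μ) (hb : ∀ᵐ x ∂μ, Integrable (b x) ν)
    (hab : Integrable (fun p : X × Y => inner ℝ (a p.1) (b p.1 p.2)) (μ.prod ν))
    (hbb : Integrable (fun p : X × Y × Y => inner ℝ (b p.1 p.2.1) (b p.1 p.2.2))
      (μ.prod (ν.prod ν))) (t : ℝ) :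
    2 * t * ∫ y, ∫ x, inner ℝ (a x) (b x y) ∂μ ∂ν ≤
      (∫ x, inner ℝ (a x) (a x) ∂μ) +
        t ^ 2 * ∫ q : Y × Y, ∫ x, inner ℝ (b x q.1) (b x q.2) ∂μ ∂(ν.prod ν) := by
  have swap_ab : ∫ y, ∫ x, inner ℝ (a x) (b x y) ∂μ ∂ν =
      ∫ x, ∫ y, inner ℝ (a x) (b x y) ∂ν ∂μ :=
    (integral_integral_swap (f := fun x y => inner ℝ (a x) (b x y)) hab).symm
  have swap_bb : ∫ q : Y × Y, ∫ x, inner ℝ (b x q.1) (b x q.2) ∂μ ∂(ν.prod ν) =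
      ∫ x, ∫ q : Y × Y, inner ℝ (b x q.1) (b x q.2) ∂(ν.prod ν) ∂μ :=
    (integral_integral_swap (f := fun x (q : Y × Y) => inner ℝ (b x q.1) (b x q.2)) hbb).symm
  have int_ab := hab.integral_prod_left
  have int_bb := hbb.integral_prod_left
  rw [swap_ab, swap_bb, ← integral_const_mul, ← integral_const_mul,
    ← integral_add ha (int_bb.const_mul _)]
  refine integral_mono_ae (int_ab.const_mul _) (ha.add (int_bb.const_mul _)) ?_
  filter_upwards [hb] with x hx
  rw [integral_inner hx, integral_prod_inner hx]
  exact two_mul_inner_le_inner_self_add _ _ t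

end Young

/-- The vector field whose pointwise inner products integrate to `groundForm`. -/
def groundField (f : E2 → ℝ) (x : E2) : EuclideanSpace ℝ (Fin 3) :=
  !₂[f x, √(1 - ‖x‖ ^ 2) * partialDeriv 0 f x, √(1 - ‖x‖ ^ 2) * partialDeriv 1 f x]

lemma groundForm_eq_integral_inner (f g : E2 → ℝ) :
    groundForm f g = ∫ x in B2, inner ℝ (groundField f x) (groundField g x) := by
  refine setIntegral_congr_fun measurableSet_B2 fun x hx => ?_
  have hsq := mul_self_sqrt (one_sub_norm_sq_pos (mem_B2.1 hx)).le
  simp only [groundField, PiLp.inner_apply, Fin.sum_univ_three, Fin.sum_univ_two,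
    Matrix.cons_val, RCLike.inner_apply, conj_trivial]
  linear_combination -(partialDeriv 0 f x * partialDeriv 0 g x +
    partialDeriv 1 f x * partialDeriv 1 g x) * hsq

lemma continuousOn_groundField {X : Type*} [TopologicalSpace X] {s : Set X} {f : X → E2 → ℝ}
    {φ : X → E2} (hφ : ContinuousOn φ s) (hf : ContinuousOn (fun p => f p (φ p)) s)
    (hdf : ∀ i, ContinuousOn (fun p => partialDeriv i (f p) (φ p)) s) :
    ContinuousOn (fun p => groundField (f p) (φ p)) s := by
  refine (PiLp.continuous_toLp 2 _).comp_continuousOn (continuousOn_pi.2 fun i => ?_)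
  fin_cases i
  · exact hf
  · change ContinuousOn (fun p => √(1 - ‖φ p‖ ^ 2) * partialDeriv 0 (f p) (φ p)) s
    fun_prop
  · change ContinuousOn (fun p => √(1 - ‖φ p‖ ^ 2) * partialDeriv 1 (f p) (φ p)) s
    fun_prop

lemma continuous_partialDeriv {f : E2 → ℝ} (hf : ContDiff ℝ 1 f) (i : Fin 2) :
    Continuous (partialDeriv i f) :=
  (hf.continuous_fderiv one_ne_zero).clm_apply continuous_const

section Duality

variable {ε R : ℝ}

lemma continuousOn_greenKernel_and_greenKernelDeriv (hε : 0 < ε) :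
    ContinuousOn (fun p : E2 × E2 => greenKernel ε p.2 p.1)
        {p | ‖p.2‖ < 1 ∧ ‖p.1‖ * ‖p.2‖ < 1} ∧
      ∀ i, ContinuousOn (fun p : E2 × E2 => greenKernelDeriv ε i p.2 p.1)
        {p | ‖p.2‖ < 1 ∧ ‖p.1‖ * ‖p.2‖ < 1} := by
  set S : Set (E2 × E2) := {p | ‖p.2‖ < 1 ∧ ‖p.1‖ * ‖p.2‖ < 1}
  have cont_refl : ContinuousOn (fun p : E2 × E2 => reflDistSq p.2 p.1) S := by
    unfold reflDistSq
    fun_prop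
  have cont_reg : ContinuousOn (fun p : E2 × E2 => regDistSq ε p.2 p.1) S := by
    unfold regDistSq regWidth
    fun_prop
  have cont_inv : ContinuousOn (fun p : E2 × E2 => invReflDist p.2 p.1) S :=
    cont_refl.sqrt.inv₀ fun p hp => (sqrt_pos.2 (reflDistSq_pos hp.2)).ne'
  have cont_log : ContinuousOn (fun p : E2 × E2 => logFactor ε p.2 p.1) S :=
    ((cont_refl.log fun p hp => (reflDistSq_pos hp.2).ne').sub
      (cont_reg.log fun p hp => (regDistSq_pos hε hp.1 _).ne')).add continuousOn_const
  have cont_reg_inv : ContinuousOn (fun p : E2 × E2 => (regDistSq ε p.2 p.1)⁻¹) S :=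
    cont_reg.inv₀ fun p hp => (regDistSq_pos hε hp.1 _).ne'
  refine ⟨?_, fun i => ?_⟩
  · unfold greenKernel greenWeight
    fun_prop
  · unfold greenKernelDeriv
    fun_prop

lemma continuousOn_groundField_greenKernel (hε : 0 < ε) (hR : R < 1) :
    ContinuousOn (fun p : E2 × E2 => groundField (greenKernel ε p.2) p.1)
      (Metric.closedBall 0 1 ×ˢ Metric.closedBall 0 R) := by
  have hmem : ∀ p ∈ Metric.closedBall (0 : E2) 1 ×ˢ Metric.closedBall (0 : E2) R,
      ‖p.2‖ < 1 ∧ ‖p.1‖ * ‖p.2‖ < 1 := fun p hp => by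
    have hp1 : ‖p.1‖ ≤ 1 := mem_closedBall_zero_iff.1 hp.1
    have hp2 : ‖p.2‖ < 1 := (mem_closedBall_zero_iff.1 hp.2).trans_lt hR
    exact ⟨hp2, (mul_le_of_le_one_left (norm_nonneg _) hp1).trans_lt hp2⟩
  obtain ⟨cont_kernel, cont_deriv⟩ := continuousOn_greenKernel_and_greenKernelDeriv hε
  exact continuousOn_groundField continuousOn_fst (cont_kernel.mono hmem) fun i =>
    ((cont_deriv i).mono hmem).congr fun p hp =>
      partialDeriv_greenKernel hε (hmem p hp).1 (hmem p hp).2 i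

-- The form at `v` is tested against the average of the kernels `greenKernel ε y` over `ν`.
lemma groundForm_duality {v : E2 → ℝ} (hv : ContDiff ℝ 1 v) {ν : Measure E2} [IsFiniteMeasure ν]
    (hR : R < 1) (hν : ∀ᵐ y ∂ν, y ∈ Metric.closedBall (0 : E2) R) (hε : 0 < ε) (t : ℝ) :
    Integrable (fun y => groundForm v (greenKernel ε y)) ν ∧
      Integrable (fun q : E2 × E2 => groundForm (greenKernel ε q.1) (greenKernel ε q.2))
        (ν.prod ν) ∧
      2 * t * ∫ y, groundForm v (greenKernel ε y) ∂ν ≤ groundForm v v +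
        t ^ 2 * ∫ q : E2 × E2, groundForm (greenKernel ε q.1) (greenKernel ε q.2) ∂(ν.prod ν) := by
  have hμ : ∀ᵐ x ∂(volume.restrict B2), x ∈ Metric.closedBall (0 : E2) 1 :=
    (ae_restrict_mem measurableSet_B2).mono fun x hx => Metric.ball_subset_closedBall hx
  have hK := isCompact_closedBall (0 : E2) 1
  have hKR := isCompact_closedBall (0 : E2) R
  have cont_a : ContinuousOn (groundField v) (Metric.closedBall 0 1) :=
    continuousOn_groundField (f := fun _ => v) continuousOn_id hv.continuous.continuousOn fun i =>
      (continuous_partialDeriv hv i).continuousOn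
  have cont_b := continuousOn_groundField_greenKernel hε hR
  have int_aa := integrable_of_ae_mem_compact hK hμ (cont_a.inner (𝕜 := ℝ) cont_a)
  have int_b : ∀ᵐ x ∂(volume.restrict B2),
      Integrable (fun y => groundField (greenKernel ε y) x) ν := hμ.mono fun x hx =>
    integrable_of_ae_mem_compact hKR hν
      (cont_b.comp (f := fun y => (x, y)) (by fun_prop) fun y hy => ⟨hx, hy⟩)
  have int_ab := integrable_of_ae_mem_compact (hK.prod hKR) (ae_prod_mem hμ hν)
    ((cont_a.comp continuousOn_fst fun p hp => hp.1).inner (𝕜 := ℝ) cont_b)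
  have int_bb := integrable_of_ae_mem_compact (hK.prod (hKR.prod hKR))
    (ae_prod_mem hμ (ae_prod_mem hν hν))
    ((cont_b.comp (f := fun p : E2 × E2 × E2 => (p.1, p.2.1)) (by fun_prop)
      fun p hp => ⟨hp.1, hp.2.1⟩).inner (𝕜 := ℝ)
        (cont_b.comp (f := fun p : E2 × E2 × E2 => (p.1, p.2.2)) (by fun_prop)
          fun p hp => ⟨hp.1, hp.2.2⟩))
  simp only [groundForm_eq_integral_inner]
  exact ⟨int_ab.integral_prod_right, int_bb.integral_prod_right,
    two_mul_integral_integral_inner_le int_aa int_b int_ab int_bb t⟩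

end Duality

/-! ### The inequality for nonnegative functions -/

section Gibbs

variable {u : E2 → ℝ}

/-- The probability density on the disc proportional to `exp u`. -/
def gibbsDensity (u : E2 → ℝ) (x : E2) : ℝ := exp (u x) / ∫ y in B2, exp (u y)

lemma integral_exp_B2_pos (hu : Continuous u) : 0 < ∫ x in B2, exp (u x) := by
  have : NeZero (volume.restrict B2) := ⟨by
    rw [Ne, Measure.restrict_eq_zero]
    exact (Metric.measure_ball_pos volume (0 : E2) one_pos).ne'⟩
  exact integral_exp_pos (integrableOn_B2 (continuous_exp.comp hu))

lemma continuous_gibbsDensity (hu : Continuous u) : Continuous (gibbsDensity u) :=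
  (continuous_exp.comp hu).div_const _

lemma gibbsDensity_nonneg (u : E2 → ℝ) (x : E2) : 0 ≤ gibbsDensity u x :=
  div_nonneg (exp_pos _).le (integral_nonneg fun _ => (exp_pos _).le)

lemma integral_gibbsDensity (hu : Continuous u) : ∫ x in B2, gibbsDensity u x = 1 :=
  (integral_div _ _).trans (div_self (integral_exp_B2_pos hu).ne')

lemma integral_gibbsDensity_mul_sub_integral_mul_log (hu : Continuous u) :
    (∫ x in B2, gibbsDensity u x * u x) -
      (∫ x in B2, gibbsDensity u x * log (gibbsDensity u x)) = log (∫ x in B2, exp (u x)) := by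
  have hc := continuous_gibbsDensity hu
  have pointwise (x : E2) : gibbsDensity u x * u x - gibbsDensity u x * log (gibbsDensity u x) =
      gibbsDensity u x * log (∫ y in B2, exp (u y)) := by
    have : log (gibbsDensity u x) = u x - log (∫ y in B2, exp (u y)) := by
      rw [gibbsDensity, log_div (exp_pos _).ne' (integral_exp_B2_pos hu).ne', log_exp]
    rw [this]
    ring
  have hint : IntegrableOn (fun x => gibbsDensity u x * u x) B2 := integrableOn_B2 (hc.mul hu)
  have hint_log := integrableOn_B2 (continuous_mul_log_comp hc)
  rw [← integral_sub hint.integrable hint_log.integrable]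
  simp_rw [pointwise]
  rw [integral_mul_const, integral_gibbsDensity hu, one_mul]

end Gibbs

lemma contDiff_mul_of_contDiffAt_tsupport {E : Type*} [NormedAddCommGroup E] [NormedSpace ℝ E]
    {f g : E → ℝ} {n : ℕ∞} (hg : ContDiff ℝ n g) (hf : ∀ x ∈ tsupport g, ContDiffAt ℝ n f x) :
    ContDiff ℝ n fun x => f x * g x :=
  contMDiff_iff_contDiff.1 <| contMDiff_of_tsupport fun x hx =>
    ((hf x (tsupport_mul_subset_right hx)).mul hg.contDiffAt).contMDiffAt

lemma contDiffAt_sqrt_weight {n : ℕ∞} {x : E2} (hx : x ∈ B2) :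
    ContDiffAt ℝ n (fun y : E2 => √(1 - ‖y‖ ^ 2)) x :=
  (contDiffAt_const.sub (contDiff_norm_sq ℝ).contDiffAt).sqrt
    (one_sub_norm_sq_pos (mem_B2.1 hx)).ne'

lemma contDiff_sqrt_weight_mul {v : E2 → ℝ} {n : ℕ∞} (hv : ContDiff ℝ n v)
    (hs : tsupport v ⊆ B2) : ContDiff ℝ n fun x => √(1 - ‖x‖ ^ 2) * v x :=
  contDiff_mul_of_contDiffAt_tsupport hv fun _ hx => contDiffAt_sqrt_weight (hs hx)

lemma exists_pos_le_mul_sqrt_le_one {A : ℝ} (hA : 0 ≤ A) :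
    ∃ ε : ℝ, 0 < ε ∧ ε ≤ 1 / 4 ∧ A * √ε ≤ 1 := by
  obtain ⟨s, hs⟩ : ∃ s, s = min (1 / 2) (1 / (A + 1)) := ⟨_, rfl⟩
  have s_pos : 0 < s := hs ▸ lt_min (by norm_num) (by positivity)
  have s_le : s ≤ 1 / 2 := hs ▸ min_le_left ..
  have s_le' : s ≤ 1 / (A + 1) := hs ▸ min_le_right ..
  refine ⟨s ^ 2, by positivity, by nlinarith, ?_⟩
  rw [sqrt_sq s_pos.le]
  calc
    A * s ≤ A * (1 / (A + 1)) := by gcongr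
    _ ≤ 1 := by
      rw [mul_one_div, div_le_one (by positivity)]
      linarith

lemma regWidth_le_sqrt (ε : ℝ) (y : E2) : regWidth ε y ≤ √ε :=
  mul_le_of_le_one_right (sqrt_nonneg ε) (sub_le_self 1 (sq_nonneg ‖y‖))

lemma hasCompactSupport_of_tsupport_subset_B2 {f : E2 → ℝ} (hs : tsupport f ⊆ B2) :
    HasCompactSupport f :=
  (isCompact_closedBall (0 : E2) 1).of_isClosed_subset (isClosed_tsupport f)
    (hs.trans Metric.ball_subset_closedBall)

lemma exists_sub_one_le_groundForm_greenKernel {v : E2 → ℝ} (hv : ContDiff ℝ 1 v)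
    (hv0 : ∀ x, 0 ≤ v x) (hs : tsupport v ⊆ B2) {R : ℝ} (hR : R < 1) :
    ∃ ε : ℝ, 0 < ε ∧ ε ≤ 1 / 4 ∧ ∀ y : E2, ‖y‖ ≤ R →
      √(1 - ‖y‖ ^ 2) * v y - 1 ≤ groundForm v (greenKernel ε y) := by
  have hu := contDiff_sqrt_weight_mul (n := 1) hv hs
  have hcompact : HasCompactSupport fun x => √(1 - ‖x‖ ^ 2) * v x :=
    (hasCompactSupport_of_tsupport_subset_B2 hs).mul_left
  obtain ⟨L, hL⟩ := hu.lipschitzWith_of_hasCompactSupport hcompact one_ne_zero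
  obtain ⟨M, hM⟩ := hcompact.exists_bound_of_continuous hu.continuous
  have hM0 : 0 ≤ M := (norm_nonneg _).trans (hM 0)
  have hA : 0 ≤ (L + M * (1 - R)⁻¹) * π := by
    have : 0 < 1 - R := sub_pos.2 hR
    positivity
  obtain ⟨ε, hε, hε4, hεA⟩ := exists_pos_le_mul_sqrt_le_one hA
  refine ⟨ε, hε, hε4, fun y hy => ?_⟩
  have error_le : (L + M * (1 - R)⁻¹) * (π * regWidth ε y) ≤ 1 := by
    rw [← mul_assoc]
    exact (mul_le_mul_of_nonneg_left (regWidth_le_sqrt ε y) hA).trans hεA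
  have := sub_le_groundForm_greenKernel hv hv0 (fun _ => rfl) hL
    (fun x => (le_abs_self _).trans (hM x)) hR hε hε4 hy
  linarith

section Density

variable {ρ : E2 → ℝ} {R ε : ℝ}

lemma integral_mul_sub_one_le_setIntegral {u g : E2 → ℝ} (hc : Continuous ρ) (hρ : ∀ x, 0 ≤ ρ x)
    (h1 : ∫ x in B2, ρ x = 1) (hu : Continuous u)
    (hS : ∀ y ∉ Metric.closedBall (0 : E2) R, u y = 0)
    (hg : IntegrableOn g (Metric.closedBall 0 R) (densMeasure ρ))
    (hug : ∀ y ∈ Metric.closedBall (0 : E2) R, u y - 1 ≤ g y) :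
    (∫ x in B2, ρ x * u x) - 1 ≤ ∫ y in Metric.closedBall 0 R, g y ∂(densMeasure ρ) := by
  have hP := isProbabilityMeasure_densMeasure hc hρ h1
  have hu_int : Integrable u (densMeasure ρ) :=
    integrable_of_ae_mem_compact (isCompact_closedBall (0 : E2) 1)
      ((ae_mem_densMeasure ρ).mono fun x hx => Metric.ball_subset_closedBall hx) hu.continuousOn
  have hmass : ((densMeasure ρ).restrict (Metric.closedBall 0 R)).real Set.univ ≤ 1 := by
    rw [measureReal_restrict_apply_univ]
    exact measureReal_le_one
  have h := setIntegral_mono_on (hu_int.integrableOn.sub (integrable_const 1)) hg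
    Metric.isClosed_closedBall.measurableSet hug
  simp only [Pi.sub_apply] at h
  rw [integral_sub hu_int.restrict (integrable_const 1), integral_const, smul_eq_mul, mul_one,
    setIntegral_eq_integral_of_forall_compl_eq_zero hS, integral_densMeasure hc hρ] at h
  linarith

-- The disc has diameter `2`, so the kernel becomes nonnegative once `log 2` is added.
lemma setIntegral_neg_log_max_norm_sub_add_log_two_le (hc : Continuous ρ) (hρ : ∀ x, 0 ≤ ρ x)
    (h1 : ∫ x in B2, ρ x = 1) {δ : ℝ} (hδ : 0 < δ) (hδ2 : δ ≤ 2) (s : Set (E2 × E2)) :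
    IntegrableOn (fun q => -log (max ‖q.1 - q.2‖ δ) + log 2) s
        ((densMeasure ρ).prod (densMeasure ρ)) ∧
      ∫ q in s, (-log (max ‖q.1 - q.2‖ δ) + log 2) ∂((densMeasure ρ).prod (densMeasure ρ)) ≤
        1 / 2 * (∫ x in B2, ρ x * log (ρ x)) + 25 + log 2 := by
  have hP := isProbabilityMeasure_densMeasure hc hρ h1
  have hmem := ae_mem_densMeasure ρ
  have hint := integrable_neg_log_max_norm_sub (isCompact_closedBall (0 : E2) 1)
    (hmem.mono fun x hx => Metric.ball_subset_closedBall hx) hδ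
  have hint' := hint.add (integrable_const (log 2))
  refine ⟨hint'.integrableOn, (setIntegral_le_integral hint' ?_).trans ?_⟩
  · filter_upwards [ae_prod_mem hmem hmem] with q hq
    have : ‖q.1 - q.2‖ ≤ 2 := by linarith [norm_sub_le q.1 q.2, mem_B2.1 hq.1, mem_B2.1 hq.2]
    have := log_le_log (lt_max_of_lt_right hδ) (max_le this hδ2)
    change 0 ≤ -log (max ‖q.1 - q.2‖ δ) + log 2
    linarith
  · rw [integral_add' hint (integrable_const _), integral_const, probReal_univ, one_smul]
    gcongr
    exact integral_neg_log_max_norm_sub_le hc hρ h1 hδ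

lemma setIntegral_groundForm_greenKernel_le (hc : Continuous ρ) (hρ : ∀ x, 0 ≤ ρ x)
    (h1 : ∫ x in B2, ρ x = 1) (hR0 : 0 ≤ R) (hR : R < 1) (hε : 0 < ε) (hε4 : ε ≤ 1 / 4)
    (hint : IntegrableOn (fun q : E2 × E2 => groundForm (greenKernel ε q.1) (greenKernel ε q.2))
      (Metric.closedBall 0 R ×ˢ Metric.closedBall 0 R) ((densMeasure ρ).prod (densMeasure ρ))) :
    ∫ q in Metric.closedBall (0 : E2) R ×ˢ Metric.closedBall (0 : E2) R,
        groundForm (greenKernel ε q.1) (greenKernel ε q.2)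
          ∂((densMeasure ρ).prod (densMeasure ρ)) ≤
      1 / (2 * π) * (1 / 2 * (∫ x in B2, ρ x * log (ρ x)) + 25 + log 2) +
        (2 + 384 * exp (7 / 2)) := by
  have hP := isProbabilityMeasure_densMeasure hc hρ h1
  obtain ⟨δ, hδ⟩ : ∃ δ, δ = √ε * (1 - R ^ 2) := ⟨_, rfl⟩
  have hR2 : 0 < 1 - R ^ 2 := by nlinarith
  have δ_pos : 0 < δ := hδ ▸ mul_pos (sqrt_pos.2 hε) hR2
  have δ_le_regWidth {y : E2} (hy : ‖y‖ ≤ R) : δ ≤ regWidth ε y := by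
    rw [hδ, regWidth]
    gcongr
  have δ_le_two : δ ≤ 2 := by
    have : √ε ≤ 1 := sqrt_le_one.2 (by linarith)
    nlinarith
  obtain ⟨log_int, log_le⟩ := setIntegral_neg_log_max_norm_sub_add_log_two_le hc hρ h1 δ_pos
    δ_le_two (Metric.closedBall (0 : E2) R ×ˢ Metric.closedBall (0 : E2) R)
  obtain ⟨C, hC⟩ : ∃ C : ℝ, C = 2 + 384 * exp (7 / 2) := ⟨_, rfl⟩
  have C_nonneg : 0 ≤ C := hC ▸ by positivity
  have kernel_le (q : E2 × E2) (hq : q ∈ Metric.closedBall (0 : E2) R ×ˢ Metric.closedBall 0 R) :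
      groundForm (greenKernel ε q.1) (greenKernel ε q.2) ≤
        1 / (2 * π) * (-log (max ‖q.1 - q.2‖ δ) + log 2) + C := by
    have hq₁ : ‖q.1‖ ≤ R := mem_closedBall_zero_iff.1 hq.1
    have hq₂ : ‖q.2‖ ≤ R := mem_closedBall_zero_iff.1 hq.2
    have h := groundForm_greenKernel_greenKernel_le hε hε4 (hq₂.trans_lt hR) (hq₁.trans_lt hR)
      δ_pos (δ_le_regWidth hq₁)
    rw [norm_sub_rev, ← hC] at h
    have : 0 ≤ 1 / (2 * π) * log 2 := mul_nonneg (by positivity) (log_nonneg one_le_two)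
    linarith
  have hball := (Metric.isClosed_closedBall (x := (0 : E2)) (ε := R)).measurableSet
  refine (setIntegral_mono_on hint ((log_int.const_mul _).add (integrable_const C))
    (hball.prod hball) kernel_le).trans ?_
  rw [integral_add' (log_int.const_mul _) (integrable_const C), integral_const_mul, integral_const,
    smul_eq_mul, measureReal_restrict_apply_univ, ← hC]
  exact add_le_add (mul_le_mul_of_nonneg_left log_le (by positivity))
    (mul_le_of_le_one_left C_nonneg measureReal_le_one)

lemma integral_mul_sub_integral_mul_log_le {v : E2 → ℝ} (hv : ContDiff ℝ 1 v)
    (hv0 : ∀ x, 0 ≤ v x) (hs : tsupport v ⊆ B2) (hc : Continuous ρ) (hρ : ∀ x, 0 ≤ ρ x)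
    (h1 : ∫ x in B2, ρ x = 1) :
    8 * π * ((∫ x in B2, ρ x * (√(1 - ‖x‖ ^ 2) * v x)) - ∫ x in B2, ρ x * log (ρ x)) ≤
      1 / 2 * groundForm v v + (8 * π + 16 * π * (25 + log 2) +
        32 * π ^ 2 * (2 + 384 * exp (7 / 2))) := by
  obtain ⟨R, ⟨hR0, hR⟩, hsR⟩ : ∃ R : ℝ, (0 ≤ R ∧ R < 1) ∧ tsupport v ⊆ Metric.closedBall 0 R := by
    obtain ⟨r, hr, hrs⟩ := exists_lt_subset_ball (isClosed_tsupport v) hs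
    exact ⟨max r 0, ⟨le_max_right .., max_lt hr one_pos⟩, hrs.trans
      (Metric.ball_subset_closedBall.trans (Metric.closedBall_subset_closedBall (le_max_left ..)))⟩
  have hP := isProbabilityMeasure_densMeasure hc hρ h1
  obtain ⟨ε, hε, hε4, lower⟩ := exists_sub_one_le_groundForm_greenKernel hv hv0 hs hR
  obtain ⟨lin_int, form_int, duality⟩ := groundForm_duality hv
    (ν := (densMeasure ρ).restrict (Metric.closedBall 0 R)) hR
    (ae_restrict_mem Metric.isClosed_closedBall.measurableSet) hε (8 * π)
  rw [Measure.prod_restrict] at form_int duality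
  have lin_ge := integral_mul_sub_one_le_setIntegral hc hρ h1
    (contDiff_sqrt_weight_mul (n := 1) hv hs).continuous
    (fun y hy => by rw [image_eq_zero_of_notMem_tsupport fun h => hy (hsR h), mul_zero])
    lin_int fun y hy => lower y (mem_closedBall_zero_iff.1 hy)
  have form_le := setIntegral_groundForm_greenKernel_le hc hρ h1 hR0 hR hε hε4 form_int
  have lin_ge' := mul_le_mul_of_nonneg_left lin_ge (by positivity : 0 ≤ 2 * (8 * π))
  have form_le' := mul_le_mul_of_nonneg_left form_le (by positivity : 0 ≤ (8 * π) ^ 2)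
  have coeff : (8 * π) ^ 2 * (1 / (2 * π)) = 32 * π := by
    field_simp
    norm_num
  rw [mul_add _ _ (2 + 384 * exp (7 / 2)), ← mul_assoc, coeff] at form_le'
  linarith

end Density

lemma log_integral_exp_le_of_nonneg {v : E2 → ℝ} (hv : ContDiff ℝ 1 v) (hv0 : ∀ x, 0 ≤ v x)
    (hs : tsupport v ⊆ B2) :
    8 * π * log (∫ x in B2, exp (√(1 - ‖x‖ ^ 2) * v x)) ≤
      1 / 2 * groundForm v v + (8 * π + 16 * π * (25 + log 2) +
        32 * π ^ 2 * (2 + 384 * exp (7 / 2))) := by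
  have hu := (contDiff_sqrt_weight_mul (n := 1) hv hs).continuous
  rw [← integral_gibbsDensity_mul_sub_integral_mul_log hu]
  exact integral_mul_sub_integral_mul_log_le hv hv0 hs (continuous_gibbsDensity hu)
    (gibbsDensity_nonneg _) (integral_gibbsDensity hu)

/-! ### Ground state representation -/

lemma norm_gradient_sq (u : E2 → ℝ) (x : E2) :
    ‖gradient u x‖ ^ 2 = ∑ i, partialDeriv i u x ^ 2 := by
  have coord (i : Fin 2) : partialDeriv i u x = gradient u x i := by
    rw [partialDeriv, ← InnerProductSpace.toDual_symm_apply (𝕜 := ℝ),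
      EuclideanSpace.inner_single_right, one_mul]
    rfl
  simp_rw [coord]
  exact EuclideanSpace.real_norm_sq_eq _

lemma two_mul_integral_clm_mul_mul_fderiv {E : Type*} [NormedAddCommGroup E] [NormedSpace ℝ E]
    [FiniteDimensional ℝ E] [MeasurableSpace E] [BorelSpace E] (μ : Measure E)
    [μ.IsAddHaarMeasure] {v : E → ℝ} (hv : ContDiff ℝ 1 v) (hc : HasCompactSupport v)
    (ℓ : E →L[ℝ] ℝ) (e : E) :
    2 * ∫ x, ℓ x * (v x * fderiv ℝ v x e) ∂μ = -(ℓ e * ∫ x, v x ^ 2 ∂μ) := by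
  have hcont := hv.continuous
  have hdiff := hv.differentiable one_ne_zero
  have hderiv : Continuous fun x => fderiv ℝ v x e :=
    (hv.continuous_fderiv one_ne_zero).clm_apply continuous_const
  have hint {g : E → ℝ} (hg : Continuous g) : Integrable (fun x => v x * g x) μ :=
    (hcont.mul hg).integrable_of_hasCompactSupport hc.mul_right
  have hsq (x : E) : fderiv ℝ (fun x => v x ^ 2) x e = 2 * (v x * fderiv ℝ v x e) := by
    rw [((hdiff x).hasFDerivAt.pow 2).fderiv]
    simp only [Nat.reduceSub, pow_one, Nat.cast_ofNat, smul_eq_mul, nsmul_eq_mul,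
      FunLike.coe_smul, Pi.smul_apply]
    ring
  have parts := integral_mul_fderiv_eq_neg_fderiv_mul_of_integrable (μ := μ) (f := ℓ)
    (g := fun x => v x ^ 2) (v := e)
    ((hint (g := fun x => ℓ e * v x) (by fun_prop)).congr (.of_forall fun x => by
      beta_reduce
      rw [ℓ.fderiv]
      ring))
    ((hint (g := fun x => 2 * ℓ x * fderiv ℝ v x e)
      ((continuous_const.mul ℓ.continuous).mul hderiv)).congr (.of_forall fun x => by
      beta_reduce
      rw [hsq]
      ring))
    ((hint (g := fun x => ℓ x * v x) (by fun_prop)).congr (.of_forall fun x => by ring))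
    (fun x _ => ℓ.differentiableAt) (fun x _ => by fun_prop)
  simp_rw [hsq, ℓ.fderiv, integral_const_mul, mul_left_comm _ (2 : ℝ), integral_const_mul] at parts
  exact parts

section Representation

variable {v : E2 → ℝ}

lemma integral_radial_deriv_add_sq (hv : ContDiff ℝ 1 v) (hs : tsupport v ⊆ B2) :
    ∫ x in B2, (v x * ∑ i, x i * partialDeriv i v x + v x ^ 2) = 0 := by
  have hc := hasCompactSupport_of_tsupport_subset_B2 hs
  have hcont := hv.continuous
  have hpd := continuous_partialDeriv hv
  have coord (i : Fin 2) : 2 * ∫ x, x i * (v x * partialDeriv i v x) = -∫ x, v x ^ 2 := by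
    have h := two_mul_integral_clm_mul_mul_fderiv (volume : Measure E2) hv hc
      (EuclideanSpace.proj i) (EuclideanSpace.single i 1)
    rwa [PiLp.proj_apply, PiLp.single_apply, if_pos rfl, one_mul] at h
  have hint (i : Fin 2) : Integrable fun x : E2 => x i * (v x * partialDeriv i v x) :=
    Continuous.integrable_of_hasCompactSupport (by fun_prop) hc.mul_right.mul_left
  have hsq : Integrable fun x => v x ^ 2 := by
    simp_rw [sq]
    exact (hcont.mul hcont).integrable_of_hasCompactSupport hc.mul_right
  have expand (x : E2) : v x * ∑ i, x i * partialDeriv i v x + v x ^ 2 =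
      ∑ i, x i * (v x * partialDeriv i v x) + v x ^ 2 := by
    simp only [Finset.mul_sum, mul_left_comm]
  rw [setIntegral_eq_integral_of_forall_compl_eq_zero fun x hx => by
    rw [image_eq_zero_of_notMem_tsupport fun h => hx (hs h)]
    ring]
  simp_rw [expand]
  rw [integral_add (integrable_finsetSum _ fun i _ => hint i) hsq,
    integral_finsetSum _ fun i _ => hint i, Fin.sum_univ_two]
  linarith [coord 0, coord 1]

lemma partialDeriv_sqrt_weight_mul {x : E2} (hv : DifferentiableAt ℝ v x) (hx : ‖x‖ < 1)
    (i : Fin 2) :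
    partialDeriv i (fun y => √(1 - ‖y‖ ^ 2) * v y) x =
      √(1 - ‖x‖ ^ 2) * partialDeriv i v x - x i / √(1 - ‖x‖ ^ 2) * v x := by
  have hroot : HasFDerivAt (fun y : E2 => √(1 - ‖y‖ ^ 2))
      ((1 / (2 * √(1 - ‖x‖ ^ 2))) • -(2 • innerSL ℝ x : E2 →L[ℝ] ℝ)) x :=
    ((hasStrictFDerivAt_norm_sq x).hasFDerivAt.const_sub 1).sqrt (one_sub_norm_sq_pos hx).ne'
  have hcoord : partialDeriv i (fun y : E2 => √(1 - ‖y‖ ^ 2)) x = -(x i / √(1 - ‖x‖ ^ 2)) := by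
    rw [partialDeriv, hroot.fderiv]
    simp only [one_div, mul_inv_rev, smul_neg, neg_apply, smul_apply, coe_innerSL_apply,
      EuclideanSpace.inner_single_right, ringHom_apply, one_mul, nsmul_eq_mul, Nat.cast_ofNat,
      smul_eq_mul, neg_inj]
    field_simp
  rw [partialDeriv_mul hroot.differentiableAt hv, hcoord]
  ring

-- Substituting `u = √(1 - ‖x‖²) v` moves the singular potential into a radial derivative term.
lemma hardy_integrand_sqrt_weight_mul {x : E2} (hv : DifferentiableAt ℝ v x) (hx : ‖x‖ < 1) :
    ∑ i, partialDeriv i (fun y => √(1 - ‖y‖ ^ 2) * v y) x ^ 2 -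
        (√(1 - ‖x‖ ^ 2) * v x) ^ 2 / (1 - ‖x‖ ^ 2) ^ 2 =
      ((1 - ‖x‖ ^ 2) * ∑ i, partialDeriv i v x * partialDeriv i v x + v x * v x) -
        2 * (v x * ∑ i, x i * partialDeriv i v x + v x ^ 2) := by
  have hsq := sq_sqrt (one_sub_norm_sq_pos hx).le
  have hpos := sqrt_pos.2 (one_sub_norm_sq_pos hx)
  have hnorm := EuclideanSpace.real_norm_sq_eq x
  simp only [partialDeriv_sqrt_weight_mul hv hx, Fin.sum_univ_two] at hnorm ⊢
  obtain ⟨s, hs⟩ : ∃ s, s = √(1 - ‖x‖ ^ 2) := ⟨_, rfl⟩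
  rw [← hs] at hsq hpos ⊢
  rw [← hsq]
  have hx0 : x 0 ^ 2 = 1 - s ^ 2 - x 1 ^ 2 := by linarith
  field_simp
  ring_nf
  rw [hx0]
  ring

lemma integral_norm_gradient_sq_sub_eq_groundForm (hv : ContDiff ℝ 1 v) (hs : tsupport v ⊆ B2)
    {u : E2 → ℝ} (hu : u = fun x => √(1 - ‖x‖ ^ 2) * v x) :
    (∫ x in B2, ‖gradient u x‖ ^ 2) - (∫ x in B2, u x ^ 2 / (1 - ‖x‖ ^ 2) ^ 2) =
      groundForm v v := by
  have hu1 : ContDiff ℝ 1 u := hu ▸ contDiff_sqrt_weight_mul (n := 1) hv hs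
  have hcont := hv.continuous
  have hpv := continuous_partialDeriv hv
  have hpu := continuous_partialDeriv hu1
  obtain ⟨D, hD⟩ : ∃ D : E2 → ℝ, D = fun x =>
      ((1 - ‖x‖ ^ 2) * ∑ i, partialDeriv i v x * partialDeriv i v x + v x * v x) -
        2 * (v x * ∑ i, x i * partialDeriv i v x + v x ^ 2) := ⟨_, rfl⟩
  have potential (x : E2) (hx : x ∈ B2) :
      u x ^ 2 / (1 - ‖x‖ ^ 2) ^ 2 = ∑ i, partialDeriv i u x ^ 2 - D x := by
    have := hardy_integrand_sqrt_weight_mul (hv.differentiable one_ne_zero x) (mem_B2.1 hx)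
    rw [hD, hu]
    linarith
  have integral_D : ∫ x in B2, D x = groundForm v v := by
    rw [hD, integral_sub (integrableOn_B2 (by fun_prop)) (integrableOn_B2 (by fun_prop)),
      integral_const_mul, integral_radial_deriv_add_sq hv hs, mul_zero, sub_zero, groundForm]
  simp_rw [norm_gradient_sq]
  rw [setIntegral_congr_fun measurableSet_B2 potential,
    integral_sub (integrableOn_B2 (by fun_prop)) (integrableOn_B2 (by rw [hD]; fun_prop)),
    integral_D, sub_sub_cancel]

end Representation

/-! ### Removing the sign condition -/

/-- The function `√(v² + 1) - 1`, a smooth nonnegative substitute for `|v|`. -/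
def smoothAbs (v : E2 → ℝ) (x : E2) : ℝ := √(v x ^ 2 + 1) - 1

section SmoothAbs

variable {v : E2 → ℝ}

lemma contDiff_smoothAbs {n : ℕ∞} (hv : ContDiff ℝ n v) : ContDiff ℝ n (smoothAbs v) :=
  (((hv.pow 2).add contDiff_const).sqrt fun x => by positivity).sub contDiff_const

lemma smoothAbs_nonneg (v : E2 → ℝ) (x : E2) : 0 ≤ smoothAbs v x :=
  sub_nonneg.2 (one_le_sqrt.2 (le_add_of_nonneg_left (sq_nonneg _)))

lemma le_smoothAbs_add_one (v : E2 → ℝ) (x : E2) : v x ≤ smoothAbs v x + 1 := by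
  rw [smoothAbs, sub_add_cancel]
  exact le_sqrt_of_sq_le (le_add_of_nonneg_right zero_le_one)

lemma smoothAbs_mul_self_le (v : E2 → ℝ) (x : E2) :
    smoothAbs v x * smoothAbs v x ≤ v x * v x := by
  have h := sq_sqrt (by positivity : 0 ≤ v x ^ 2 + 1)
  have hnonneg := smoothAbs_nonneg v x
  unfold smoothAbs at *
  nlinarith

lemma tsupport_smoothAbs_subset (v : E2 → ℝ) : tsupport (smoothAbs v) ⊆ tsupport v :=
  tsupport_comp_subset (g := fun t : ℝ => √(t ^ 2 + 1) - 1) (by norm_num) v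

lemma partialDeriv_smoothAbs {x : E2} (hv : DifferentiableAt ℝ v x) (i : Fin 2) :
    partialDeriv i (smoothAbs v) x = v x / √(v x ^ 2 + 1) * partialDeriv i v x := by
  have hpos : 0 < v x ^ 2 + 1 := by positivity
  have h := (((hv.hasFDerivAt.pow 2).add_const 1).sqrt hpos.ne').sub_const 1
  rw [partialDeriv, HasFDerivAt.fderiv (f := smoothAbs v) h, partialDeriv]
  simp only [Nat.reduceSub, pow_one, Nat.cast_ofNat, smul_eq_mul, nsmul_eq_mul,
    FunLike.coe_smul, Pi.smul_apply]
  field_simp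

lemma partialDeriv_smoothAbs_mul_self_le {x : E2} (hv : DifferentiableAt ℝ v x) (i : Fin 2) :
    partialDeriv i (smoothAbs v) x * partialDeriv i (smoothAbs v) x ≤
      partialDeriv i v x * partialDeriv i v x := by
  have hpos : 0 < v x ^ 2 + 1 := by positivity
  have factor_le : (v x / √(v x ^ 2 + 1)) ^ 2 ≤ 1 := by
    rw [div_pow, sq_sqrt hpos.le, div_le_one hpos]
    linarith
  rw [partialDeriv_smoothAbs hv, mul_mul_mul_comm, ← sq (v x / _)]
  exact mul_le_of_le_one_left (mul_self_nonneg _) factor_le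

lemma groundForm_smoothAbs_le (hv : ContDiff ℝ 1 v) :
    groundForm (smoothAbs v) (smoothAbs v) ≤ groundForm v v := by
  have hcont := hv.continuous
  have hpd := continuous_partialDeriv hv
  have habs := contDiff_smoothAbs (n := 1) hv
  have habs_cont := habs.continuous
  have habs_pd := continuous_partialDeriv habs
  refine setIntegral_mono_on (integrableOn_B2 (by fun_prop)) (integrableOn_B2 (by fun_prop))
    measurableSet_B2 fun x hx => add_le_add ?_ (smoothAbs_mul_self_le v x)
  exact mul_le_mul_of_nonneg_left (Finset.sum_le_sum fun i _ =>
    partialDeriv_smoothAbs_mul_self_le (hv.differentiable one_ne_zero x) i)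
    (one_sub_norm_sq_pos (mem_B2.1 hx)).le

end SmoothAbs

lemma log_integral_exp_le_add_one {f g : E2 → ℝ} (hf : Continuous f) (hg : Continuous g)
    (hfg : ∀ x, f x ≤ g x + 1) :
    log (∫ x in B2, exp (f x)) ≤ log (∫ x in B2, exp (g x)) + 1 := by
  have hf_int := integrableOn_B2 (continuous_exp.comp hf)
  have hg_int := integrableOn_B2 (continuous_exp.comp hg)
  have h : ∫ x in B2, exp (f x) ≤ (∫ x in B2, exp (g x)) * exp 1 := by
    rw [← integral_mul_const]
    refine integral_mono hf_int (hg_int.mul_const _) fun x => ?_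
    change exp (f x) ≤ exp (g x) * exp 1
    rw [← exp_add]
    exact exp_le_exp.2 (hfg x)
  refine (log_le_log (integral_exp_B2_pos hf) h).trans_eq ?_
  rw [log_mul (integral_exp_B2_pos hg).ne' (exp_pos 1).ne', log_exp]

lemma log_integral_exp_le {v : E2 → ℝ} (hv : ContDiff ℝ 1 v) (hs : tsupport v ⊆ B2) :
    8 * π * log (∫ x in B2, exp (√(1 - ‖x‖ ^ 2) * v x)) ≤
      1 / 2 * groundForm v v + (16 * π + 16 * π * (25 + log 2) +
        32 * π ^ 2 * (2 + 384 * exp (7 / 2))) := by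
  have habs := contDiff_smoothAbs (n := 1) hv
  have hs' := (tsupport_smoothAbs_subset v).trans hs
  have compare := log_integral_exp_le_add_one
    (contDiff_sqrt_weight_mul (n := 1) hv hs).continuous
    (contDiff_sqrt_weight_mul (n := 1) habs hs').continuous fun x => by
      have h0 := sqrt_nonneg (1 - ‖x‖ ^ 2)
      have h1 : √(1 - ‖x‖ ^ 2) ≤ 1 := sqrt_le_one.2 (sub_le_self 1 (sq_nonneg _))
      nlinarith [le_smoothAbs_add_one v x]
  have compare' := mul_le_mul_of_nonneg_left compare (by positivity : 0 ≤ 8 * π)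
  linarith [log_integral_exp_le_of_nonneg habs (smoothAbs_nonneg v) hs',
    groundForm_smoothAbs_le hv]

lemma exists_eq_sqrt_weight_mul {u : E2 → ℝ} {n : ℕ∞} (hu : ContDiff ℝ n u)
    (hs : tsupport u ⊆ B2) :
    ∃ v : E2 → ℝ, ContDiff ℝ n v ∧ tsupport v ⊆ B2 ∧ u = fun x => √(1 - ‖x‖ ^ 2) * v x := by
  have root_ne {x : E2} (hx : x ∈ B2) : √(1 - ‖x‖ ^ 2) ≠ 0 :=
    (sqrt_pos.2 (one_sub_norm_sq_pos (mem_B2.1 hx))).ne'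
  refine ⟨fun x => (√(1 - ‖x‖ ^ 2))⁻¹ * u x, contDiff_mul_of_contDiffAt_tsupport hu fun x hx =>
    (contDiffAt_sqrt_weight (hs hx)).inv (root_ne (hs hx)),
    tsupport_mul_subset_right.trans hs, funext fun x => ?_⟩
  by_cases hx : x ∈ B2
  · exact (mul_inv_cancel_left₀ (root_ne hx) _).symm
  · simp [image_eq_zero_of_notMem_tsupport fun h => hx (hs h)]

theorem hardy_moser_trudinger_weak_form_general :
    ∃ C : ℝ, 0 < C ∧ ∀ u : E2 → ℝ, ContDiff ℝ 1 u → tsupport u ⊆ B2 →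
      (1 / 2) * (∫ x in B2, ‖gradient u x‖ ^ 2)
        - (1 / 2) * (∫ x in B2, (u x) ^ 2 / (1 - ‖x‖ ^ 2) ^ 2)
        - 8 * π * Real.log (∫ x in B2, Real.exp (u x)) ≥ -C := by
  refine ⟨16 * π + 16 * π * (25 + log 2) + 32 * π ^ 2 * (2 + 384 * exp (7 / 2)), ?_,
    fun u hu hs => ?_⟩
  · have := log_nonneg one_le_two
    positivity
  obtain ⟨v, hv, hvs, huv⟩ := exists_eq_sqrt_weight_mul (n := 1) hu hs
  have hardy := integral_norm_gradient_sq_sub_eq_groundForm hv hvs huv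
  have moser := log_integral_exp_le hv hvs
  have hexp : ∫ x in B2, exp (u x) = ∫ x in B2, exp (√(1 - ‖x‖ ^ 2) * v x) := by rw [huv]
  rw [hexp]
  linarith

/-- Weaker form of the Hardy–Moser–Trudinger inequality (Corollary):
`(1/2)∫_B |∇u|² − (1/2)∫_B u²/(1−|x|²)² − 8π log(∫_B e^u) ≥ −C` for nonzero `u ∈ C_c^∞(B)`. -/
theorem hardy_moser_trudinger_weak_form :
    ∃ C : ℝ, 0 < C ∧ ∀ u : E2 → ℝ, IsTest u → u ≠ 0 →
      (1 / 2) * (∫ x in B2, ‖gradient u x‖ ^ 2)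
        - (1 / 2) * (∫ x in B2, (u x) ^ 2 / (1 - ‖x‖ ^ 2) ^ 2)
        - 8 * π * Real.log (∫ x in B2, Real.exp (u x)) ≥ -C := by
  obtain ⟨C, hC, h⟩ := hardy_moser_trudinger_weak_form_general
  exact ⟨C, hC, fun u hu _ => h u (hu.1.of_le (mod_cast le_top)) hu.2.2⟩
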